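/- arXiv:math/0210070 — 2 statements merged into one kernel-verified Lean document; each statement's English description precedes it below -/
import Mathlib

section
/- Let (R, 𝔪) be a one-dimensional local Cohen–Macaulay ring with infinite residue field and let I be an 𝔪-primary R-ideal. Assume that the colon ideal J : I does not depend on the minimal reduction J of I. Then for every minimal reduction J of I one has core(I) = (J : I)·J. -/
open IsLocalRing

universe u v

namespace CPU

section Defs

variable {R : Type u} [CommRing R]

/-- The minimal number of generators of a submodule, as an extended natural number. -/
noncomputable def muE {M : Type v} [AddCommGroup M] [Module R M] (N : Submodule R M) : ℕ∞ :=
  sInf {n : ℕ∞ | ∃ s : Finset M, (s.card : ℕ∞) = n ∧ Submodule.span R (s : Set M) = N}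

/-- The Krull dimension of a ring, valued in `WithBot ℕ∞`. -/
noncomputable def rDim (S : Type v) [CommRing S] : WithBot ℕ∞ :=
  ringKrullDim S

/-- `J` is a reduction of `I`. -/
def IsReduction (J I : Ideal R) : Prop :=
  J ≤ I ∧ ∃ r : ℕ, I ^ (r + 1) = J * I ^ r

/-- `J` is a minimal reduction of `I`. -/
def IsMinimalReduction (J I : Ideal R) : Prop :=
  IsReduction J I ∧ ∀ J' : Ideal R, IsReduction J' I → J' ≤ J → J' = J

/-- The core of an ideal: the intersection of all of its minimal reductions. -/
noncomputable def core (I : Ideal R) : Ideal R :=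
  sInf {J : Ideal R | IsMinimalReduction J I}

/-- The reduction number of `I`. -/
noncomputable def reductionNumber (I : Ideal R) : ℕ∞ :=
  sInf {n : ℕ∞ | ∃ r : ℕ, (r : ℕ∞) = n ∧ ∃ J : Ideal R,
    IsMinimalReduction J I ∧ I ^ (r + 1) = J * I ^ r}

/-- `γ(I)`: the least number of minimal reductions whose intersection is the core. -/
noncomputable def gamma (I : Ideal R) : ℕ∞ :=
  sInf {n : ℕ∞ | ∃ t : ℕ, (t : ℕ∞) = n ∧ ∃ Js : Fin t → Ideal R,
    (∀ i, IsMinimalReduction (Js i) I) ∧ core I = ⨅ i, Js i}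

/-- The height of an ideal. -/
noncomputable def ht (I : Ideal R) : WithBot ℕ∞ :=
  ⨅ (p : PrimeSpectrum R) (_ : I ≤ p.asIdeal),
    rDim (Localization.AtPrime p.asIdeal)

/-- The Krull dimension of the special fiber ring of `I`,
i.e. the analytic spread of `I`. -/
noncomputable def fiberDim [IsLocalRing R] (I : Ideal R) : WithBot ℕ∞ :=
  rDim (↥(reesAlgebra I) ⧸
    (Ideal.map (algebraMap R ↥(reesAlgebra I)) (maximalIdeal R)))

/-- The condition `G_s`. -/
def Gcond (I : Ideal R) (s : ℕ) : Prop :=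
  ∀ p : PrimeSpectrum R, I ≤ p.asIdeal →
    rDim (Localization.AtPrime p.asIdeal) < (s : WithBot ℕ∞) →
    (muE (Ideal.map (algebraMap R (Localization.AtPrime p.asIdeal)) I) : WithBot ℕ∞) ≤
      rDim (Localization.AtPrime p.asIdeal)

/-- Depth of a module over a local ring, via lengths of regular sequences in the
maximal ideal. -/
noncomputable def mDepth (R : Type u) [CommRing R] [IsLocalRing R]
    (M : Type v) [AddCommGroup M] [Module R M] : ℕ∞ :=
  sSup {n : ℕ∞ | ∃ rs : List R, (∀ x ∈ rs, x ∈ maximalIdeal R) ∧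
    RingTheory.Sequence.IsRegular M rs ∧ (rs.length : ℕ∞) = n}

/-- Depth of the quotient `R/K` of a local ring `R`. -/
noncomputable def qDepth (R : Type u) [CommRing R] [IsLocalRing R] (K : Ideal R) : ℕ∞ :=
  mDepth R (R ⧸ K)

/-- The socle of `R/K`, for `R` local. -/
noncomputable def socle (R : Type u) [CommRing R] [IsLocalRing R] (K : Ideal R) :
    Ideal (R ⧸ K) :=
  Submodule.colon (⊥ : Ideal (R ⧸ K)) (Ideal.map (Ideal.Quotient.mk K) (maximalIdeal R))

/-- The Cohen–Macaulay type of the quotient `R/K` of a local ring `R`. -/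
noncomputable def qType (R : Type u) [CommRing R] [IsLocalRing R] (K : Ideal R) : ℕ∞ :=
  sInf {n : ℕ∞ | ∃ rs : List R, (∀ x ∈ rs, x ∈ maximalIdeal R) ∧
    RingTheory.Sequence.IsRegular (R ⧸ K) rs ∧ (rs.length : ℕ∞) = qDepth R K ∧
    muE (socle R (K ⊔ Ideal.ofList rs)) = n}

/-- Cohen–Macaulayness for a quotient `R/K` of a local ring `R`. -/
def IsCMQuot (R : Type u) [CommRing R] [IsLocalRing R] (K : Ideal R) : Prop :=
  rDim (R ⧸ K) = (qDepth R K : WithBot ℕ∞)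

/-- A Cohen–Macaulay local ring: depth equals Krull dimension. -/
def IsCMLocalRing (R : Type u) [CommRing R] [IsLocalRing R] : Prop :=
  rDim R = (qDepth R (⊥ : Ideal R) : WithBot ℕ∞)

/-- A Gorenstein local ring: Cohen–Macaulay of type one. -/
def IsGorensteinLocalRing (R : Type u) [CommRing R] [IsLocalRing R] : Prop :=
  IsCMLocalRing R ∧ qType R (⊥ : Ideal R) = 1

/-- Gorensteinness of the quotient ring `R/K` of a local ring. -/
def IsGorQuot (R : Type u) [CommRing R] [IsLocalRing R] (K : Ideal R) : Prop :=
  IsCMQuot R K ∧ qType R K = 1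

/-- A regular local ring: the maximal ideal is generated by `dim R` elements. -/
def IsRegularLocal (R : Type u) [CommRing R] [IsLocalRing R] : Prop :=
  IsNoetherianRing R ∧ (muE (maximalIdeal R) : WithBot ℕ∞) = rDim R

/-- Serre's condition `S₂` for the quotient ring `R/K`. -/
def QuotS2 (K : Ideal R) : Prop :=
  ∀ (q : Ideal R) (hq : q.IsPrime), K ≤ q →
    letI := hq
    min 2 (rDim ((Localization.AtPrime q) ⧸
        (Ideal.map (algebraMap R (Localization.AtPrime q)) K)))
      ≤ (qDepth (Localization.AtPrime q)
          (Ideal.map (algebraMap R (Localization.AtPrime q)) K) : WithBot ℕ∞)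

/-- `K` is an `s`-residual intersection of `I`. -/
def IsResidualIntersection (I K : Ideal R) (s : ℕ) : Prop :=
  K ≠ ⊤ ∧ ht I ≤ (s : WithBot ℕ∞) ∧ (s : WithBot ℕ∞) ≤ ht K ∧
    ∃ a : Ideal R, a ≤ I ∧ (∃ f : Finset R, f.card ≤ s ∧ Ideal.span (f : Set R) = a) ∧
      K = Submodule.colon a I

/-- `K` is a geometric `s`-residual intersection of `I`. -/
def IsGeometricRI (I K : Ideal R) (s : ℕ) : Prop :=
  IsResidualIntersection I K s ∧ (s : WithBot ℕ∞) + 1 ≤ ht (I ⊔ K)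

/-- `I` is weakly `s`-residually `S₂`. -/
def WeaklyResS2 (I : Ideal R) (s : ℕ) : Prop :=
  ∀ i ≤ s, ∀ K : Ideal R, IsGeometricRI I K i → QuotS2 K

/-- The condition `AN_s` for `I`. -/
def ANcond [IsLocalRing R] (I : Ideal R) (s : ℕ) : Prop :=
  ∀ i ≤ s, ∀ K : Ideal R, IsResidualIntersection I K i → IsCMQuot R K

/-- The condition `AN_s⁻` for `I`. -/
def ANminus [IsLocalRing R] (I : Ideal R) (s : ℕ) : Prop :=
  ∀ i ≤ s, ∀ K : Ideal R, IsGeometricRI I K i → IsCMQuot R K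

/-- `I` is universally weakly `s`-residually `S₂`: for every finite set of
variables, the extension of `I` to `R(x₁, …, x_n)` is weakly `s`-residually `S₂`. -/
def UnivWeaklyResS2 [IsLocalRing R] (I : Ideal R) (s : ℕ) : Prop :=
  ∀ (n : ℕ)
    (hP : (Ideal.map (MvPolynomial.C (σ := Fin n)) (maximalIdeal R)).IsPrime),
    letI := hP
    WeaklyResS2 (Ideal.map
      ((algebraMap (MvPolynomial (Fin n) R)
        (Localization.AtPrime
          (Ideal.map (MvPolynomial.C (σ := Fin n)) (maximalIdeal R)))).comp
        (MvPolynomial.C)) I) s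

/-- The `j`-th Fitting ideal of (the module) `I`. -/
noncomputable def fittingIdeal (I : Ideal R) (j : ℕ) : Ideal R :=
  ⨆ (n : ℕ) (π : (Fin n → R) →ₗ[R] R) (_ : LinearMap.range π = I),
    Ideal.span {d : R | ∃ (v : Fin (n - j) → (Fin n → R)) (r : Fin (n - j) → Fin n),
      (∀ k, π (v k) = 0) ∧ d = Matrix.det (Matrix.of fun i k => v k (r i))}

/-- The set `Q(I)` of primes containing `Fitt_ℓ(I)` at which `R` has dimension `ℓ`
and `I` has analytic spread `ℓ`. -/
def QSet [IsLocalRing R] (I : Ideal R) (l : ℕ) : Set (PrimeSpectrum R) :=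
  {p | fittingIdeal I l ≤ p.asIdeal ∧
    rDim (Localization.AtPrime p.asIdeal) = (l : WithBot ℕ∞) ∧
    fiberDim (Ideal.map (algebraMap R (Localization.AtPrime p.asIdeal)) I)
      = (l : WithBot ℕ∞)}

/-- An ideal is integrally closed if it admits no larger ideal of which it is a
reduction. -/
def IsIntClosedIdeal (I : Ideal R) : Prop :=
  ∀ J : Ideal R, IsReduction I J → J = I

/-- A normal ideal: all powers are integrally closed. -/
def IsNormalIdeal (I : Ideal R) : Prop :=
  ∀ j : ℕ, IsIntClosedIdeal (I ^ j)

/-- `φ` is a presentation matrix of the ideal `I` (with `n = μ(I)` rows). -/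
def Presents {n m : ℕ} (φ : Matrix (Fin n) (Fin m) R) (I : Ideal R) : Prop :=
  muE I = (n : ℕ∞) ∧ ∃ π : (Fin n → R) →ₗ[R] R, LinearMap.range π = I ∧
    LinearMap.range (Matrix.toLin' φ) = LinearMap.ker π

/-- The ideal of `t × t` minors of a matrix. -/
noncomputable def minorsIdeal {n m : ℕ} (t : ℕ) (φ : Matrix (Fin n) (Fin m) R) : Ideal R :=
  Ideal.span {d : R | ∃ (r : Fin t → Fin n) (c : Fin t → Fin m),
    d = (φ.submatrix r c).det}

/-- The grade of an ideal: the supremum of lengths of regular sequences contained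
in it. -/
noncomputable def grade (I : Ideal R) : ℕ∞ :=
  sSup {n : ℕ∞ | ∃ rs : List R, (∀ x ∈ rs, x ∈ I) ∧
    RingTheory.Sequence.IsRegular R rs ∧ (rs.length : ℕ∞) = n}

end Defs

/-- `M` has projective dimension at most `n` over `R`. -/
def ProjDimLE (R : Type u) [CommRing R] :
    (n : ℕ) → (M : Type u) → [AddCommGroup M] → [Module R M] → Prop
  | 0, M, _, _ => Module.Projective R M
  | n + 1, M, _, _ => ∃ (k : ℕ) (f : (Fin k → R) →ₗ[R] M), Function.Surjective f ∧
      ProjDimLE R n ↥(LinearMap.ker f)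

section Defs2

variable {R : Type u} [CommRing R]

/-- `M` has projective dimension exactly `n` over `R`. -/
def ProjDimEq (R : Type u) [CommRing R] (M : Type u) [AddCommGroup M] [Module R M]
    (n : ℕ) : Prop :=
  ProjDimLE R n M ∧ ∀ m : ℕ, ProjDimLE R m M → n ≤ m

/-- A perfect ideal: the projective dimension of `R/I` equals the grade of `I`. -/
def IsPerfectIdeal (I : Ideal R) : Prop :=
  ∃ g : ℕ, grade I = (g : ℕ∞) ∧ ProjDimEq R (R ⧸ I) g

/-- The multiplicative set which is the complement of the union of the associated
primes of `R/H`. -/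
def assComplement (H : Ideal R) : Submonoid R where
  carrier := {r : R | ∀ p ∈ associatedPrimes R (R ⧸ H), r ∉ p}
  one_mem' := fun p hp => (Ideal.ne_top_iff_one p).mp hp.1.ne_top
  mul_mem' := fun {a b} ha hb p hp hab =>
    (hp.1.mem_or_mem hab).elim (ha p hp) (hb p hp)

/-- The `j`-th symbolic power of `H`. -/
noncomputable def symbolicPower (H : Ideal R) (j : ℕ) : Ideal R :=
  Ideal.comap (algebraMap R (Localization (assComplement H)))
    (Ideal.map (algebraMap R (Localization (assComplement H))) (H ^ j))

/-- Serre's condition `S₂` for a module. -/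
def ModuleS2 (S : Type u) [CommRing S] (M : Type v) [AddCommGroup M] [Module S M] : Prop :=
  ∀ (q : Ideal S) (hq : q.IsPrime),
    letI := hq
    min 2 (rDim ((Localization.AtPrime q) ⧸
        (Module.annihilator (Localization.AtPrime q) (LocalizedModule q.primeCompl M))))
      ≤ (mDepth (Localization.AtPrime q) (LocalizedModule q.primeCompl M) : WithBot ℕ∞)

/-- `M` is a maximal Cohen–Macaulay `S`-module. -/
def IsMCM (S : Type u) [CommRing S] (M : Type v) [AddCommGroup M] [Module S M] : Prop :=
  ∀ (q : Ideal S) (hq : q.IsMaximal),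
    letI := hq.isPrime
    (mDepth (Localization.AtPrime q) (LocalizedModule q.primeCompl M) : WithBot ℕ∞) =
      rDim (Localization.AtPrime q)

end Defs2


section Helpers

open nonZeroDivisors

variable {R : Type u} [CommRing R]

lemma sup_pow_le (A K : Ideal R) (n : ℕ) :
    (A ⊔ K) ^ (n + 1) ≤ A ^ (n + 1) ⊔ K * (A ⊔ K) ^ n := by
  induction n with
  | zero => simp
  | succ n ih =>
    rw [pow_succ' (A ⊔ K) (n + 1)]
    calc (A ⊔ K) * (A ⊔ K) ^ (n + 1)
        = A * (A ⊔ K) ^ (n + 1) ⊔ K * (A ⊔ K) ^ (n + 1) := Ideal.sup_mul _ _ _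
      _ ≤ A * (A ^ (n + 1) ⊔ K * (A ⊔ K) ^ n) ⊔ K * (A ⊔ K) ^ (n + 1) :=
          sup_le_sup_right (Ideal.mul_mono_right ih) _
      _ ≤ _ := by
          rw [Ideal.mul_sup]
          refine sup_le (sup_le ?_ ?_) le_sup_right
          · rw [← pow_succ']; exact le_sup_left
          · refine le_trans ?_ le_sup_right
            rw [mul_left_comm, pow_succ' (A ⊔ K)]
            exact Ideal.mul_mono_right (Ideal.mul_mono_left le_sup_left)

lemma IsReduction.sup {J I : Ideal R} (h : IsReduction J I) (K : Ideal R) :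
    IsReduction (J ⊔ K) (I ⊔ K) := by
  obtain ⟨hle, r, hr⟩ := h
  refine ⟨sup_le_sup_right hle _, r, le_antisymm ?_ ?_⟩
  · refine (sup_pow_le I K r).trans ?_
    rw [hr, Ideal.sup_mul]
    exact sup_le_sup_right (Ideal.mul_mono_right (Ideal.pow_right_mono le_sup_left _)) _
  · rw [pow_succ']
    exact Ideal.mul_mono_left (sup_le_sup_right hle _)

lemma IsReduction.pow_le {J I : Ideal R} {r : ℕ} (hr : I ^ (r + 1) = J * I ^ r) (s : ℕ) :
    I ^ (s + r) = J ^ s * I ^ r := by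
  induction s with
  | zero => simp
  | succ s ih =>
    calc I ^ (s + 1 + r) = I * I ^ (s + r) := by ring
      _ = J ^ s * I ^ (r + 1) := by rw [ih]; ring
      _ = _ := by rw [hr]; ring

lemma IsReduction.trans {L J I : Ideal R} (h₁ : IsReduction L J) (h₂ : IsReduction J I) :
    IsReduction L I := by
  obtain ⟨h1, s, hs⟩ := h₁
  obtain ⟨h2, r, hr⟩ := h₂
  refine ⟨h1.trans h2, s + r, ?_⟩
  have e1 := IsReduction.pow_le hr s
  have e2 := IsReduction.pow_le hr (s + 1)
  rw [show s + r + 1 = s + 1 + r by ring, e2, hs, e1, mul_assoc]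

lemma IsReduction.of_between {L J I : Ideal R} (h : IsReduction L I) (h1 : L ≤ J) (h2 : J ≤ I) :
    IsReduction J I := by
  obtain ⟨_, r, hr⟩ := h
  refine ⟨h2, r, le_antisymm ?_ ?_⟩
  · rw [hr]; exact Ideal.mul_mono_left h1
  · rw [pow_succ']; exact Ideal.mul_mono_left h2

/-- a principal reduction of an ideal containing a nonzerodivisor is generated by one. -/
lemma IsReduction.exists_pow_mem {J I : Ideal R} (h : IsReduction J I) {v : R} (hv : v ∈ I) :
    ∃ k : ℕ, v ^ k ∈ J := by
  obtain ⟨_, r, hr⟩ := h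
  exact ⟨r + 1, Ideal.mul_le_left (hr ▸ Ideal.pow_mem_pow hv (r + 1) : v ^ (r + 1) ∈ J * I ^ r)⟩

lemma IsReduction.nzd {I : Ideal R} {y : R} (h : IsReduction (Ideal.span {y}) I) {v : R}
    (hv : v ∈ I) (hv0 : v ∈ R⁰) : y ∈ R⁰ := by
  obtain ⟨k, hk⟩ := h.exists_pow_mem hv
  obtain ⟨a, ha⟩ := Ideal.mem_span_singleton'.mp hk
  have : a * y ∈ R⁰ := ha ▸ pow_mem hv0 k
  exact (mul_mem_nonZeroDivisors.mp this).2

lemma IsReduction.isMinimal [IsNoetherianRing R] [IsLocalRing R] {I : Ideal R} {y : R}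
    (h : IsReduction (Ideal.span {y}) I) {v : R}
    (hv : v ∈ I) (hv0 : v ∈ R⁰) : IsMinimalReduction (Ideal.span {y}) I := by
  have hy := h.nzd hv hv0
  refine ⟨h, fun J' hJ' hle => le_antisymm hle ?_⟩
  obtain ⟨A, rfl⟩ : ∃ A : Ideal R, J' = Ideal.span {y} * A := by
    refine ⟨Submodule.colon J' {y}, le_antisymm ?_ ?_⟩
    · intro a ha
      obtain ⟨c, rfl⟩ := Ideal.mem_span_singleton.mp (hle ha)
      refine Ideal.mem_span_singleton_mul.mpr ⟨c, ?_, rfl⟩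
      rw [Submodule.mem_colon_singleton, smul_eq_mul, mul_comm]
      exact ha
    · intro a ha
      obtain ⟨c, hc, rfl⟩ := Ideal.mem_span_singleton_mul.mp ha
      rw [Submodule.mem_colon_singleton, smul_eq_mul, mul_comm] at hc
      exact hc
  obtain ⟨_, r, hr⟩ := hJ'
  have h1 : Ideal.span {y} * I ^ r ≤ Ideal.span {y} * (A * I ^ r) := by
    rw [← mul_assoc, ← hr, pow_succ']
    exact Ideal.mul_mono_left h.1
  have h2 : I ^ r ≤ A * I ^ r := by
    intro a ha
    have := h1 (Ideal.mul_mem_mul (Ideal.mem_span_singleton_self y) ha)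
    rw [Ideal.mem_span_singleton_mul] at this
    obtain ⟨c, hc, hce⟩ := this
    rwa [← mul_cancel_left_mem_nonZeroDivisors hy |>.mp hce]
  by_cases hA : A = ⊤
  · rw [hA, Ideal.mul_top]
  · exfalso
    have h3 : I ^ r = ⊥ := by
      refine Submodule.eq_bot_of_le_smul_of_le_jacobson_bot A _ (IsNoetherian.noetherian _) h2 ?_
      rw [IsLocalRing.jacobson_eq_maximalIdeal _ bot_ne_top]
      exact IsLocalRing.le_maximalIdeal hA
    have h4 : v ^ r ∈ I ^ r := Ideal.pow_mem_pow hv r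
    rw [h3, Ideal.mem_bot] at h4
    exact nonZeroDivisors.ne_zero (pow_mem hv0 r) h4

lemma exists_nzd [IsNoetherianRing R] [IsLocalRing R] (hCM : IsCMLocalRing R) (hdim : rDim R = 1) :
    ∃ w ∈ maximalIdeal R, w ∈ R⁰ := by
  rw [IsCMLocalRing, hdim] at hCM
  have h1 : qDepth R (⊥ : Ideal R) = 1 := by exact_mod_cast hCM.symm
  by_contra hcon
  push Not at hcon
  have : qDepth R (⊥ : Ideal R) ≤ 0 := by
    refine sSup_le ?_
    rintro n ⟨rs, hrs, hreg, rfl⟩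
    cases rs with
    | nil => simp
    | cons w rs =>
      exfalso
      refine hcon w (hrs w (by simp)) ?_
      rw [RingTheory.Sequence.isRegular_cons_iff] at hreg
      have h2 : IsSMulRegular R w :=
        ((Submodule.quotEquivOfEqBot (⊥ : Ideal R) rfl).isSMulRegular_congr w).mp hreg.1
      rw [mem_nonZeroDivisors_iff_right]
      intro a ha
      exact h2 (by simpa [mul_comm] using ha)
  rw [h1] at this
  simp at this

lemma length_ne_top_of_nzd [IsNoetherianRing R] (hdim : rDim R = 1) {w : R} (hw : w ∈ R⁰) :
    Module.length R (R ⧸ Ideal.span {w}) ≠ ⊤ := by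
  have h1 := ringKrullDim_quotient_succ_le_of_nonZeroDivisor hw
  rw [rDim] at hdim
  rw [hdim] at h1
  have h2 : ringKrullDim (R ⧸ Ideal.span {w}) ≤ 0 := by
    revert h1
    generalize ringKrullDim (R ⧸ Ideal.span {w}) = d
    intro h1
    induction d with
    | bot => exact bot_le
    | coe d =>
      have h3 : d + 1 ≤ 0 + 1 := by rw [zero_add]; exact_mod_cast h1
      have h4 : d ≤ 0 := (ENat.add_le_add_iff_right (by simp)).mp h3
      exact_mod_cast h4
  have h3 : Ring.KrullDimLE 0 (R ⧸ Ideal.span {w}) := by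
    rw [Ring.krullDimLE_iff]; exact_mod_cast h2
  have : IsArtinianRing (R ⧸ Ideal.span {w}) := isArtinianRing_iff_krullDimLE_zero.mpr h3
  have e := Module.length_eq_of_surjective (M := R ⧸ Ideal.span {w}) (S := R)
    (R := R ⧸ Ideal.span {w}) Ideal.Quotient.mk_surjective
  have := Module.length_ne_top (R := R ⧸ Ideal.span {w}) (M := R ⧸ Ideal.span {w})
  rwa [e]

/-- Relation with a unit coefficient between too many generators. -/
lemma exists_relation [IsNoetherianRing R] [IsLocalRing R] (hdim : rDim R = 1)
    {w : R} (hw : w ∈ R⁰) (hwm : w ∈ maximalIdeal R)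
    (n : ℕ) (hn : Module.length R (R ⧸ Ideal.span {w}) < n)
    (g : Fin n → R) {v : R} (hv : v ∈ R⁰) (hvN : v ∈ Ideal.span (Set.range g)) :
    ∃ c : Fin n → R, ∑ i, c i * g i = 0 ∧ ∃ i, IsUnit (c i) := by
  by_contra hcon
  push Not at hcon
  set N : Ideal R := Ideal.span (Set.range g) with hN
  set W : Ideal R := Ideal.span {w} * N with hW
  have hWN : W ≤ N := Ideal.mul_le_right
  have hWw : W ≤ Ideal.span {w} := Ideal.mul_le_left
  have hfin : Module.length R (R ⧸ N) ≠ ⊤ := by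
    refine ne_top_of_le_ne_top (length_ne_top_of_nzd hdim hv) ?_
    exact Module.length_le_of_surjective (Submodule.factor
      (show Ideal.span {v} ≤ N from (Ideal.span_singleton_le_iff_mem _).mpr hvN))
      (Submodule.factor_surjective _)
  -- first exact sequence
  have e1 : Module.length R (R ⧸ W) =
      Module.length R (R ⧸ N) + Module.length R (R ⧸ Ideal.span {w}) := by
    let f : (R ⧸ N) →ₗ[R] (R ⧸ W) := Submodule.mapQ N W (LinearMap.mulLeft R w) (by
      intro a ha
      exact Ideal.mul_mem_mul (Ideal.mem_span_singleton_self w) ha)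
    refine Module.length_eq_add_of_exact f (Submodule.factor hWw) ?_
      (Submodule.factor_surjective _) ?_
    · rw [← LinearMap.ker_eq_bot, eq_bot_iff]
      intro q hq
      obtain ⟨a, rfl⟩ := Submodule.Quotient.mk_surjective _ q
      have hq' : w * a ∈ W := by
        have : Submodule.Quotient.mk (p := W) (w * a) = 0 := hq
        rwa [Submodule.Quotient.mk_eq_zero] at this
      obtain ⟨c, hc, hce⟩ := Ideal.mem_span_singleton_mul.mp hq'
      rw [mul_cancel_left_mem_nonZeroDivisors hw] at hce
      subst hce
      exact (Submodule.Quotient.mk_eq_zero _).mpr hc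
    · intro q
      obtain ⟨a, rfl⟩ := Submodule.Quotient.mk_surjective _ q
      constructor
      · intro h
        have h' : Submodule.Quotient.mk (p := Ideal.span {w}) a = 0 := h
        rw [Submodule.Quotient.mk_eq_zero] at h'
        obtain ⟨c, rfl⟩ := Ideal.mem_span_singleton.mp h'
        exact ⟨Submodule.Quotient.mk c, rfl⟩
      · rintro ⟨q', hq'⟩
        obtain ⟨c, rfl⟩ := Submodule.Quotient.mk_surjective _ q'
        rw [← hq']
        change Submodule.Quotient.mk (p := Ideal.span {w}) (w * c) = 0
        rw [Submodule.Quotient.mk_eq_zero]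
        exact Ideal.mem_span_singleton.mpr (dvd_mul_right _ _)
  let φ : (Fin n → R) →ₗ[R] R := Fintype.linearCombination R g
  have hφ : ∀ c, φ c = ∑ i, c i * g i := fun c => by
    simp [φ, Fintype.linearCombination_apply]
  have hφr : LinearMap.range φ = N := by
    simp only [φ, Fintype.range_linearCombination]; rfl
  let ψ : (Fin n → R) →ₗ[R] (R ⧸ W) := W.mkQ ∘ₗ φ
  let π : (Fin n → R) →ₗ[R] (Fin n → ResidueField R) :=
    (Algebra.linearMap R (ResidueField R)).compLeft (Fin n)
  have hπs : Function.Surjective π := by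
    intro c
    choose d hd using fun i => IsLocalRing.residue_surjective (c i)
    exact ⟨d, funext hd⟩
  have hker : LinearMap.ker ψ ≤ LinearMap.ker π := by
    intro c hc
    have hc' : φ c ∈ W := by
      have : Submodule.Quotient.mk (p := W) (φ c) = 0 := hc
      rwa [Submodule.Quotient.mk_eq_zero] at this
    obtain ⟨a, ha, hae⟩ := Ideal.mem_span_singleton_mul.mp hc'
    rw [← hφr] at ha
    obtain ⟨d, rfl⟩ := ha
    have h0 : φ (c - w • d) = 0 := by
      rw [map_sub, map_smul, smul_eq_mul, hae, sub_self]
    rw [hφ] at h0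
    have h1 := hcon _ h0
    rw [LinearMap.mem_ker]
    funext i
    have h2 : c i - w * d i ∈ maximalIdeal R := (mem_maximalIdeal _).mpr (h1 i)
    have h3 : c i ∈ maximalIdeal R := by
      have := Ideal.add_mem _ h2 (Ideal.mul_mem_right (d i) _ hwm)
      simpa using this
    exact (IsLocalRing.residue_eq_zero_iff _).mpr h3
  have e2 : (n : ℕ∞) ≤ Module.length R (LinearMap.range ψ) := by
    have hk : Module.length R (ResidueField R) = 1 := by
      have : IsSimpleModule R (ResidueField R) := by
        change IsSimpleModule R (R ⧸ maximalIdeal R)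
        exact isSimpleModule_iff_isCoatom.mpr (maximalIdeal.isMaximal R).out
      exact Module.length_eq_one R _
    have h1 : Module.length R (Fin n → ResidueField R) = n := by
      rw [Module.length_pi_of_fintype]; simp [hk]
    rw [← h1, ← (LinearMap.quotKerEquivRange ψ).length_eq,
      ← (LinearMap.quotKerEquivOfSurjective π hπs).length_eq]
    exact Module.length_le_of_surjective (Submodule.factor hker) (Submodule.factor_surjective _)
  have e3 : Module.length R (R ⧸ W) =
      Module.length R (LinearMap.range ψ) + Module.length R ((R ⧸ W) ⧸ LinearMap.range ψ) :=
    Module.length_eq_add_of_exact (LinearMap.range ψ).subtype (LinearMap.range ψ).mkQ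
      (Submodule.subtype_injective _) (Submodule.mkQ_surjective _)
      (LinearMap.exact_subtype_mkQ _)
  have e4 : Module.length R (R ⧸ N) ≤ Module.length R ((R ⧸ W) ⧸ LinearMap.range ψ) := by
    refine Module.length_le_of_surjective
      (Submodule.liftQ (LinearMap.range ψ) (Submodule.factor hWN) ?_) ?_
    · rintro _ ⟨c, rfl⟩
      rw [LinearMap.mem_ker]
      change Submodule.Quotient.mk (p := N) (φ c) = 0
      rw [Submodule.Quotient.mk_eq_zero, ← hφr]
      exact ⟨c, rfl⟩
    · intro q
      obtain ⟨a, rfl⟩ := Submodule.Quotient.mk_surjective _ q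
      exact ⟨Submodule.Quotient.mk (Submodule.Quotient.mk a), rfl⟩
  have e5 : (n : ℕ∞) + Module.length R (R ⧸ N) ≤
      Module.length R (R ⧸ Ideal.span {w}) + Module.length R (R ⧸ N) := by
    rw [add_comm (Module.length R (R ⧸ Ideal.span {w})), ← e1, e3]
    exact add_le_add e2 e4
  rw [ENat.add_le_add_iff_right hfin] at e5
  exact absurd hn (not_lt.mpr e5)

lemma pow_sub_pow_mem {N : Ideal R} {a b : R} (ha : a ∈ N) (hb : b ∈ N) (m : ℕ) :
    a ^ (m + 1) - b ^ (m + 1) ∈ Ideal.span {a - b} * N ^ m := by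
  rw [← (Commute.all a b).mul_geom_sum₂]
  refine Ideal.mul_mem_mul (Ideal.mem_span_singleton_self _) (Ideal.sum_mem _ fun i hi => ?_)
  have hi' : i ≤ m := by simpa [Nat.lt_succ_iff] using hi
  have := Ideal.mul_mem_mul (Ideal.pow_mem_pow ha i) (Ideal.pow_mem_pow hb (m - i))
  rw [← pow_add, Nat.add_sub_cancel' hi'] at this
  simpa using this

/-- Generic combinations of two elements generate a reduction of the ideal they generate. -/
lemma generic_reduction [IsNoetherianRing R] [IsLocalRing R] (hdim : rDim R = 1)
    {w : R} (hw : w ∈ R⁰) (hwm : w ∈ maximalIdeal R)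
    (y z : R) {v : R} (hv : v ∈ R⁰) (hvN : v ∈ Ideal.span {y, z}) :
    ∃ F : Finset (ResidueField R), ∀ u : R, residue R u ∉ F →
      IsReduction (Ideal.span {y + u * z}) (Ideal.span {y, z}) := by
  obtain ⟨e, he⟩ := ENat.ne_top_iff_exists.mp (length_ne_top_of_nzd hdim hw)
  let g : Fin (e + 1 + 1) → R := fun i => y ^ (e + 1 - (i : ℕ)) * z ^ (i : ℕ)
  have hvg : v ^ (e + 1) ∈ Ideal.span (Set.range g) := by
    obtain ⟨a, b, rfl⟩ := Ideal.mem_span_pair.mp hvN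
    rw [add_comm (a * y) (b * z), add_pow]
    refine Ideal.sum_mem _ fun i hi => ?_
    have hi' : i < e + 1 + 1 := by simpa using hi
    have h1 : g ⟨i, hi'⟩ ∈ Ideal.span (Set.range g) := Ideal.subset_span ⟨_, rfl⟩
    have := Ideal.mul_mem_left _ (a ^ (e + 1 - i) * b ^ i * ((e + 1).choose i : R)) h1
    convert this using 1
    simp only [g]
    ring
  obtain ⟨c, hc0, i₀, hi₀⟩ := exists_relation hdim hw hwm (e + 1 + 1)
    (by rw [← he]; norm_cast; omega) g (pow_mem hv (e + 1)) hvg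
  -- the polynomial
  let p : Polynomial (ResidueField R) :=
    ∑ i : Fin (e + 1 + 1), Polynomial.C (residue R (c i)) *
      Polynomial.X ^ (e + 1 - (i : ℕ))
  have hp : p ≠ 0 := by
    intro h0
    have h1 : p.coeff (e + 1 - (i₀ : ℕ)) = residue R (c i₀) := by
      simp only [p, Polynomial.finsetSum_coeff, Polynomial.coeff_C_mul, Polynomial.coeff_X_pow]
      rw [Finset.sum_eq_single i₀]
      · simp
      · intro j _ hj
        rw [if_neg, mul_zero]
        intro h
        apply hj
        ext
        omega
      · simp
    rw [h0, Polynomial.coeff_zero] at h1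
    have := (IsLocalRing.residue_ne_zero_iff_isUnit (c i₀)).mpr hi₀
    exact this h1.symm
  classical
  refine ⟨p.roots.toFinset.image (fun x => -x), fun u hu => ?_⟩
  have hG : IsUnit (∑ i : Fin (e + 1 + 1), c i * (-u) ^ (e + 1 - (i : ℕ))) := by
    rw [← IsLocalRing.residue_ne_zero_iff_isUnit]
    intro h0
    apply hu
    rw [Finset.mem_image]
    refine ⟨-residue R u, ?_, neg_neg _⟩
    rw [Multiset.mem_toFinset, Polynomial.mem_roots hp, Polynomial.IsRoot]
    simp only [p, Polynomial.eval_finsetSum, Polynomial.eval_mul, Polynomial.eval_C,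
      Polynomial.eval_pow, Polynomial.eval_X]
    simpa using h0
  set N : Ideal R := Ideal.span {y, z} with hN
  have hy : y ∈ N := Ideal.subset_span (by simp)
  have hz : z ∈ N := Ideal.subset_span (by simp)
  have huz : -u * z ∈ N := Ideal.mul_mem_left _ _ hz
  have hy' : y + u * z ∈ N := Ideal.add_mem _ hy (Ideal.mul_mem_left _ _ hz)
  set L : Ideal R := Ideal.span {y + u * z} * N ^ e with hL
  have hterm : ∀ i : Fin (e + 1 + 1), g i - (-u) ^ (e + 1 - (i : ℕ)) * z ^ (e + 1) ∈ L := by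
    intro i
    have hi := i.2
    obtain h | ⟨k, hk⟩ : (i : ℕ) = e + 1 ∨ ∃ k, e + 1 - (i : ℕ) = k + 1 := by
      by_cases h : (i : ℕ) = e + 1
      · exact Or.inl h
      · exact Or.inr ⟨e - i, by omega⟩
    · simp [g, h]
    · have h1 := pow_sub_pow_mem hy huz k
      have h2 := Ideal.mul_mem_mul h1 (Ideal.pow_mem_pow hz (i : ℕ))
      rw [mul_assoc, ← pow_add, show k + (i : ℕ) = e by omega,
        show y - -u * z = y + u * z by ring] at h2
      convert h2 using 1
      simp only [g]
      have h3 : z ^ (e + 1) = z ^ (k + 1) * z ^ (i : ℕ) := by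
        rw [← pow_add]; congr 1; omega
      rw [hk, h3]
      ring
  have hzL : z ^ (e + 1) ∈ L := by
    have h1 : ∑ i, c i * (g i - (-u) ^ (e + 1 - (i : ℕ)) * z ^ (e + 1)) ∈ L :=
      Ideal.sum_mem _ fun i _ => Ideal.mul_mem_left _ _ (hterm i)
    have h2 : ∑ i, c i * (g i - (-u) ^ (e + 1 - (i : ℕ)) * z ^ (e + 1)) =
        -((∑ i : Fin (e + 1 + 1), c i * (-u) ^ (e + 1 - (i : ℕ))) * z ^ (e + 1)) := by
      simp only [mul_sub, Finset.sum_sub_distrib, hc0, Finset.sum_mul, zero_sub, mul_assoc]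
    rw [h2, Ideal.neg_mem_iff] at h1
    exact (Ideal.unit_mul_mem_iff_mem _ hG).mp h1
  have hNe : N = Ideal.span {z} ⊔ Ideal.span {y + u * z} := by
    apply le_antisymm
    · rw [hN, Ideal.span_le]
      have h1 : z ∈ Ideal.span {z} ⊔ Ideal.span {y + u * z} :=
        Ideal.mem_sup_left (Ideal.mem_span_singleton_self z)
      have h2 : y + u * z ∈ Ideal.span {z} ⊔ Ideal.span {y + u * z} :=
        Ideal.mem_sup_right (Ideal.mem_span_singleton_self _)
      rintro a (rfl | rfl)
      · have := Ideal.sub_mem _ h2 (Ideal.mul_mem_left _ u h1)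
        simpa using this
      · exact h1
    · exact sup_le ((Ideal.span_singleton_le_iff_mem _).mpr hz)
        ((Ideal.span_singleton_le_iff_mem _).mpr hy')
  refine ⟨(Ideal.span_singleton_le_iff_mem _).mpr hy', e, le_antisymm ?_ ?_⟩
  · have := sup_pow_le (Ideal.span {z}) (Ideal.span {y + u * z}) e
    rw [← hNe, Ideal.span_singleton_pow] at this
    refine this.trans (sup_le ?_ le_rfl)
    exact (Ideal.span_singleton_le_iff_mem _).mpr hzL
  · rw [pow_succ']
    exact Ideal.mul_mono_left ((Ideal.span_singleton_le_iff_mem _).mpr hy')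

lemma exists_residue_notMem [IsLocalRing R] [Infinite (ResidueField R)]
    (F : Finset (ResidueField R)) : ∃ u : R, residue R u ∉ F := by
  obtain ⟨x, hx⟩ := Infinite.exists_notMem_finset F
  obtain ⟨u, rfl⟩ := IsLocalRing.residue_surjective x
  exact ⟨u, hx⟩

lemma exists_principal_reduction [IsNoetherianRing R] [IsLocalRing R] (hdim : rDim R = 1)
    [Infinite (ResidueField R)] {w : R} (hw : w ∈ R⁰) (hwm : w ∈ maximalIdeal R)
    (J : Ideal R) {v : R} (hv : v ∈ R⁰) (hvJ : v ∈ J) :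
    ∃ y, IsReduction (Ideal.span {y}) J := by
  classical
  have key : ∀ s : Finset R, ∃ y, IsReduction (Ideal.span {y})
      (Ideal.span (s : Set R) ⊔ Ideal.span {v}) := by
    intro s
    induction s using Finset.induction_on with
    | empty => exact ⟨v, by simp, 0, by simp⟩
    | insert a s _ ih =>
      obtain ⟨y, hy⟩ := ih
      have hvm : v ∈ Ideal.span (s : Set R) ⊔ Ideal.span {v} :=
        Ideal.mem_sup_right (Ideal.mem_span_singleton_self v)
      have hy0 := hy.nzd hvm hv
      obtain ⟨F, hF⟩ := generic_reduction hdim hw hwm y a hy0 (Ideal.subset_span (by simp))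
      obtain ⟨u, hu⟩ := exists_residue_notMem F
      refine ⟨_, (hF u hu).trans ?_⟩
      have := hy.sup (Ideal.span {a})
      convert this using 1
      · rw [Ideal.span_insert]
      · rw [Finset.coe_insert, Ideal.span_insert]
        ac_rfl
  obtain ⟨s, hs⟩ := (isNoetherianRing_iff_ideal_fg R).mp inferInstance J
  obtain ⟨y, hy⟩ := key s
  rw [show Ideal.span (s : Set R) = J from hs,
    sup_eq_left.mpr ((Ideal.span_singleton_le_iff_mem _).mpr hvJ)] at hy
  exact ⟨y, hy⟩

lemma integral_aux {Q : Type u} [CommRing Q] [Algebra R Q] (N : Submodule R Q)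
    (hN' : N.FG) (x : Q) (hx : ∀ n ∈ N, x • n ∈ N) (a : Q) (ha₁ : a ∈ N) (ha₂ : IsUnit a) :
    IsIntegral R x := by
  have : Module.Finite R N := by rwa [Module.Finite.iff_fg]
  let f : Module.End R N := (LinearMap.mulLeft R x).restrict hx
  obtain ⟨p, hp, hp0⟩ := LinearMap.exists_monic_and_aeval_eq_zero R f
  have key : ∀ (q : Polynomial R) (n : N),
      ((Polynomial.aeval f q n : N) : Q) = Polynomial.aeval x q * (n : Q) := by
    intro q
    induction q using Polynomial.induction_on with
    | C r => intro n; simp [Algebra.smul_def]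
    | add p q hp hq => intro n; simp [hp, hq, add_mul]
    | monomial k r ih =>
      intro n
      rw [pow_succ, ← mul_assoc, map_mul (Polynomial.aeval f) _ Polynomial.X,
        map_mul (Polynomial.aeval x) _ Polynomial.X, Polynomial.aeval_X, Polynomial.aeval_X,
        Module.End.mul_apply, ih]
      change _ * (x * (n : Q)) = _
      ring
  refine ⟨p, hp, ?_⟩
  have h1 := key p ⟨a, ha₁⟩
  rw [hp0] at h1
  exact (ha₂.mul_left_eq_zero).1 h1.symm

lemma divided_differences {Q : Type u} [CommRing Q] [Algebra R Q] (t : Q) (ht : IsIntegral R t)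
    (b : R) (v : ℕ → R) (hv : ∀ i j, i ≠ j → IsUnit (v i - v j))
    (hreg : ∀ i, IsUnit (t + algebraMap R Q (v i)))
    (hb : ∀ i, ∃ c : R, algebraMap R Q b = (t + algebraMap R Q (v i)) * algebraMap R Q c) :
    ∃ r : R, algebraMap R Q b * t = algebraMap R Q r := by
  let P : ℕ → Q := fun k => ∏ j ∈ Finset.range k, (t + algebraMap R Q (v j))
  have hPu : ∀ k, IsUnit (P k) := fun k => by
    induction k with
    | zero => simp [P]
    | succ k ih => simp only [P, Finset.prod_range_succ]; exact ih.mul (hreg k)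
  have hPs : ∀ k, P (k + 1) = P k * (t + algebraMap R Q (v k)) := fun k =>
    Finset.prod_range_succ _ _
  have h1 : ∀ k m, k ≤ m → ∃ d : R, algebraMap R Q b =
      P k * (t + algebraMap R Q (v m)) * algebraMap R Q d := by
    intro k
    induction k with
    | zero => intro m _; simpa [P] using hb m
    | succ k ih =>
      intro m hm
      obtain ⟨d1, h1⟩ := ih k le_rfl
      obtain ⟨d2, h2⟩ := ih m (by omega)
      obtain ⟨s, hs⟩ := (hv m k (by omega)).exists_left_inv
      refine ⟨s * (d1 - d2), ?_⟩
      have h3 : (t + algebraMap R Q (v k)) * algebraMap R Q d1 =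
          (t + algebraMap R Q (v m)) * algebraMap R Q d2 := by
        apply (hPu k).mul_left_cancel
        rw [← mul_assoc, ← mul_assoc, ← h1, ← h2]
      have hs' : algebraMap R Q s * (algebraMap R Q (v m) - algebraMap R Q (v k)) = 1 := by
        rw [← map_sub, ← map_mul, hs, map_one]
      rw [h2, hPs, map_mul, map_sub]
      linear_combination (-(P k * (t + algebraMap R Q (v m)) * algebraMap R Q s)) * h3 -
        P k * (t + algebraMap R Q (v m)) * algebraMap R Q d2 * hs'
  have h2 : ∀ k, ∃ d : R, algebraMap R Q b = P k * algebraMap R Q d := by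
    intro k
    cases k with
    | zero => exact ⟨b, by simp [P]⟩
    | succ k =>
      obtain ⟨d, hd⟩ := h1 k k le_rfl
      exact ⟨d, by rw [hPs]; exact hd⟩
  choose d hd using h2
  have h3 : ∀ k, algebraMap R Q (d k) = (t + algebraMap R Q (v k)) * algebraMap R Q (d (k + 1)) := by
    intro k
    apply (hPu k).mul_left_cancel
    rw [← hd, ← mul_assoc, ← hPs, ← hd]
  have h4 : ∀ j k, j ≤ k → ∃ r : R, t ^ j * algebraMap R Q (d k) = algebraMap R Q r := by
    intro j
    induction j with
    | zero => intro k _; exact ⟨d k, by simp⟩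
    | succ j ih =>
      intro k hk
      obtain ⟨k, rfl⟩ : ∃ l, k = l + 1 := ⟨k - 1, by omega⟩
      obtain ⟨r1, e1⟩ := ih k (by omega)
      obtain ⟨r2, e2⟩ := ih (k + 1) (by omega)
      refine ⟨r1 - v k * r2, ?_⟩
      rw [map_sub, map_mul, ← e1, ← e2, h3 k]
      ring
  obtain ⟨p, hp, hpt⟩ := ht
  have hpt' : Polynomial.aeval t p = 0 := hpt
  set n := p.natDegree with hn
  let T : Submodule R Q := Submodule.comap (LinearMap.mulRight R (algebraMap R Q (d n)))
    (LinearMap.range (Algebra.linearMap R Q))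
  have hT : ∀ j, j ≤ n → t ^ j ∈ T := by
    intro j hj
    obtain ⟨r, hr⟩ := h4 j n hj
    exact ⟨r, hr.symm⟩
  have hT' : ∀ g : Polynomial R, Polynomial.aeval t g ∈ T := by
    intro g
    have e1 : Polynomial.aeval t g = Polynomial.aeval t (g %ₘ p) := by
      conv_lhs => rw [← Polynomial.modByMonic_add_div g p]
      rw [map_add, map_mul, hpt', zero_mul, add_zero]
    rw [e1, Polynomial.aeval_eq_sum_range]
    refine T.sum_mem fun i hi => T.smul_mem _ (hT i ?_)
    have := Polynomial.natDegree_modByMonic_le g hp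
    have hi' := Finset.mem_range.mp hi
    omega
  have h5 := hT' ((∏ j ∈ Finset.range n, (Polynomial.X + Polynomial.C (v j))) * Polynomial.X)
  obtain ⟨r, hr⟩ := h5
  refine ⟨r, ?_⟩
  have e : Polynomial.aeval t
      ((∏ j ∈ Finset.range n, (Polynomial.X + Polynomial.C (v j))) * Polynomial.X) = P n * t := by
    simp [P, map_prod]
  rw [e] at hr
  rw [hd n]
  have hr' : algebraMap R Q r = P n * t * algebraMap R Q (d n) := hr
  rw [hr']
  ring

lemma exists_generic_seq [IsLocalRing R] [Infinite (ResidueField R)]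
    (F : Finset (ResidueField R)) : ∃ v : ℕ → R, (∀ i, residue R (v i) ∉ F) ∧
      ∀ i j, i ≠ j → IsUnit (v i - v j) := by
  have : Infinite {x : ResidueField R // x ∉ F} :=
    (F.finite_toSet.infinite_compl).to_subtype
  let f := Infinite.natEmbedding {x : ResidueField R // x ∉ F}
  choose v hv using fun i => IsLocalRing.residue_surjective (f i).1
  refine ⟨v, fun i => by rw [hv]; exact (f i).2, fun i j hij => ?_⟩
  rw [← IsLocalRing.residue_ne_zero_iff_isUnit, map_sub, hv, hv, sub_ne_zero]
  intro h
  exact hij (f.injective (Subtype.ext h))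

lemma core_le_aux [IsNoetherianRing R] [IsLocalRing R] (hdim : rDim R = 1)
    [Infinite (ResidueField R)] {w : R} (hw : w ∈ R⁰) (hwm : w ∈ maximalIdeal R)
    (I : Ideal R) {v : R} (hv : v ∈ R⁰) (hvI : v ∈ I) (x : R)
    (hx : IsReduction (Ideal.span {x}) I) (b : R) (hb : x * b ∈ core I) (z : R) (hz : z ∈ I) :
    b * z ∈ Ideal.span {x} := by
  have hx0 : x ∈ R⁰ := hx.nzd hvI hv
  have hxI : x ∈ I := hx.1 (Ideal.mem_span_singleton_self x)
  let Q := Localization R⁰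
  have hinj : Function.Injective (algebraMap R Q) := IsLocalization.injective Q le_rfl
  have hunit : ∀ a ∈ R⁰, IsUnit (algebraMap R Q a) := fun a ha =>
    IsLocalization.map_units Q (⟨a, ha⟩ : R⁰)
  obtain ⟨F, hF⟩ := generic_reduction hdim hw hwm z x hx0 (Ideal.subset_span (by simp))
  have hzx : IsReduction (Ideal.span {z, x}) I := by
    refine hx.of_between (Ideal.span_mono (by simp)) ?_
    rw [Ideal.span_le]
    rintro a (rfl | rfl)
    · exact hz
    · exact hxI
  obtain ⟨s, hsF, hs⟩ := exists_generic_seq (R := R) F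
  have hred : ∀ i, IsReduction (Ideal.span {z + s i * x}) I := fun i =>
    (hF (s i) (hsF i)).trans hzx
  obtain ⟨t, ht⟩ : ∃ t : Q, t * algebraMap R Q x = algebraMap R Q z := by
    obtain ⟨c, hc⟩ := (hunit x hx0).exists_left_inv
    exact ⟨algebraMap R Q z * c, by rw [mul_assoc, hc, mul_one]⟩
  have htv : ∀ i, (t + algebraMap R Q (s i)) * algebraMap R Q x = algebraMap R Q (z + s i * x) := by
    intro i
    rw [add_mul, ht, map_add, map_mul]
  have htint : IsIntegral R t := by
    obtain ⟨_, r, hr⟩ := hx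
    refine integral_aux (Submodule.map (Algebra.linearMap R Q) (I ^ r))
      (Submodule.FG.map _ (IsNoetherian.noetherian _)) t ?_ (algebraMap R Q (x ^ r))
      ⟨x ^ r, Ideal.pow_mem_pow hxI r, rfl⟩ (hunit _ (pow_mem hx0 r))
    rintro _ ⟨a, ha, rfl⟩
    have h1 : z * a ∈ Ideal.span {x} * I ^ r := by
      rw [← hr, pow_succ']; exact Ideal.mul_mem_mul hz ha
    obtain ⟨c, hc, hce⟩ := Ideal.mem_span_singleton_mul.mp h1
    refine ⟨c, hc, ?_⟩
    change algebraMap R Q c = t * algebraMap R Q a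
    apply (hunit x hx0).mul_left_cancel
    rw [← map_mul, hce, map_mul, ← ht]
    ring
  obtain ⟨r, hr⟩ := divided_differences t htint b s hs
    (fun i => by
      have h1 := hunit _ ((hred i).nzd hvI hv)
      rw [← htv] at h1
      exact isUnit_of_mul_isUnit_left h1)
    (fun i => by
      have h1 : x * b ∈ Ideal.span {z + s i * x} :=
        (Submodule.mem_sInf.mp hb) _ ((hred i).isMinimal hvI hv)
      obtain ⟨c, hc⟩ := Ideal.mem_span_singleton.mp h1
      refine ⟨c, ?_⟩
      apply (hunit x hx0).mul_left_cancel
      rw [← map_mul, hc, map_mul, ← htv]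
      ring)
  refine Ideal.mem_span_singleton.mpr ⟨r, hinj ?_⟩
  rw [map_mul, map_mul, ← hr, ← ht]
  ring

end Helpers

/-- Lemma 2.3: in a one-dimensional local Cohen–Macaulay ring with infinite residue
field, if `J : I` is independent of the minimal reduction `J` of the `𝔪`-primary
ideal `I`, then `core I = (J : I)J` for every minimal reduction `J`. -/
theorem statement2 {R : Type u} [CommRing R] [IsNoetherianRing R] [IsLocalRing R]
    (hCM : IsCMLocalRing R) (hdim : rDim R = 1)
    (hres : Infinite (ResidueField R))
    (I : Ideal R) (hI : I.radical = maximalIdeal R)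
    (hbal : ∀ J₁ J₂, IsMinimalReduction J₁ I → IsMinimalReduction J₂ I →
      Submodule.colon J₁ I = Submodule.colon J₂ I) :
    ∀ J, IsMinimalReduction J I → core I = Submodule.colon J I * J := by
  have := hres
  obtain ⟨w, hwm, hw⟩ := exists_nzd hCM hdim
  obtain ⟨k, hk⟩ : ∃ k : ℕ, w ^ k ∈ I := by
    rw [← hI] at hwm
    exact hwm
  have hwk := pow_mem hw k
  intro J hJ
  obtain ⟨l, hl⟩ := hJ.1.exists_pow_mem hk
  obtain ⟨x, hx⟩ := exists_principal_reduction hdim hw hwm J (pow_mem hwk l) hl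
  have hxI := hx.trans hJ.1
  obtain rfl := hJ.2 _ hxI hx.1
  apply le_antisymm
  · intro a ha
    have h1 : a ∈ Ideal.span {x} := (Submodule.mem_sInf.mp ha) _ hJ
    obtain ⟨b, rfl⟩ := Ideal.mem_span_singleton.mp h1
    rw [mul_comm x b]
    refine Ideal.mul_mem_mul ?_ (Ideal.mem_span_singleton_self x)
    rw [Submodule.mem_colon]
    intro z hz
    exact core_le_aux hdim hw hwm I hwk hk x hxI b ha z hz
  · refine le_sInf fun J' hJ' => ?_
    rw [hbal _ J' hJ hJ', Ideal.mul_le]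
    intro a ha c hc
    exact Submodule.mem_colon.mp ha c (hJ.1.1 hc)

end CPU
end

section
/- Let R be a local Cohen–Macaulay ring with infinite residue field and let I be an equimultiple R-ideal. If R_𝔭 is Gorenstein for every 𝔭 ∈ Min(I), then γ(I) = max{ type((R/core(I))_𝔭) : 𝔭 ∈ Min(I) }. -/
open IsLocalRing

universe u v

namespace CPU

section P1
variable {A : Type u} [CommRing A]

/-- `x` is a nonzerodivisor modulo `K`. -/
def nzm (K : Ideal A) (x : A) : Prop := ∀ y, x * y ∈ K → y ∈ K

/-- ideal-theoretic regular sequences modulo `K`. -/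
def RS (K : Ideal A) : List A → Prop
  | [] => True
  | x :: l => nzm K x ∧ RS (K ⊔ Ideal.span {x}) l

lemma RS_append (K : Ideal A) (l l' : List A) :
    RS K (l ++ l') ↔ RS K l ∧ RS (K ⊔ Ideal.ofList l) l' := by
  induction l generalizing K with
  | nil => simp [RS]
  | cons x l ih =>
    simp only [List.cons_append, RS, ih, Ideal.ofList_cons, and_assoc, sup_assoc]

lemma nzm_iff (K : Ideal A) (x : A) : IsSMulRegular (A ⧸ K) x ↔ nzm K x := by
  rw [isSMulRegular_iff_right_eq_zero_of_smul]
  constructor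
  · intro h y hy
    have := h (Ideal.Quotient.mk K y) (by
      rw [← Ideal.Quotient.eq_zero_iff_mem] at hy
      simpa [Algebra.smul_def] using hy)
    exact Ideal.Quotient.eq_zero_iff_mem.mp this
  · intro h y hy
    obtain ⟨y, rfl⟩ := Ideal.Quotient.mk_surjective y
    rw [Ideal.Quotient.eq_zero_iff_mem]
    apply h
    rw [← Ideal.Quotient.eq_zero_iff_mem]
    simpa [Algebra.smul_def] using hy

lemma RS_iff (K : Ideal A) (l : List A) :
    RingTheory.Sequence.IsWeaklyRegular (A ⧸ K) l ↔ RS K l := by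
  induction l generalizing K with
  | nil => simp [RS]
  | cons x l ih =>
    rw [RingTheory.Sequence.isWeaklyRegular_cons_iff, nzm_iff, RS, ← ih]
    refine and_congr_right fun _ => ?_
    have e : QuotSMulTop x (A ⧸ K) ≃ₗ[A] A ⧸ (K ⊔ Ideal.span {x}) := by
      refine (Submodule.quotEquivOfEq _ _ ?_).trans
        (Submodule.quotientQuotientEquivQuotientSup K (Ideal.span {x}))
      ext y
      obtain ⟨y, rfl⟩ := Submodule.mkQ_surjective K y
      simp only [Submodule.mem_smul_pointwise_iff_exists, Submodule.mem_map,
        Ideal.mem_span_singleton']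
      constructor
      · rintro ⟨z, -, hz⟩
        obtain ⟨z, rfl⟩ := Submodule.mkQ_surjective K z
        exact ⟨z * x, ⟨z, rfl⟩, by rw [← hz, ← map_smul, smul_eq_mul, mul_comm]⟩
      · rintro ⟨_, ⟨z, rfl⟩, hz⟩
        exact ⟨K.mkQ z, trivial, by rw [← hz, ← map_smul, smul_eq_mul, mul_comm]⟩
    exact e.isWeaklyRegular_congr l

section noeth
variable [IsNoetherianRing A]

/-- an associated prime witness. -/
lemma exists_assoc (K : Ideal A) {x : A} (hx : x ∉ K) :
    ∃ P ∈ associatedPrimes A (A ⧸ K), ∀ a, a * x ∈ K → a ∈ P := by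
  obtain ⟨P, hP, hle⟩ := exists_le_isAssociatedPrime_of_isNoetherianRing A (Ideal.Quotient.mk K x)
    (by rwa [Ne, Ideal.Quotient.eq_zero_iff_mem])
  refine ⟨P, hP, fun a ha => hle ?_⟩
  rw [Submodule.mem_colon_singleton, Submodule.mem_bot, Algebra.smul_def]
  rw [← Ideal.Quotient.eq_zero_iff_mem, map_mul] at ha
  exact ha

lemma assoc_wit (K : Ideal A) {P : Ideal A} (hP : P ∈ associatedPrimes A (A ⧸ K)) :
    P.IsPrime ∧ ∃ x, x ∉ K ∧ ∀ a, a ∈ P ↔ a * x ∈ K := by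
  obtain ⟨h1, x, hx⟩ := isAssociatedPrime_iff.mp hP
  refine ⟨h1, ?_⟩
  obtain ⟨x, rfl⟩ := Ideal.Quotient.mk_surjective x
  have key : ∀ a, a ∈ P ↔ a * x ∈ K := by
    intro a
    rw [hx, Submodule.mem_colon_singleton, Submodule.mem_bot, Algebra.smul_def,
      ← Ideal.Quotient.eq_zero_iff_mem, map_mul]
    rfl
  refine ⟨x, fun h => h1.ne_top ?_, key⟩
  rw [Ideal.eq_top_iff_one, key, one_mul]
  exact h

lemma nzm_of_not_mem_assoc (K : Ideal A) {x : A}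
    (h : ∀ P ∈ associatedPrimes A (A ⧸ K), x ∉ P) : nzm K x := by
  intro y hy
  by_contra hy'
  obtain ⟨P, hP, h'⟩ := exists_assoc K hy'
  exact h P hP (h' x hy)

lemma not_mem_assoc_of_nzm (K : Ideal A) {x : A} (hx : nzm K x)
    {P : Ideal A} (hP : P ∈ associatedPrimes A (A ⧸ K)) : x ∉ P := by
  obtain ⟨_, y, hy, h⟩ := assoc_wit K hP
  rw [h]
  exact fun h => hy (hx y h)

end noeth

variable [IsLocalRing A]

/-- the socle of `A / K` as an `A`-module. -/
def socA (K : Ideal A) : Submodule A (A ⧸ K) where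
  carrier := {y | ∀ a ∈ maximalIdeal A, a • y = 0}
  add_mem' := by
    intro y z hy hz a ha
    rw [smul_add, hy a ha, hz a ha, add_zero]
  zero_mem' := by intro a _; simp
  smul_mem' := by
    intro c y hy a ha
    rw [smul_comm, hy a ha, smul_zero]

lemma mk_mem_socA (K : Ideal A) (y : A) :
    K.mkQ y ∈ socA K ↔ ∀ a ∈ maximalIdeal A, a * y ∈ K := by
  refine forall₂_congr fun a _ => ?_
  rw [← map_smul, Submodule.mkQ_apply, Submodule.Quotient.mk_eq_zero, smul_eq_mul]

lemma length_socA_mul (K : Ideal A) {x y : A} (hx : nzm K x) (hy : nzm K y)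
    (hxm : x ∈ maximalIdeal A) :
    Module.length A (socA (K ⊔ Ideal.span {x})) =
      Module.length A (socA (K ⊔ Ideal.span {y * x})) := by
  have hmem : ∀ z w, w ∈ K ⊔ Ideal.span {z} ↔ ∃ k ∈ K, ∃ c, w = k + z * c := by
    intro z w
    rw [Submodule.mem_sup]
    constructor
    · rintro ⟨k, hk, m, hm, rfl⟩
      obtain ⟨c, rfl⟩ := Ideal.mem_span_singleton'.mp hm
      exact ⟨k, hk, c, by ring⟩
    · rintro ⟨k, hk, c, rfl⟩
      exact ⟨k, hk, z * c, Ideal.mem_span_singleton'.mpr ⟨c, by ring⟩, rfl⟩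
  let f : (A ⧸ (K ⊔ Ideal.span {x})) →ₗ[A] (A ⧸ (K ⊔ Ideal.span {y * x})) :=
    Submodule.mapQ _ _ (LinearMap.lsmul A A y) (by
      intro w hw
      rw [hmem] at hw
      obtain ⟨k, hk, c, rfl⟩ := hw
      change y * (k + x * c) ∈ K ⊔ Ideal.span {y * x}
      rw [hmem]
      exact ⟨y * k, K.mul_mem_left _ hk, c, by ring⟩)
  have hmemy : ∀ w, y * w ∈ K ⊔ Ideal.span {y * x} → w ∈ K ⊔ Ideal.span {x} := by
    intro w hw
    rw [hmem] at hw ⊢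
    obtain ⟨k, hk, c, hc⟩ := hw
    refine ⟨w - x * c, hy _ ?_, c, by ring⟩
    convert hk using 1
    linear_combination hc
  have hf : Function.Injective f := by
    rw [← LinearMap.ker_eq_bot, LinearMap.ker_eq_bot']
    intro w hw
    obtain ⟨w, rfl⟩ := Submodule.mkQ_surjective _ w
    simp only [f, Submodule.mkQ_apply, Submodule.mapQ_apply, Submodule.Quotient.mk_eq_zero] at hw ⊢
    exact hmemy w hw
  have hmap : (socA (K ⊔ Ideal.span {x})).map f = socA (K ⊔ Ideal.span {y * x}) := by
    apply le_antisymm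
    · rintro _ ⟨w, hw, rfl⟩ a ha
      rw [← map_smul, hw a ha, map_zero]
    · intro w hw
      obtain ⟨w, rfl⟩ := Submodule.mkQ_surjective _ w
      rw [mk_mem_socA] at hw
      have h1 := hw x hxm
      rw [hmem] at h1
      obtain ⟨k, hk, c, hc⟩ := h1
      have h2 : w - y * c ∈ K := hx _ (by
        convert hk using 1
        linear_combination hc)
      refine ⟨(K ⊔ Ideal.span {x}).mkQ c, ?_, ?_⟩
      · rw [SetLike.mem_coe, mk_mem_socA]
        intro a ha
        apply hmemy
        have h3 := hw a ha
        have h4 : a * (w - y * c) ∈ K ⊔ Ideal.span {y * x} :=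
          Ideal.mul_mem_left _ _ (Ideal.mem_sup_left h2)
        convert sub_mem h3 h4 using 1
        ring
      · simp only [f, Submodule.mkQ_apply, Submodule.mapQ_apply]
        symm
        rw [Submodule.Quotient.eq]
        exact Ideal.mem_sup_left h2
  rw [← hmap]
  exact (Submodule.equivMapOfInjective f hf _).length_eq

lemma length_socA_single (K : Ideal A) {x y : A} (hx : nzm K x) (hy : nzm K y)
    (hxm : x ∈ maximalIdeal A) (hym : y ∈ maximalIdeal A) :
    Module.length A (socA (K ⊔ Ideal.span {x})) =
      Module.length A (socA (K ⊔ Ideal.span {y})) := by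
  rw [length_socA_mul K hx hy hxm, mul_comm, ← length_socA_mul K hy hx hym]

variable [IsNoetherianRing A]

lemma RS_rotate (K : Ideal A) (l : List A) (z : A) (hl : ∀ x ∈ l, x ∈ maximalIdeal A)
    (hz : z ∈ maximalIdeal A) (h : RS K (l ++ [z])) : RS K (z :: l) := by
  rw [← RS_iff] at h ⊢
  refine IsLocalRing.isWeaklyRegular_of_perm_of_subset_maximalIdeal h
    (List.perm_append_singleton z l) ?_
  intro r hr
  rw [List.mem_append, List.mem_singleton] at hr
  rcases hr with hr | rfl
  · exact hl r hr
  · exact hz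

/-- prime avoidance for two ideals. -/
lemma exists_nzm₂ (K K' : Ideal A) (h : ∀ P ∈ associatedPrimes A (A ⧸ K), P ≠ maximalIdeal A)
    (h' : ∀ P ∈ associatedPrimes A (A ⧸ K'), P ≠ maximalIdeal A) :
    ∃ z ∈ maximalIdeal A, nzm K z ∧ nzm K' z := by
  have hfin : (associatedPrimes A (A ⧸ K) ∪ associatedPrimes A (A ⧸ K')).Finite :=
    (associatedPrimes.finite A _).union (associatedPrimes.finite A _)
  have hne : ∀ P ∈ associatedPrimes A (A ⧸ K) ∪ associatedPrimes A (A ⧸ K'),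
      P.IsPrime ∧ P ≠ maximalIdeal A := by
    rintro P (hP | hP)
    · exact ⟨(assoc_wit K hP).1, h P hP⟩
    · exact ⟨(assoc_wit K' hP).1, h' P hP⟩
  by_contra hcon
  push Not at hcon
  have : ((maximalIdeal A : Ideal A) : Set A) ⊆ ⋃ P ∈ (associatedPrimes A (A ⧸ K) ∪
      associatedPrimes A (A ⧸ K')), (P : Set A) := by
    intro z hz
    by_contra hz'
    simp only [Set.mem_iUnion, not_exists] at hz'
    exact hcon z hz (nzm_of_not_mem_assoc _ fun P hP => hz' P (Or.inl hP))
      (nzm_of_not_mem_assoc _ fun P hP => hz' P (Or.inr hP))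
  rw [Ideal.subset_union_prime_finite hfin (f := fun P => P) ⊥ ⊥
    (fun P hP _ _ => (hne P hP).1)] at this
  obtain ⟨P, hP, hle⟩ := this
  have := (hne P hP).1
  exact (hne P hP).2 (le_antisymm (le_maximalIdeal this.ne_top) hle)

lemma ne_max_of_nzm (K : Ideal A) {x : A} (hx : nzm K x) (hxm : x ∈ maximalIdeal A) :
    ∀ P ∈ associatedPrimes A (A ⧸ K), P ≠ maximalIdeal A := by
  rintro P hP rfl
  exact not_mem_assoc_of_nzm K hx hP hxm

theorem length_socA_eq (n : ℕ) : ∀ (K : Ideal A) (xs ys : List A), xs.length = n →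
    ys.length = n → (∀ x ∈ xs, x ∈ maximalIdeal A) → (∀ x ∈ ys, x ∈ maximalIdeal A) →
    RS K xs → RS K ys →
    Module.length A (socA (K ⊔ Ideal.ofList xs)) = Module.length A (socA (K ⊔ Ideal.ofList ys)) := by
  induction n with
  | zero =>
    intro K xs ys hx hy _ _ _ _
    rw [List.length_eq_zero_iff] at hx hy
    rw [hx, hy]
  | succ n ih =>
    intro K xs ys hx hy hxm hym hxs hys
    obtain ⟨xs, x, rfl⟩ := List.eq_nil_or_concat xs |>.resolve_left (by rintro rfl; simp at hx)
    obtain ⟨ys, y, rfl⟩ := List.eq_nil_or_concat ys |>.resolve_left (by rintro rfl; simp at hy)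
    simp only [List.concat_eq_append, List.length_append, List.length_singleton,
      Nat.add_right_cancel_iff, List.mem_append, List.mem_singleton] at *
    have hx1 : ∀ x ∈ xs, x ∈ maximalIdeal A := fun z hz => hxm z (Or.inl hz)
    have hy1 : ∀ x ∈ ys, x ∈ maximalIdeal A := fun z hz => hym z (Or.inl hz)
    have hx2 := hxm x (Or.inr rfl)
    have hy2 := hym y (Or.inr rfl)
    rw [RS_append] at hxs hys
    simp only [RS, and_true] at hxs hys
    obtain ⟨z, hzm, hz, hz'⟩ := exists_nzm₂ _ _ (ne_max_of_nzm _ hxs.2 hx2)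
      (ne_max_of_nzm _ hys.2 hy2)
    have e1 := RS_rotate K xs z hx1 hzm ((RS_append _ _ _).2 ⟨hxs.1, by simpa [RS] using hz⟩)
    have e2 := RS_rotate K ys z hy1 hzm ((RS_append _ _ _).2 ⟨hys.1, by simpa [RS] using hz'⟩)
    have := ih _ xs ys hx hy hx1 hy1 e1.2 e2.2
    rw [List.concat_eq_append, List.concat_eq_append, Ideal.ofList_append, Ideal.ofList_append,
      Ideal.ofList_singleton, Ideal.ofList_singleton, ← sup_assoc, ← sup_assoc, length_socA_single _ hxs.2 hz hx2 hzm,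
      length_socA_single _ hys.2 hz' hy2 hzm]
    rw [sup_right_comm, this, sup_right_comm]

lemma socA_eq_bot_of_nzm (K : Ideal A) {x : A} (hx : nzm K x) (hxm : x ∈ maximalIdeal A) :
    socA K = ⊥ := by
  rw [eq_bot_iff]
  intro y hy
  obtain ⟨y, rfl⟩ := Submodule.mkQ_surjective _ y
  rw [mk_mem_socA] at hy
  rw [Submodule.mem_bot, Submodule.mkQ_apply, Submodule.Quotient.mk_eq_zero]
  exact hx y (hy x hxm)

lemma RS_extend_one (K : Ideal A) (xs ys : List A) (hlt : xs.length < ys.length)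
    (hxm : ∀ x ∈ xs, x ∈ maximalIdeal A) (hym : ∀ x ∈ ys, x ∈ maximalIdeal A)
    (hx : RS K xs) (hy : RS K ys) : ∃ z ∈ maximalIdeal A, RS K (xs ++ [z]) := by
  have hys : ys = ys.take xs.length ++ (ys[xs.length] :: ys.drop (xs.length + 1)) := by
    simp
  have hy' := hy
  rw [hys, RS_append] at hy'
  have h0 := socA_eq_bot_of_nzm _ hy'.2.1 (hym _ (List.getElem_mem _))
  have h1 := length_socA_eq xs.length K xs (ys.take xs.length) rfl
    (by simp; omega) hxm (fun x hx => hym x (List.mem_of_mem_take hx)) hx hy'.1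
  rw [h0, Module.length_bot, Module.length_eq_zero_iff, Submodule.subsingleton_iff_eq_bot] at h1
  have h2 : ∀ P ∈ associatedPrimes A (A ⧸ (K ⊔ Ideal.ofList xs)), P ≠ maximalIdeal A := by
    rintro P hP rfl
    obtain ⟨_, y, hy, h⟩ := assoc_wit _ hP
    apply hy
    have : (K ⊔ Ideal.ofList xs).mkQ y ∈ socA (K ⊔ Ideal.ofList xs) := by
      rw [mk_mem_socA]
      exact fun a ha => (h a).1 ha
    rw [h1, Submodule.mem_bot, Submodule.mkQ_apply, Submodule.Quotient.mk_eq_zero] at this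
    exact this
  obtain ⟨z, hz, hz', -⟩ := exists_nzm₂ _ _ h2 h2
  exact ⟨z, hz, (RS_append _ _ _).2 ⟨hx, by simpa [RS] using hz'⟩⟩

lemma RS_extend (n : ℕ) (K : Ideal A) : ∀ (xs ys : List A) (_ : xs.length + n = ys.length)
    (_ : ∀ x ∈ xs, x ∈ maximalIdeal A) (_ : ∀ x ∈ ys, x ∈ maximalIdeal A)
    (_ : RS K xs) (_ : RS K ys), ∃ zs : List A, (∀ x ∈ zs, x ∈ maximalIdeal A) ∧ zs.length = n ∧
      RS (K ⊔ Ideal.ofList xs) zs := by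
  induction n with
  | zero => intro xs ys _ _ _ _ _; exact ⟨[], by simp, rfl, trivial⟩
  | succ n ih =>
    intro xs ys hl hxm hym hx hy
    obtain ⟨z, hz, h⟩ := RS_extend_one K xs ys (by omega) hxm hym hx hy
    obtain ⟨zs, h1, h2, h3⟩ := ih (xs ++ [z]) ys (by simp; omega) (by
      intro x hx
      rw [List.mem_append, List.mem_singleton] at hx
      rcases hx with hx | rfl
      · exact hxm x hx
      · exact hz) hym h hy
    refine ⟨z :: zs, ?_, by simp [h2], ?_⟩
    · intro x hx
      rw [List.mem_cons] at hx
      rcases hx with rfl | hx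
      · exact hz
      · exact h1 x hx
    · rw [RS_append] at h
      refine ⟨h.2.1, ?_⟩
      rw [Ideal.ofList_append, Ideal.ofList_singleton, ← sup_assoc] at h3
      exact h3

end P1

section P2

lemma exists_span_of_length (A : Type u) [CommRing A] (n : ℕ) : ∀ (M : Type v) [AddCommGroup M]
    [Module A M] (_ : Module.length A M ≤ n),
    ∃ s : Finset M, s.card ≤ n ∧ Submodule.span A (s : Set M) = ⊤ := by
  classical
  induction n with
  | zero =>
    intro M _ _ h
    have : Subsingleton M := by
      rw [← Module.length_eq_zero_iff (R := A)]
      simpa using h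
    exact ⟨∅, by simp, Subsingleton.elim _ _⟩
  | succ n ih =>
    intro M _ _ h
    by_cases hM : Subsingleton M
    · exact ⟨∅, by simp, Subsingleton.elim _ _⟩
    · rw [not_subsingleton_iff_nontrivial] at hM
      obtain ⟨x, hx⟩ := exists_ne (0 : M)
      have h1 := Module.length_eq_add_of_exact (A ∙ x).subtype (A ∙ x).mkQ
        (Submodule.subtype_injective _) (Submodule.mkQ_surjective _)
        (LinearMap.exact_subtype_mkQ _)
      have h2 : 1 ≤ Module.length A (A ∙ x) := by
        rw [Order.one_le_iff_ne_zero, Ne, Module.length_eq_zero_iff,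
          Submodule.subsingleton_iff_eq_bot, Submodule.span_singleton_eq_bot]
        exact hx
      have h3 : Module.length A (M ⧸ (A ∙ x)) ≤ n := by
        have h4 : Module.length A (M ⧸ (A ∙ x)) + 1 ≤ (n : ℕ∞) + 1 := by
          calc Module.length A (M ⧸ (A ∙ x)) + 1 ≤
              Module.length A (A ∙ x) + Module.length A (M ⧸ (A ∙ x)) := by
                rw [add_comm]; gcongr
            _ ≤ _ := by rw [← h1]; exact_mod_cast h
        exact (ENat.add_le_add_iff_right (by simp)).mp h4
      obtain ⟨s, hs, hs'⟩ := ih _ h3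
      have hsurj := Submodule.mkQ_surjective (A ∙ x)
      choose g hg using hsurj
      refine ⟨insert x (s.image g), ?_, ?_⟩
      · refine (Finset.card_insert_le _ _).trans ?_
        have := Finset.card_image_le (s := s) (f := g)
        omega
      · rw [Finset.coe_insert, Submodule.span_insert, eq_top_iff]
        have : (Submodule.span A (↑(s.image g) : Set M)).map (A ∙ x).mkQ = ⊤ := by
          rw [Submodule.map_span, ← hs', Finset.coe_image, ← Set.image_comp]
          congr 1
          ext y
          simp [hg]
        intro y _
        have hy : (A ∙ x).mkQ y ∈ (Submodule.span A (↑(s.image g) : Set M)).map (A ∙ x).mkQ := by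
          rw [this]; trivial
        obtain ⟨z, hz, hzy⟩ := hy
        have : y - z ∈ (A ∙ x) := by
          rw [← Submodule.Quotient.eq]; exact hzy.symm
        have := Submodule.add_mem_sup this hz
        simpa using this

variable {A : Type u} [CommRing A] [IsLocalRing A]

lemma length_le_of_span {M : Type v} [AddCommGroup M] [Module A M]
    (hM : ∀ a ∈ maximalIdeal A, ∀ x : M, a • x = 0) (s : Finset M)
    (hs : Submodule.span A (s : Set M) = ⊤) : Module.length A M ≤ s.card := by
  classical
  let f : M → (A ⧸ maximalIdeal A) →ₗ[A] M := fun x =>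
    (maximalIdeal A).liftQ (LinearMap.toSpanSingleton A M x) (by
      intro a ha
      simpa using hM a ha x)
  let F : (s → (A ⧸ maximalIdeal A)) →ₗ[A] M := LinearMap.lsum A _ A (fun i => f i.1)
  have hF : Function.Surjective F := by
    rw [← LinearMap.range_eq_top, eq_top_iff, ← hs, Submodule.span_le]
    intro x hx
    refine ⟨Pi.single ⟨x, hx⟩ ((maximalIdeal A).mkQ 1), ?_⟩
    simp only [F, LinearMap.lsum_piSingle]
    simp only [f]
    rw [Submodule.mkQ_apply, Submodule.liftQ_apply]
    simp
  have h1 := Module.length_le_of_surjective F hF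
  have h2 : IsSimpleModule A (A ⧸ maximalIdeal A) :=
    isSimpleModule_iff_isCoatom.mpr (maximalIdeal.isMaximal A).out
  rw [Module.length_pi_of_fintype] at h1
  simpa [Module.length_eq_one] using h1

lemma mem_socle_iff (K : Ideal A) (y : A ⧸ K) : y ∈ socle A K ↔ y ∈ socA K := by
  obtain ⟨y, rfl⟩ := Ideal.Quotient.mk_surjective y
  change _ ↔ K.mkQ y ∈ socA K
  rw [mk_mem_socA, socle, Submodule.mem_colon]
  constructor
  · intro h a ha
    have := h (Ideal.Quotient.mk K a) (Ideal.mem_map_of_mem _ ha)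
    rw [smul_eq_mul, ← map_mul, Submodule.mem_bot, Ideal.Quotient.eq_zero_iff_mem] at this
    rwa [mul_comm]
  · intro h p hp
    obtain ⟨a, ha, rfl⟩ := (Ideal.mem_map_iff_of_surjective _ Ideal.Quotient.mk_surjective).1 hp
    rw [smul_eq_mul, ← map_mul, Submodule.mem_bot, Ideal.Quotient.eq_zero_iff_mem, mul_comm]
    exact h a ha

lemma muE_socle (K : Ideal A) : muE (socle A K) = Module.length A (socA K) := by
  classical
  have hrs : ∀ s : Set (A ⧸ K), Submodule.span (A ⧸ K) s = socle A K ↔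
      Submodule.span A s = socA K := by
    intro s
    have e1 := Submodule.restrictScalars_span A (A ⧸ K) Ideal.Quotient.mk_surjective s
    have e2 : (socle A K).restrictScalars A = socA K := by
      ext y; exact mem_socle_iff K y
    rw [← e1, ← e2, Submodule.restrictScalars_inj]
  have hkill : ∀ a ∈ maximalIdeal A, ∀ x : socA K, a • x = 0 := by
    intro a ha x
    ext
    simpa using x.2 a ha
  apply le_antisymm
  · by_cases hn : Module.length A (socA K) = ⊤
    · rw [hn]; exact le_top
    obtain ⟨n, hn⟩ := ENat.ne_top_iff_exists.mp hn
    obtain ⟨s, hs, hs'⟩ := exists_span_of_length A n (socA K) hn.ge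
    refine sInf_le_of_le ⟨s.image (socA K).subtype, rfl, ?_⟩ ?_
    · rw [hrs, Finset.coe_image, ← Submodule.map_span, hs']
      simp
    · rw [← hn]
      exact_mod_cast Finset.card_image_le.trans hs
  · apply le_sInf
    rintro _ ⟨s, rfl, hs⟩
    rw [hrs] at hs
    have hsub : ∀ x ∈ s, x ∈ socA K := fun x hx => hs ▸ Submodule.subset_span hx
    have := length_le_of_span hkill (s.attach.image fun x => (⟨x.1, hsub _ x.2⟩ : socA K)) (by
      apply Submodule.map_injective_of_injective (socA K).injective_subtype
      rw [Submodule.map_span, Finset.coe_image, ← Set.image_comp]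
      simp only [Submodule.map_top, Submodule.range_subtype]
      refine Eq.trans ?_ hs
      congr 1
      ext y
      simp)
    refine this.trans ?_
    exact_mod_cast Finset.card_image_le.trans (by simp)

lemma dim_quot_succ_le {A : Type u} [CommRing A] {P Q : Ideal A} [P.IsPrime] (h : P < Q) :
    ringKrullDim (A ⧸ Q) + 1 ≤ ringKrullDim (A ⧸ P) := by
  obtain ⟨hle, x, hxQ, hxP⟩ := SetLike.lt_iff_le_and_exists.mp h
  have hx : Ideal.Quotient.mk P x ∈ nonZeroDivisors (A ⧸ P) := by
    rw [mem_nonZeroDivisors_iff_ne_zero, Ne, Ideal.Quotient.eq_zero_iff_mem]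
    exact hxP
  refine le_trans ?_ (ringKrullDim_quotient_succ_le_of_nonZeroDivisor hx)
  gcongr
  refine ringKrullDim_le_of_surjective
    (Ideal.Quotient.lift (Ideal.span {Ideal.Quotient.mk P x}) (Ideal.Quotient.factor hle) ?_) ?_
  · intro a ha
    obtain ⟨b, rfl⟩ := Ideal.mem_span_singleton'.mp ha
    rw [map_mul, Ideal.Quotient.factor_mk, Ideal.Quotient.eq_zero_iff_mem.mpr hxQ, mul_zero]
  · exact Ideal.Quotient.lift_surjective_of_surjective _ _ (Ideal.Quotient.factor_surjective hle)

variable [IsNoetherianRing A]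

lemma length_le_dim (ys : List A) : ∀ (K P : Ideal A) [P.IsPrime] (_ : ∀ y ∈ ys, y ∈ maximalIdeal A)
    (_ : RS K ys) (x : A) (_ : x ∉ K) (_ : ∀ a ∈ P, a * x ∈ K),
    (ys.length : WithBot ℕ∞) ≤ ringKrullDim (A ⧸ P) := by
  induction ys with
  | nil =>
    intro K P _ _ _ _ _ _
    have : Nontrivial (A ⧸ P) := Ideal.Quotient.nontrivial_iff.mpr (Ideal.IsPrime.ne_top ‹_›)
    simpa using ringKrullDim_nonneg_of_nontrivial
  | cons y ys ih =>
    intro K P hP hym hy x hx hPx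
    have hy1 : y ∈ maximalIdeal A := hym y (by simp)
    -- the submodule K : P
    let U : Ideal A := K.colon (P : Set A)
    have hU : ∀ z, z ∈ U ↔ ∀ a ∈ P, a * z ∈ K := by
      intro z
      simp only [U, Submodule.mem_colon, smul_eq_mul, SetLike.mem_coe, mul_comm]
    have hKU : K ≤ U := fun z hz => (hU z).2 fun a _ => K.mul_mem_left _ hz
    have hnot : ¬ U ≤ K ⊔ Ideal.span {y} := by
      intro hle
      have : U ≤ K ⊔ maximalIdeal A • U := by
        intro z hz
        obtain ⟨k, hk, m, hm, hkm⟩ := Submodule.mem_sup.mp (hle hz)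
        obtain ⟨c, rfl⟩ := Ideal.mem_span_singleton'.mp hm
        have hc : c ∈ U := by
          rw [hU]
          intro a ha
          apply hy.1
          have h1 := (hU z).1 hz a ha
          have h2 := K.mul_mem_left a hk
          convert sub_mem h1 h2 using 1
          rw [← hkm]; ring
        rw [← hkm, mul_comm c y]
        exact Submodule.add_mem_sup hk (Submodule.smul_mem_smul hy1 hc)
      have := Submodule.le_of_le_smul_of_le_jacobson_bot (IsNoetherian.noetherian U)
        (maximalIdeal_le_jacobson _) this
      exact hx (this ((hU x).2 hPx))
    obtain ⟨z, hzU, hz⟩ := SetLike.not_le_iff_exists.mp hnot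
    obtain ⟨Q, hQ, hQz⟩ := exists_assoc _ hz
    obtain ⟨hQp, w, hw, hQw⟩ := assoc_wit _ hQ
    have hlt : P < Q := by
      rw [SetLike.lt_iff_le_and_exists]
      refine ⟨fun a ha => hQz a (Ideal.mem_sup_left ((hU z).1 hzU a ha)), y, hQz y ?_, ?_⟩
      · exact Ideal.mul_mem_right _ _ (Ideal.mem_sup_right (Ideal.mem_span_singleton_self y))
      · intro hyP
        exact hx (hy.1 x (hPx y hyP))
    have := ih (K ⊔ Ideal.span {y}) Q (fun a ha => hym a (by simp [ha])) hy.2 w hw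
      (fun a ha => (hQw a).1 ha)
    refine le_trans ?_ (dim_quot_succ_le hlt)
    rw [List.length_cons]
    push_cast
    gcongr

lemma exists_RS_of_CM (hCM : IsCMLocalRing A) (d : ℕ) (hd : ringKrullDim A = d) :
    ∃ ys : List A, (∀ y ∈ ys, y ∈ maximalIdeal A) ∧ RS (⊥ : Ideal A) ys ∧ ys.length = d := by
  have h1 : qDepth A (⊥ : Ideal A) = d := by
    have : (qDepth A (⊥ : Ideal A) : WithBot ℕ∞) = (d : ℕ∞) := by
      rw [← hCM, rDim, hd]; rfl
    exact_mod_cast this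
  unfold qDepth mDepth at h1
  have : Nontrivial (A ⧸ (⊥ : Ideal A)) := Ideal.Quotient.nontrivial_iff.mpr bot_ne_top
  have hne : Nonempty {n : ℕ∞ | ∃ rs : List A,
    (∀ x ∈ rs, x ∈ maximalIdeal A) ∧
    RingTheory.Sequence.IsRegular (A ⧸ (⊥ : Ideal A)) rs ∧ (rs.length : ℕ∞) = n} :=
    ⟨⟨0, [], by simp, RingTheory.Sequence.IsRegular.nil _ _, by simp⟩⟩
  have hmem := ENat.sSup_mem_of_nonempty_of_lt_top (s := {n : ℕ∞ | ∃ rs : List A,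
    (∀ x ∈ rs, x ∈ maximalIdeal A) ∧
    RingTheory.Sequence.IsRegular (A ⧸ (⊥ : Ideal A)) rs ∧ (rs.length : ℕ∞) = n})
    (by rw [h1]; simp)
  rw [h1] at hmem
  obtain ⟨rs, hrs, hreg, hl⟩ := hmem
  exact ⟨rs, hrs, (RS_iff _ _).1 hreg.toIsWeaklyRegular, by exact_mod_cast hl⟩

lemma dim_quot_le_add (P : Ideal A) [P.IsPrime] (l : List A) (hl : ∀ y ∈ l, y ∈ maximalIdeal A)
    (J : Ideal A) (hJ : J ≤ P ⊔ Ideal.ofList l) :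
    ringKrullDim (A ⧸ P) ≤ ringKrullDim (A ⧸ J) + l.length := by
  classical
  have : IsLocalRing (A ⧸ P) :=
    have : Nontrivial (A ⧸ P) := Ideal.Quotient.nontrivial_iff.mpr (Ideal.IsPrime.ne_top ‹_›)
    IsLocalRing.of_surjective' (Ideal.Quotient.mk P) Ideal.Quotient.mk_surjective
  let s : Finset (A ⧸ P) := (l.map (Ideal.Quotient.mk P)).toFinset
  have h1 := ringKrullDim_le_ringKrullDim_quotient_add_card s (by
    intro x hx
    simp only [s, List.coe_toFinset, List.mem_map, Set.mem_ofPred_eq] at hx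
    obtain ⟨y, hy, rfl⟩ := hx
    rw [IsLocalRing.ringJacobson_eq_maximalIdeal, SetLike.mem_coe]
    rw [← IsLocalRing.map_maximalIdeal_of_surjective _ (Ideal.Quotient.mk_surjective (I := P))]
    exact Ideal.mem_map_of_mem _ (hl y hy))
  refine h1.trans ?_
  gcongr
  · refine ringKrullDim_le_of_surjective (Ideal.Quotient.lift J
      ((Ideal.Quotient.mk (Ideal.span (s : Set (A ⧸ P)))).comp (Ideal.Quotient.mk P)) ?_) ?_
    · intro a ha
      obtain ⟨b, hb, c, hc, rfl⟩ := Submodule.mem_sup.mp (hJ ha)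
      rw [RingHom.comp_apply, Ideal.Quotient.eq_zero_iff_mem, map_add,
        Ideal.Quotient.eq_zero_iff_mem.mpr hb, zero_add]
      have := Ideal.mem_map_of_mem (Ideal.Quotient.mk P) hc
      rw [Ideal.map_ofList] at this
      simpa [s, Ideal.ofList] using this
    · exact Ideal.Quotient.lift_surjective_of_surjective _ _
        (Ideal.Quotient.mk_surjective.comp Ideal.Quotient.mk_surjective)
  · refine (List.toFinset_card_le _).trans (by simp)

lemma RS_of_dim (hCM : IsCMLocalRing A) (d : ℕ) (hd : ringKrullDim A = d) (as : List A)
    (has : ∀ y ∈ as, y ∈ maximalIdeal A) (hdim : ringKrullDim (A ⧸ Ideal.ofList as) + as.length ≤ d) :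
    RS (⊥ : Ideal A) as := by
  obtain ⟨ys, hym, hys, hyl⟩ := exists_RS_of_CM hCM d hd
  have key : ∀ (post pre : List A), pre ++ post = as → RS ⊥ pre → RS (⊥ ⊔ Ideal.ofList pre) post := by
    intro post
    induction post with
    | nil => intro _ _ _; trivial
    | cons a post ih =>
      intro pre hpre hRS
      have ham : a ∈ maximalIdeal A := has a (by simp [← hpre])
      have hprem : ∀ y ∈ pre, y ∈ maximalIdeal A := fun y hy => has y (by simp [← hpre, hy])
      have hpostm : ∀ y ∈ post, y ∈ maximalIdeal A := fun y hy => has y (by simp [← hpre, hy])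
      have hlen : as.length = pre.length + (post.length + 1) := by simp [← hpre]
      have hnt : Nontrivial (A ⧸ Ideal.ofList as) := by
        apply Ideal.Quotient.nontrivial_iff.mpr
        intro h
        have : Ideal.ofList as ≤ maximalIdeal A := Ideal.span_le.mpr has
        rw [h, top_le_iff] at this
        exact (maximalIdeal.isMaximal A).ne_top this
      have hnn : (0 : WithBot ℕ∞) ≤ ringKrullDim (A ⧸ Ideal.ofList as) :=
        ringKrullDim_nonneg_of_nontrivial
      have hled : as.length ≤ d := by
        have : (as.length : WithBot ℕ∞) ≤ d := by
          refine le_trans ?_ hdim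
          exact le_add_of_nonneg_left hnn
        exact_mod_cast this
      obtain ⟨zs, hzm, hzl, hz⟩ := RS_extend (d - pre.length) ⊥ pre ys (by omega) hprem hym hRS hys
      have hnz : nzm (⊥ ⊔ Ideal.ofList pre) a := by
        apply nzm_of_not_mem_assoc
        intro P hP haP
        obtain ⟨hPp, w, hw, hPw⟩ := assoc_wit _ hP
        have h1 := length_le_dim zs _ P hzm hz w hw (fun a ha => (hPw a).1 ha)
        have h2 := dim_quot_le_add P post hpostm (Ideal.ofList as) (by
          rw [← hpre, Ideal.ofList_append, Ideal.ofList_cons]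
          refine sup_le ?_ (sup_le ?_ le_sup_right)
          · refine le_trans ?_ le_sup_left
            intro y hy
            rw [hPw]
            exact Ideal.mul_mem_right _ _ (Ideal.mem_sup_right hy)
          · rw [Ideal.span_singleton_le_iff_mem]
            exact Ideal.mem_sup_left haP)
        have h3 := h1.trans h2
        have h4 : ((zs.length + (pre.length + 1) : ℕ) : WithBot ℕ∞) ≤ d := by
          calc ((zs.length + (pre.length + 1) : ℕ) : WithBot ℕ∞)
              ≤ (ringKrullDim (A ⧸ Ideal.ofList as) + post.length) + (pre.length + 1) := by
                push_cast; gcongr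
            _ = ringKrullDim (A ⧸ Ideal.ofList as) + as.length := by
                rw [hlen]; push_cast; ring
            _ ≤ d := hdim
        have h5 : zs.length + (pre.length + 1) ≤ d := by exact_mod_cast h4
        omega
      refine ⟨hnz, ?_⟩
      have := ih (pre ++ [a]) (by simp [hpre]) ((RS_append _ _ _).2 ⟨hRS, hnz, trivial⟩)
      rwa [Ideal.ofList_append, Ideal.ofList_singleton, ← sup_assoc] at this
  have := key as [] rfl trivial
  simpa using this

lemma assoc_dim (hCM : IsCMLocalRing A) (d : ℕ) (hd : ringKrullDim A = d) (as : List A)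
    (has : ∀ y ∈ as, y ∈ maximalIdeal A) (hle : as.length ≤ d) (hRS : RS (⊥ : Ideal A) as)
    (P : Ideal A) (hP : P ∈ associatedPrimes A (A ⧸ Ideal.ofList as)) :
    (d : WithBot ℕ∞) ≤ ringKrullDim (A ⧸ P) + as.length := by
  obtain ⟨ys, hym, hys, hyl⟩ := exists_RS_of_CM hCM d hd
  obtain ⟨zs, hzm, hzl, hz⟩ := RS_extend (d - as.length) ⊥ as ys (by omega) has hym hRS hys
  rw [bot_sup_eq] at hz
  obtain ⟨hPp, w, hw, hPw⟩ := assoc_wit _ hP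
  have h1 := length_le_dim zs _ P hzm hz w hw (fun a ha => (hPw a).1 ha)
  have : (d : WithBot ℕ∞) = (zs.length : WithBot ℕ∞) + as.length := by
    rw [hzl]; norm_cast; omega
  rw [this]
  gcongr

end P2

section P3

lemma pow_sup_span_le {A : Type u} [CommRing A] (J : Ideal A) (x : A) (d : ℕ) :
    (J ⊔ Ideal.span {x}) ^ (d + 1) ≤
      J * (J ⊔ Ideal.span {x}) ^ d ⊔ Ideal.span {x ^ (d + 1)} := by
  induction d with
  | zero => simp
  | succ d ih =>
    rw [pow_succ (J ⊔ Ideal.span {x}) (d + 1), Ideal.mul_sup]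
    refine sup_le ?_ ?_
    · rw [mul_comm]; exact le_sup_left
    · refine (Ideal.mul_mono_left ih).trans ?_
      rw [Ideal.sup_mul]
      refine sup_le ?_ ?_
      · refine le_trans ?_ le_sup_left
        rw [mul_assoc]
        refine Ideal.mul_mono_right ?_
        rw [pow_succ]
        exact Ideal.mul_mono_right le_sup_right
      · rw [Ideal.span_singleton_mul_span_singleton, ← pow_succ]
        exact le_sup_right

lemma reduction_pow {A : Type u} [CommRing A] {J I : Ideal A} {r : ℕ} (h : I ^ (r + 1) = J * I ^ r)
    (d : ℕ) : I ^ (r + d) = J ^ d * I ^ r := by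
  induction d with
  | zero => simp
  | succ d ih =>
    rw [← add_assoc, pow_succ, ih, mul_assoc, ← pow_succ, h, pow_succ, mul_assoc]

lemma reduction_pow' {A : Type u} [CommRing A] {J I : Ideal A} {r : ℕ} (h : I ^ (r + 1) = J * I ^ r)
    (n : ℕ) (hn : r ≤ n) : I ^ (n + 1) = J * I ^ n := by
  obtain ⟨d, rfl⟩ := Nat.exists_eq_add_of_le hn
  rw [add_assoc, reduction_pow h, reduction_pow h, pow_succ', mul_assoc]

lemma isReduction_of_le {A : Type u} [CommRing A] [IsLocalRing A] [IsNoetherianRing A]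
    {J I : Ideal A} (hJ : J ≤ I) (r : ℕ)
    (h : I ^ (r + 1) ≤ J * I ^ r ⊔ maximalIdeal A * I ^ (r + 1)) : I ^ (r + 1) = J * I ^ r := by
  apply le_antisymm
  · exact Submodule.le_of_le_smul_of_le_jacobson_bot (IsNoetherian.noetherian _)
        (maximalIdeal_le_jacobson _) h
  · rw [pow_succ']; exact Ideal.mul_mono_left hJ

section mono
variable {A : Type u} [CommRing A] {σ : Type v}

lemma prod_mem_pow (I : Ideal A) (a : σ → A) (ha : ∀ i, a i ∈ I) (e : σ →₀ ℕ) :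
    (e.prod fun i n => a i ^ n) ∈ I ^ e.degree := by
  classical
  induction e using Finsupp.induction_linear with
  | zero => simp
  | add f g hf hg =>
    rw [Finsupp.prod_add_index' (by simp) (by intros; rw [pow_add]), map_add, pow_add]
    exact Ideal.mul_mem_mul hf hg
  | single i n => simpa using Ideal.pow_mem_pow (ha i) n

lemma prod_sub_prod_mem (I J : Ideal A) (hJ : J ≤ I) (a b : σ → A) (ha : ∀ i, a i ∈ I)
    (hab : ∀ i, a i - b i ∈ J) (d : ℕ) (e : σ →₀ ℕ) (he : e.degree = d + 1) :
    (e.prod fun i n => a i ^ n) - (e.prod fun i n => b i ^ n) ∈ J * I ^ d := by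
  classical
  have hb : ∀ i, b i ∈ I := fun i => by
    have := sub_mem (ha i) (hJ (hab i)); simpa using this
  have h1 : ∀ x y : A, x ∈ I → y ∈ I → x - y ∈ J → ∀ n : ℕ, x ^ (n + 1) - y ^ (n + 1) ∈ J * I ^ n := by
    intro x y hx hy hxy n
    induction n with
    | zero => simpa using hxy
    | succ n ih =>
      have : x ^ (n + 1 + 1) - y ^ (n + 1 + 1) = (x ^ (n + 1) - y ^ (n + 1)) * x +
        (x - y) * y ^ (n + 1) := by ring
      rw [this]
      refine add_mem ?_ (Ideal.mul_mem_mul hxy (Ideal.pow_mem_pow hy _))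
      rw [pow_succ, ← mul_assoc]
      exact Ideal.mul_mem_mul ih hx
  induction e using Finsupp.induction_linear generalizing d with
  | zero => simp at he
  | add f g hf hg =>
    rw [Finsupp.prod_add_index' (by simp) (by intros; rw [pow_add]),
      Finsupp.prod_add_index' (by simp) (by intros; rw [pow_add])]
    have e1 : (f.prod fun i n => a i ^ n) * (g.prod fun i n => a i ^ n) -
      (f.prod fun i n => b i ^ n) * (g.prod fun i n => b i ^ n) =
      (f.prod fun i n => a i ^ n) * ((g.prod fun i n => a i ^ n) - (g.prod fun i n => b i ^ n)) +
      ((f.prod fun i n => a i ^ n) - (f.prod fun i n => b i ^ n)) * (g.prod fun i n => b i ^ n) := by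
      ring
    rw [e1]
    rw [map_add] at he
    refine add_mem ?_ ?_
    · rcases hgd : g.degree with _ | n
      · have : g = 0 := (Finsupp.degree_eq_zero_iff _).mp hgd
        subst this; simp
      · have h2 := Ideal.mul_mem_mul (prod_mem_pow I a ha f) (hg n hgd)
        rw [mul_left_comm, ← pow_add] at h2
        convert h2 using 3
        omega
    · rcases hfd : f.degree with _ | n
      · have : f = 0 := (Finsupp.degree_eq_zero_iff _).mp hfd
        subst this; simp
      · have h2 := Ideal.mul_mem_mul (hf n hfd) (prod_mem_pow I b hb g)
        rw [mul_assoc, ← pow_add] at h2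
        convert h2 using 3
        omega
  | single i n =>
    have : n = d + 1 := by simpa using he
    subst this
    rw [Finsupp.prod_single_index (by simp), Finsupp.prod_single_index (by simp)]
    exact h1 _ _ (ha i) (hb i) (hab i) d

lemma aeval_sub_aeval_mem (I J : Ideal A) (hJ : J ≤ I) (a b : σ → A) (ha : ∀ i, a i ∈ I)
    (hab : ∀ i, a i - b i ∈ J) (d : ℕ) (P : MvPolynomial σ A) (hP : P.IsHomogeneous (d + 1)) :
    MvPolynomial.eval a P - MvPolynomial.eval b P ∈ J * I ^ d := by
  rw [MvPolynomial.eval_eq, MvPolynomial.eval_eq, ← Finset.sum_sub_distrib]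
  refine sum_mem fun e he => ?_
  rw [← mul_sub]
  refine Ideal.mul_mem_left _ _ ?_
  refine prod_sub_prod_mem I J hJ a b ha hab d e ?_
  have := hP (MvPolynomial.mem_support_iff.mp he)
  rw [Finsupp.degree_eq_weight_one]; exact this

lemma eval_smul_homog (P : MvPolynomial σ A) (d : ℕ) (hP : P.IsHomogeneous d) (c : σ → A) (t : A) :
    MvPolynomial.eval (fun i => c i * t) P = t ^ d * MvPolynomial.eval c P := by
  rw [MvPolynomial.eval_eq, MvPolynomial.eval_eq, Finset.mul_sum]
  refine Finset.sum_congr rfl fun e he => ?_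
  have hd : e.degree = d := by
    have := hP (MvPolynomial.mem_support_iff.mp he)
    rw [Finsupp.degree_eq_weight_one]; exact this
  simp only [mul_pow]
  rw [Finset.prod_mul_distrib, Finset.prod_pow_eq_pow_sum]
  rw [Finsupp.degree_apply] at hd
  rw [hd]; ring

end mono

variable {A : Type u} [CommRing A] [IsLocalRing A]

lemma drop_gen [IsNoetherianRing A] (hinf : Infinite (ResidueField A)) (I : Ideal A) (s : Finset A)
    (hred : IsReduction (Ideal.span (s : Set A)) I) (d : ℕ) (P : MvPolynomial s A)
    (hP : P.IsHomogeneous d) (hPx : MvPolynomial.eval (fun i : s => i.1) P ∈ maximalIdeal A * I ^ d)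
    (hPm : ∃ e, P.coeff e ∉ maximalIdeal A) :
    ∃ s' : Finset A, s'.card < s.card ∧ Ideal.span (s' : Set A) ≤ Ideal.span (s : Set A) ∧
      IsReduction (Ideal.span (s' : Set A)) I := by
  classical
  -- find a point
  obtain ⟨c, hc⟩ : ∃ c : s → A, IsUnit (MvPolynomial.eval c P) := by
    by_contra! hcon
    have : MvPolynomial.map (residue A) P = 0 := by
      apply MvPolynomial.funext
      intro y
      obtain ⟨c, rfl⟩ : ∃ c : s → A, residue A ∘ c = y :=
        ⟨fun i => (residue_surjective (y i)).choose,
          funext fun i => (residue_surjective (y i)).choose_spec⟩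
      rw [map_zero, ← MvPolynomial.map_eval, residue_eq_zero_iff]
      exact hcon c
    obtain ⟨e, he⟩ := hPm
    apply he
    rw [← residue_eq_zero_iff, ← MvPolynomial.coeff_map, this, MvPolynomial.coeff_zero]
  obtain ⟨r, hr⟩ := hred.2
  have hsI : ∀ i : s, i.1 ∈ I := fun i => hred.1 (Ideal.subset_span i.2)
  rcases d with _ | d
  · exfalso
    have hP' := MvPolynomial.totalDegree_eq_zero_iff_eq_C.mp (Nat.le_zero.mp hP.totalDegree_le)
    rw [hP'] at hc hPx
    simp only [MvPolynomial.eval_C, pow_zero, Ideal.one_eq_top, Ideal.mul_top] at hc hPx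
    exact hPx hc
  obtain ⟨j, hj⟩ : ∃ j, IsUnit (c j) := by
    by_contra! hcon
    have h1 := aeval_sub_aeval_mem (maximalIdeal A) (maximalIdeal A) le_rfl c 0
      (fun i => hcon i) (fun i => by simpa using hcon i) d P hP
    have h2 := eval_smul_homog P (d + 1) hP 0 0
    have h3 : MvPolynomial.eval 0 P = 0 := by simpa [Pi.zero_def] using h2
    rw [h3, sub_zero] at h1
    exact Ideal.mul_le_left h1 hc
  obtain ⟨v, hv⟩ := hj.exists_right_inv
  let t : A := v * j.1
  let f : A → A := fun y => if h : y ∈ s then y - c ⟨y, h⟩ * t else 0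
  have hf : ∀ i : s, f i.1 = i.1 - c i * t := fun i => by simp [f]
  have hfj : f j.1 = 0 := by
    rw [hf]; simp only [t]; linear_combination (-j.1) * hv
  let J' : Ideal A := Ideal.span (((s.erase j.1).image f : Finset A) : Set A)
  have hfJ' : ∀ i : s, i.1 - c i * t ∈ J' := by
    intro i
    rw [← hf]
    by_cases hij : i = j
    · rw [hij, hfj]; exact zero_mem _
    · refine Ideal.subset_span ?_
      simp only [Finset.coe_image, Set.mem_image, Finset.mem_coe, Finset.mem_erase]
      exact ⟨i.1, ⟨fun h => hij (Subtype.ext h), i.2⟩, rfl⟩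
  have hJ'J : J' ≤ Ideal.span (s : Set A) := by
    refine Ideal.span_le.mpr ?_
    rintro _ hy
    simp only [Finset.coe_image, Set.mem_image, Finset.mem_coe, Finset.mem_erase] at hy
    obtain ⟨y, ⟨_, hy⟩, rfl⟩ := hy
    have := hf ⟨y, hy⟩
    simp only at this
    rw [SetLike.mem_coe, this]
    exact sub_mem (Ideal.subset_span hy) (Ideal.mul_mem_left _ _ (Ideal.mul_mem_left _ _
      (Ideal.subset_span j.2)))
  have hJJ' : Ideal.span (s : Set A) ≤ J' ⊔ Ideal.span {t} := by
    refine Ideal.span_le.mpr fun y hy => ?_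
    have := Submodule.add_mem_sup (hfJ' ⟨y, hy⟩) (Ideal.mul_mem_left _ (c ⟨y, hy⟩) (Ideal.mem_span_singleton_self t))
    simpa using this
  have htJ : t ∈ Ideal.span (s : Set A) := Ideal.mul_mem_left _ _ (Ideal.subset_span j.2)
  have htd : t ^ (d + 1) ∈ J' * I ^ d ⊔ maximalIdeal A * I ^ (d + 1) := by
    have h1 := aeval_sub_aeval_mem I J' (hJ'J.trans hred.1) (fun i : s => i.1) (fun i => c i * t)
      hsI hfJ' d P hP
    rw [eval_smul_homog P (d + 1) hP] at h1
    have h2 : t ^ (d + 1) * MvPolynomial.eval c P ∈ J' * I ^ d ⊔ maximalIdeal A * I ^ (d + 1) := by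
      have := Submodule.add_mem_sup (neg_mem h1) hPx
      simpa using this
    obtain ⟨w, hw⟩ := hc.exists_right_inv
    have := Ideal.mul_mem_right w _ h2
    rwa [mul_assoc, hw, mul_one] at this
  refine ⟨(s.erase j.1).image f, ?_, hJ'J, hJ'J.trans hred.1, r + d, ?_⟩
  · exact Finset.card_image_le.trans_lt (Finset.card_erase_lt_of_mem j.2)
  · apply isReduction_of_le (hJ'J.trans hred.1)
    change I ^ (r + d + 1) ≤ J' * I ^ (r + d) ⊔ _
    have h1 : I ^ (r + d + 1) = Ideal.span (s : Set A) ^ (d + 1) * I ^ r := by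
      rw [add_assoc, reduction_pow hr]
    conv_lhs => rw [h1]
    have h2 : Ideal.span (s : Set A) ^ (d + 1) ≤ J' * I ^ d ⊔ maximalIdeal A * I ^ (d + 1) := by
      have h3 : J' ⊔ Ideal.span {t} ≤ I := by
        refine sup_le (hJ'J.trans hred.1) ?_
        rw [Ideal.span_singleton_le_iff_mem]
        exact hred.1 htJ
      refine (Ideal.pow_right_mono hJJ' _).trans ((pow_sup_span_le _ _ _).trans (sup_le ?_ ?_))
      · refine le_trans (Ideal.mul_mono_right (Ideal.pow_right_mono h3 d)) le_sup_left
      · rwa [Ideal.span_singleton_le_iff_mem]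
    refine (Ideal.mul_mono_left h2).trans ?_
    rw [Ideal.sup_mul, mul_assoc, mul_assoc, ← pow_add, ← pow_add]
    apply le_of_eq
    congr 3 <;> omega

end P3

section P4

lemma isIntegral_comp_surj {B C D : Type*} [CommRing B] [CommRing C] [CommRing D] (f : B →+* C)
    (hf : f.IsIntegral) (q : C →+* D) (hq : Function.Surjective q) : (q.comp f).IsIntegral :=
  RingHom.IsIntegral.trans _ _ hf (RingHom.isIntegral_of_surjective q hq)

lemma dim_le_of_integral {B C D : Type*} [CommRing B] [CommRing C] [CommRing D] (f : B →+* C)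
    (hf : f.IsIntegral)
    (g : B →+* D) (hg : Function.Surjective g) (hker : RingHom.ker f ≤ RingHom.ker g) :
    ringKrullDim D ≤ ringKrullDim C := by
  refine (ringKrullDim_le_of_surjective (Ideal.Quotient.lift (RingHom.ker f) g
    (fun a ha => hker ha)) (Ideal.Quotient.lift_surjective_of_surjective _ _ hg)).trans ?_
  let _ : Algebra (B ⧸ RingHom.ker f) C := (RingHom.kerLift f).toAlgebra
  have hinteg : Algebra.IsIntegral (B ⧸ RingHom.ker f) C := by
    rw [← algebraMap_isIntegral_iff]
    change (RingHom.kerLift f).IsIntegral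
    have : ((RingHom.kerLift f).comp (Ideal.Quotient.mk (RingHom.ker f))).IsIntegral := by
      have e : (RingHom.kerLift f).comp (Ideal.Quotient.mk (RingHom.ker f)) = f := by
        ext x; rfl
      rwa [e]
    exact RingHom.IsIntegral.tower_top _ _ this
  have hinj : Function.Injective (algebraMap (B ⧸ RingHom.ker f) C) := RingHom.kerLift_injective f
  unfold ringKrullDim Order.krullDim
  refine iSup_le fun l => ?_
  obtain ⟨Q, -, hQp, hQ⟩ := Ideal.exists_ideal_over_prime_of_isIntegral
    (S := C) (RelSeries.head l).asIdeal ⊥ (by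
    rw [← RingHom.ker_eq_comap_bot, (RingHom.injective_iff_ker_eq_bot _).mp hinj]; exact bot_le)
  have : Q.LiesOver (RelSeries.head l).asIdeal := ⟨hQ.symm⟩
  obtain ⟨L, hL, _⟩ := Ideal.exists_ltSeries_of_hasGoingUp l Q
  exact le_iSup_of_le L (by rw [hL])

variable {A : Type u} [CommRing A]

/-- the map `A[X] → Rees(I)` -/
noncomputable def psi (I : Ideal A) (s : Finset A) (hs : ∀ i : s, i.1 ∈ I) :
    MvPolynomial s A →ₐ[A] reesAlgebra I :=
  MvPolynomial.aeval fun i => ⟨Polynomial.monomial 1 i.1, by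
    rw [reesAlgebra.monomial_mem]; simpa using hs i⟩

lemma psi_integral (I : Ideal A) (hI : ∀ j, (I ^ j).FG) (s : Finset A) (hs : ∀ i : s, i.1 ∈ I) (r : ℕ)
    (hr : I ^ (r + 1) = Ideal.span (s : Set A) * I ^ r) :
    (psi I s hs : MvPolynomial s A →+* reesAlgebra I).IsIntegral := by
  classical
  let _ : Algebra (MvPolynomial s A) (reesAlgebra I) :=
    (psi I s hs : MvPolynomial s A →+* reesAlgebra I).toAlgebra
  have hsm : ∀ (p : MvPolynomial s A) (x : reesAlgebra I), p • x = psi I s hs p * x := fun p x => rfl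
  suffices h : Module.Finite (MvPolynomial s A) (reesAlgebra I) by
    have : Algebra.IsIntegral (MvPolynomial s A) (reesAlgebra I) := inferInstance
    exact (algebraMap_isIntegral_iff (R := MvPolynomial s A) (A := reesAlgebra I)).mpr this
  choose G hG using hI
  let mon : (j : ℕ) → (I ^ j : Ideal A) →ₗ[A] reesAlgebra I := fun j =>
    { toFun := fun b => ⟨Polynomial.monomial j b.1, by rw [reesAlgebra.monomial_mem]; exact b.2⟩
      map_add' := fun a b => by ext1; simp
      map_smul' := fun a b => by ext1; simp [Polynomial.smul_monomial] }
  let T : ℕ → Finset (reesAlgebra I) := fun j => (G j).attach.image fun b => mon j ⟨b.1, by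
    rw [← hG j]; exact Ideal.subset_span b.2⟩
  let N : Submodule (MvPolynomial s A) (reesAlgebra I) :=
    Submodule.span _ (((Finset.range (r + 1)).biUnion T : Finset _) : Set (reesAlgebra I))
  have hsm2 : ∀ (a : A) (x : reesAlgebra I), x ∈ N → a • x ∈ N := by
    intro a x hx
    have := N.smul_mem (MvPolynomial.C a) hx
    rw [hsm] at this
    rw [Algebra.smul_def]
    convert this using 2
    rw [← MvPolynomial.algebraMap_eq, AlgHom.commutes]
  have h1 : ∀ j ≤ r, ∀ b : (I ^ j : Ideal A), mon j b ∈ N := by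
    intro j hj
    let N' : Submodule A (reesAlgebra I) := 
      { carrier := N
        zero_mem' := N.zero_mem
        add_mem' := N.add_mem
        smul_mem' := hsm2 }
    have : Submodule.span A (((G j).attach.image fun b => (⟨b.1, by
      rw [← hG j]; exact Ideal.subset_span b.2⟩ : (I ^ j : Ideal A)) : Finset _) : Set (I ^ j : Ideal A)) = ⊤ := by
      apply Submodule.map_injective_of_injective (I ^ j : Ideal A).injective_subtype
      rw [Submodule.map_span, Finset.coe_image, ← Set.image_comp]
      simp only [Submodule.map_top, Submodule.range_subtype]
      refine Eq.trans ?_ (hG j)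
      congr 1
      ext y
      simp
    have h2 : (⊤ : Submodule A (I ^ j : Ideal A)) ≤ N'.comap (mon j) := by
      rw [← this, Submodule.span_le]
      intro b hb
      simp only [Finset.coe_image, Set.mem_image, Finset.mem_coe, Finset.mem_attach, true_and] at hb
      obtain ⟨c, rfl⟩ := hb
      refine Submodule.subset_span ?_
      simp only [Finset.coe_biUnion, Set.mem_iUnion, Finset.mem_coe, Finset.mem_range]
      exact ⟨j, by omega, Finset.mem_image.mpr ⟨c, by simp, rfl⟩⟩
    intro b
    exact h2 (Submodule.mem_top (x := b))
  have h2 : ∀ j, ∀ b : (I ^ j : Ideal A), mon j b ∈ N := by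
    intro j
    induction j with
    | zero => exact h1 0 (by omega)
    | succ j ih =>
      by_cases hj : j + 1 ≤ r
      · exact h1 _ hj
      rintro ⟨b, hb⟩
      have hb' := hb
      rw [reduction_pow' hr j (by omega)] at hb'
      have hle : Ideal.span (s : Set A) ≤ I := Ideal.span_le.mpr fun x hx => hs ⟨x, hx⟩
      have key0 : ∀ x ∈ Ideal.span (s : Set A), ∀ y ∈ I ^ j,
          ∃ hb : x * y ∈ I ^ (j + 1), mon (j + 1) ⟨x * y, hb⟩ ∈ N := by
        intro x hx y hy
        refine ⟨by rw [pow_succ']; exact Ideal.mul_mem_mul (hle hx) hy, ?_⟩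
        have : ∀ x, x ∈ Ideal.span (s : Set A) → ∀ hb : x * y ∈ I ^ (j + 1), mon (j + 1) ⟨x * y, hb⟩ ∈ N := by
          intro x hx
          refine Submodule.span_induction (p := fun x _ => ∀ hb : x * y ∈ I ^ (j + 1),
            mon (j + 1) ⟨x * y, hb⟩ ∈ N) ?_ ?_ ?_ ?_ hx
          · intro x hx hb
            have := N.smul_mem (MvPolynomial.X ⟨x, hx⟩) (ih ⟨y, hy⟩)
            rw [hsm] at this
            convert this using 1
            ext1
            simp [psi, mon, Polynomial.monomial_mul_monomial, add_comm]
          · intro hb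
            convert zero_mem N
            ext1; simp [mon]
          · intro x1 x2 hx1 hx2 h3 h4 hb
            have := add_mem (h3 (by rw [pow_succ']; exact Ideal.mul_mem_mul (hle hx1) hy))
              (h4 (by rw [pow_succ']; exact Ideal.mul_mem_mul (hle hx2) hy))
            rw [← map_add] at this
            convert this using 2
            ext1; simp [add_mul]
          · intro a x hx h3 hb
            have := hsm2 a _ (h3 (by rw [pow_succ']; exact Ideal.mul_mem_mul (hle hx) hy))
            rw [← map_smul] at this
            convert this using 2
            ext1; simp [mul_assoc]
        exact this x hx _
      have key : ∃ hb : b ∈ I ^ (j + 1), mon (j + 1) ⟨b, hb⟩ ∈ N := by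
        refine Submodule.mul_induction_on (C := fun b => ∃ hb : b ∈ I ^ (j + 1),
          mon (j + 1) ⟨b, hb⟩ ∈ N) hb' key0 ?_
        rintro x y ⟨h3, h4⟩ ⟨h5, h6⟩
        refine ⟨add_mem h3 h5, ?_⟩
        have := add_mem h4 h6
        rw [← map_add] at this
        exact this
      exact key.2
  refine ⟨⟨(Finset.range (r + 1)).biUnion T, ?_⟩⟩
  change N = ⊤
  rw [eq_top_iff]
  rintro ⟨f, hf⟩ _
  have hfc := (mem_reesAlgebra_iff I f).mp hf
  have : (⟨f, hf⟩ : reesAlgebra I) = ∑ j ∈ f.support, mon j ⟨f.coeff j, hfc j⟩ := by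
    ext1
    simp only [mon, LinearMap.coe_mk, AddHom.coe_mk]
    rw [AddSubmonoidClass.coe_finsetSum]
    exact f.as_sum_support
  rw [this]
  exact sum_mem fun j _ => h2 j _

lemma coeff_mem_of_mem_map (I m : Ideal A) (x : reesAlgebra I)
    (hx : x ∈ m.map (algebraMap A (reesAlgebra I))) : ∀ (d : ℕ), x.1.coeff d ∈ m * I ^ d := by
  refine Submodule.span_induction (p := fun x _ => ∀ d, x.1.coeff d ∈ m * I ^ d) ?_ ?_ ?_ ?_ hx
  · rintro _ ⟨a, ha, rfl⟩ d
    change (Polynomial.C a).coeff d ∈ _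
    rw [Polynomial.coeff_C]
    split_ifs with h
    · subst h; simpa using ha
    · exact zero_mem _
  · simp
  · intro x y _ _ h1 h2 d
    simpa using add_mem (h1 d) (h2 d)
  · intro a x _ h d
    change (a.1 * x.1).coeff d ∈ _
    rw [Polynomial.coeff_mul]
    refine sum_mem fun p hp => ?_
    have := Ideal.mul_mem_mul ((mem_reesAlgebra_iff I a.1).mp a.2 p.1) (h p.2)
    rw [mul_left_comm, ← pow_add, Finset.HasAntidiagonal.mem_antidiagonal.mp hp] at this
    exact this

lemma psi_coeff (I : Ideal A) (s : Finset A) (hs : ∀ i : s, i.1 ∈ I) (P : MvPolynomial s A) (d : ℕ) :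
    (psi I s hs P).1.coeff d =
      MvPolynomial.eval (fun i : s => i.1) (MvPolynomial.homogeneousComponent d P) := by
  have h1 : (psi I s hs P).1 =
      MvPolynomial.aeval (fun i : s => Polynomial.monomial 1 i.1) P := by
    have e : (reesAlgebra I).val.comp (psi I s hs) =
        MvPolynomial.aeval (fun i : s => Polynomial.monomial 1 i.1) := by
      apply MvPolynomial.algHom_ext
      intro i
      simp [psi]
    rw [← e]; rfl
  rw [h1]
  clear h1
  induction P using MvPolynomial.induction_on' with
  | monomial e c =>
    rw [MvPolynomial.aeval_monomial]
    have h2 : (e.prod fun i n => (Polynomial.monomial 1 i.1 : Polynomial A) ^ n) =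
      Polynomial.monomial e.degree (e.prod fun i n => i.1 ^ n) := by
      classical
      induction e using Finsupp.induction_linear with
      | zero => simp
      | add f g hf hg =>
        rw [Finsupp.prod_add_index' (by simp) (by intros; rw [pow_add]), hf, hg,
          Finsupp.prod_add_index' (by simp) (by intros; rw [pow_add]), map_add,
          Polynomial.monomial_mul_monomial]
      | single i n => simp [Polynomial.monomial_pow]
    rw [h2, Polynomial.algebraMap_eq, Polynomial.C_mul_monomial, Polynomial.coeff_monomial]
    split_ifs with h
    · rw [MvPolynomial.homogeneousComponent_of_mem
        ((MvPolynomial.mem_homogeneousSubmodule _ _).mpr (MvPolynomial.isHomogeneous_monomial c h)),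
        if_pos rfl, MvPolynomial.eval_monomial]
    · rw [MvPolynomial.homogeneousComponent_of_mem
        ((MvPolynomial.mem_homogeneousSubmodule _ _).mpr (MvPolynomial.isHomogeneous_monomial c rfl)),
        if_neg (Ne.symm h)]
      simp
  | add p q hp hq => simp [hp, hq]

variable [IsLocalRing A] [IsNoetherianRing A]

lemma card_le_dim_aux (I : Ideal A) (s : Finset A)
    (hred : IsReduction (Ideal.span (s : Set A)) I)
    (hP : ∀ (d : ℕ) (P : MvPolynomial s A), P.IsHomogeneous d →
      MvPolynomial.eval (fun i : s => i.1) P ∈ maximalIdeal A * I ^ d →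
      ∀ e, P.coeff e ∈ maximalIdeal A) (F : Type u) [CommRing F] (q : reesAlgebra I →+* F)
    (hq : Function.Surjective q) (hqk : ∀ x, q x = 0 → ∀ d, x.1.coeff d ∈ maximalIdeal A * I ^ d) :
    (s.card : WithBot ℕ∞) ≤ ringKrullDim F := by
  obtain ⟨r, hr⟩ := hred.2
  have hs : ∀ i : s, i.1 ∈ I := fun i => hred.1 (Ideal.subset_span i.2)
  have hinteg := psi_integral I (fun j => IsNoetherian.noetherian _) s hs r hr
  have hinteg2 := isIntegral_comp_surj _ hinteg q hq
  have hker : RingHom.ker (q.comp (psi I s hs : MvPolynomial s A →+* reesAlgebra I)) ≤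
      RingHom.ker (MvPolynomial.map (σ := s) (residue A)) := by
    intro P hPk
    rw [RingHom.mem_ker, RingHom.comp_apply] at hPk
    rw [RingHom.mem_ker]
    ext e
    rw [MvPolynomial.coeff_map, MvPolynomial.coeff_zero, residue_eq_zero_iff]
    have h2 := hqk _ hPk e.degree
    have h3 := hP e.degree (MvPolynomial.homogeneousComponent e.degree P)
      (MvPolynomial.homogeneousComponent_isHomogeneous _ _) (by rw [← psi_coeff I s hs]; exact h2) e
    rwa [MvPolynomial.coeff_homogeneousComponent, if_pos rfl] at h3
  have h1 := dim_le_of_integral (q.comp (psi I s hs : MvPolynomial s A →+* reesAlgebra I)) hinteg2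
    (MvPolynomial.map (σ := s) (residue A)) (MvPolynomial.map_surjective _ residue_surjective) hker
  refine le_trans ?_ h1
  rw [MvPolynomial.ringKrullDim_of_isNoetherianRing]
  simp

lemma card_le_fiberDim (I : Ideal A) (s : Finset A)
    (hred : IsReduction (Ideal.span (s : Set A)) I)
    (hP : ∀ (d : ℕ) (P : MvPolynomial s A), P.IsHomogeneous d →
      MvPolynomial.eval (fun i : s => i.1) P ∈ maximalIdeal A * I ^ d →
      ∀ e, P.coeff e ∈ maximalIdeal A) : (s.card : WithBot ℕ∞) ≤ fiberDim I :=
  card_le_dim_aux I s hred hP (↥(reesAlgebra I) ⧸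
    (Ideal.map (algebraMap A ↥(reesAlgebra I)) (maximalIdeal A))) (Ideal.Quotient.mk _)
    Ideal.Quotient.mk_surjective
    (fun x hx => coeff_mem_of_mem_map I _ x (Ideal.Quotient.eq_zero_iff_mem.mp hx))

lemma exists_dim_eq (A : Type u) [CommRing A] [IsLocalRing A] [IsNoetherianRing A] :
    ∃ k : ℕ, ringKrullDim A = k := by
  have h1 : ringKrullDim A < ⊤ := ringKrullDim_lt_top
  have h2 : 0 ≤ ringKrullDim A := ringKrullDim_nonneg_of_nontrivial
  generalize ringKrullDim A = x at *
  cases x with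
  | bot => simp at h2
  | coe x =>
    cases x with
    | top => exact absurd h1 (lt_irrefl _)
    | coe x => exact ⟨x, rfl⟩

lemma fiberDim_lt_top (I : Ideal A) : fiberDim I < ⊤ := by
  have hfg : Algebra.FiniteType A (reesAlgebra I) :=
    ((reesAlgebra I).fg_iff_finiteType).mp (reesAlgebra.fg (IsNoetherian.noetherian I))
  obtain ⟨n, f, hf⟩ := Algebra.FiniteType.iff_quotient_mvPolynomial''.mp hfg
  have h1 : fiberDim I ≤ ringKrullDim (MvPolynomial (Fin n) A) :=
    ringKrullDim_le_of_surjective ((Ideal.Quotient.mk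
    (Ideal.map (algebraMap A ↥(reesAlgebra I)) (maximalIdeal A))).comp (f : _ →+* _))
      (Ideal.Quotient.mk_surjective.comp hf)
  refine h1.trans_lt ?_
  rw [MvPolynomial.ringKrullDim_of_isNoetherianRing]
  obtain ⟨k, hk⟩ := exists_dim_eq A
  rw [hk]
  exact WithBot.coe_lt_coe.mpr (by exact_mod_cast ENat.natCast_lt_top (k + Nat.card (Fin n)))

lemma exists_small_reduction (hinf : Infinite (ResidueField A)) (I : Ideal A) (g : ℕ)
    (hg : fiberDim I = g) (n : ℕ) : ∀ (s : Finset A), s.card = n →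
    IsReduction (Ideal.span (s : Set A)) I →
    ∃ s' : Finset A, s'.card ≤ g ∧ Ideal.span (s' : Set A) ≤ Ideal.span (s : Set A) ∧
      IsReduction (Ideal.span (s' : Set A)) I := by
  induction n using Nat.strong_induction_on with
  | _ n ih =>
  intro s hn hred
  by_cases hsg : s.card ≤ g
  · exact ⟨s, hsg, le_rfl, hred⟩
  by_cases hP : ∀ (d : ℕ) (P : MvPolynomial s A), P.IsHomogeneous d → 
      MvPolynomial.eval (fun i : s => i.1) P ∈ maximalIdeal A * I ^ d →
      ∀ e, P.coeff e ∈ maximalIdeal A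
  · have := card_le_fiberDim I s hred hP
    rw [hg] at this
    exact absurd (by exact_mod_cast this) hsg
  push Not at hP
  obtain ⟨d, P, h1, h2, h3⟩ := hP
  obtain ⟨s', h4, h5, h6⟩ := drop_gen hinf I s hred d P h1 h2 h3
  obtain ⟨s'', h7, h8, h9⟩ := ih _ (hn ▸ h4) s' rfl h6
  exact ⟨s'', h7, h8.trans h5, h9⟩

end P4

section P5

lemma mem_span_range_mul {A : Type u} [CommRing A] {ι : Type*} [Fintype ι] (a : ι → A) (N : Ideal A)
    (x : A) (hx : x ∈ Ideal.span (Set.range a) * N) :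
    ∃ b : ι → A, (∀ i, b i ∈ N) ∧ x = ∑ i, a i * b i := by
  refine Submodule.mul_induction_on (C := fun x => ∃ b : ι → A, (∀ i, b i ∈ N) ∧ x = ∑ i, a i * b i)
    hx ?_ ?_
  · intro y hy z hz
    obtain ⟨c, rfl⟩ := Ideal.mem_span_range_iff_exists_fun.mp hy
    refine ⟨fun i => c i * z, fun i => N.mul_mem_left _ hz, ?_⟩
    rw [Finset.sum_mul]
    exact Finset.sum_congr rfl fun i _ => by ring
  · rintro x y ⟨b, hb, rfl⟩ ⟨c, hc, rfl⟩
    exact ⟨fun i => b i + c i, fun i => add_mem (hb i) (hc i), by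
      rw [← Finset.sum_add_distrib]; exact Finset.sum_congr rfl fun i _ => by ring⟩

/-- the elements attached to a coefficient matrix -/
def lin {A : Type u} [CommRing A] {ι κ : Type} [Fintype κ] (f : κ → A) (c : ι × κ → A) (i : ι) : A :=
  ∑ j, c (i, j) * f j

lemma lin_mem {A : Type u} [CommRing A] {ι κ : Type} [Fintype κ] (f : κ → A) (I : Ideal A)
    (hf : ∀ j, f j ∈ I) (c : ι × κ → A) (i : ι) : lin f c i ∈ I :=
  sum_mem fun j _ => I.mul_mem_left _ (hf j)

lemma open_reduction {A : Type u} [CommRing A] {ι κ : Type} [Fintype ι] [Fintype κ]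
    (I : Ideal A) (f : κ → A) (hf : ∀ j, f j ∈ I) (n : ℕ) (hfg : (I ^ (n + 1)).FG)
    (c0 : ι × κ → A) (h0 : I ^ (n + 1) ≤ Ideal.span (Set.range (lin f c0)) * I ^ n) :
    ∃ P : MvPolynomial (ι × κ) A, MvPolynomial.eval c0 P = 1 ∧ ∀ c, IsUnit (MvPolynomial.eval c P) →
      I ^ (n + 1) ≤ Ideal.span (Set.range (lin f c)) * I ^ n := by
  classical
  obtain ⟨s, hs⟩ := hfg
  let e : s → A := Subtype.val
  have he : Ideal.span (Set.range e) = I ^ (n + 1) := by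
    rw [← hs, Subtype.range_coe]
  have hemem : ∀ k, e k ∈ I ^ (n + 1) := fun k => he ▸ Ideal.subset_span ⟨k, rfl⟩
  have h1 := fun k => mem_span_range_mul (lin f c0) (I ^ n) (e k) (h0 (hemem k))
  choose b hb hbe using h1
  have h2 : ∀ k i j, ∃ d : s → A, ∑ l, d l * e l = f j * b k i := by
    intro k i j
    rw [← Ideal.mem_span_range_iff_exists_fun, he, pow_succ']
    exact Ideal.mul_mem_mul (hf j) (hb k i)
  choose d hd using h2
  let M : Matrix s s (MvPolynomial (ι × κ) A) := 1 + Matrix.of fun k l =>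
    ∑ i, ∑ j, (MvPolynomial.X (i, j) - MvPolynomial.C (c0 (i, j))) * MvPolynomial.C (d k i j l)
  have hM : ∀ c, (M.map (MvPolynomial.eval c)) = 1 + Matrix.of fun k l =>
      ∑ i, ∑ j, (c (i, j) - c0 (i, j)) * d k i j l := by
    intro c
    ext k l
    simp [M, Matrix.one_apply, apply_ite]
  have hdet : ∀ c, MvPolynomial.eval c M.det = (M.map (MvPolynomial.eval c)).det := by
    intro c
    rw [RingHom.map_det]; rfl
  refine ⟨M.det, ?_, ?_⟩
  · rw [hdet, hM]
    have : (Matrix.of fun k l : s => ∑ i, ∑ j, (c0 (i, j) - c0 (i, j)) * d k i j l) = 0 := by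
      ext k l; simp
    rw [this, add_zero, Matrix.det_one]
  · intro c hc
    rw [hdet] at hc
    set Mc := M.map (MvPolynomial.eval c) with hMc
    have h3 : ∀ k, (Mc.mulVec e) k = ∑ i, lin f c i * b k i := by
      intro k
      rw [hMc, hM, Matrix.add_mulVec, Matrix.one_mulVec, Pi.add_apply]
      have : (Matrix.mulVec (Matrix.of fun k l : s => ∑ i, ∑ j, (c (i, j) - c0 (i, j)) * d k i j l) e) k =
          ∑ i, ∑ j, (c (i, j) - c0 (i, j)) * (f j * b k i) := by
        simp only [Matrix.mulVec, dotProduct, Matrix.of_apply]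
        simp only [Finset.sum_mul]
        rw [Finset.sum_comm]
        refine Finset.sum_congr rfl fun i _ => ?_
        rw [Finset.sum_comm]
        refine Finset.sum_congr rfl fun j _ => ?_
        rw [← hd k i j, Finset.mul_sum]
        exact Finset.sum_congr rfl fun l _ => by ring
      rw [this, hbe k, ← Finset.sum_add_distrib]
      refine Finset.sum_congr rfl fun i _ => ?_
      simp only [lin, Finset.sum_mul]
      rw [← Finset.sum_add_distrib]
      exact Finset.sum_congr rfl fun j _ => by ring
    have h4 : e = Mc⁻¹.mulVec (Mc.mulVec e) := by
      rw [Matrix.mulVec_mulVec, Matrix.nonsing_inv_mul _ hc, Matrix.one_mulVec]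
    rw [← he, Ideal.span_le]
    rintro _ ⟨k, rfl⟩
    rw [SetLike.mem_coe, h4]
    simp only [Matrix.mulVec, dotProduct]
    refine sum_mem fun l _ => Ideal.mul_mem_left _ _ ?_
    have := h3 l
    simp only [Matrix.mulVec, dotProduct] at this
    rw [this]
    exact sum_mem fun i _ => Ideal.mul_mem_mul (Ideal.subset_span ⟨i, rfl⟩) (hb l i)

variable {A : Type u} [CommRing A] [IsLocalRing A] [IsNoetherianRing A]

lemma uniform_reduction {ι κ : Type} [Fintype ι] [Fintype κ]
    (I : Ideal A) (f : κ → A) (hf : ∀ j, f j ∈ I) :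
    ∃ N : ℕ, ∀ n, ∀ c : ι × κ → A, I ^ (n + 1) ≤ Ideal.span (Set.range (lin f c)) * I ^ n →
      I ^ (N + 1) ≤ Ideal.span (Set.range (lin f c)) * I ^ N := by
  let U : ℕ → Set (MvPolynomial (ι × κ) (ResidueField A)) := fun n =>
    {P | ∀ c : ι × κ → A, MvPolynomial.eval (residue A ∘ c) P ≠ 0 →
      I ^ (n + 1) ≤ Ideal.span (Set.range (lin f c)) * I ^ n}
  have hmono : ∀ (c : ι × κ → A) (n m : ℕ), n ≤ m →
      I ^ (n + 1) ≤ Ideal.span (Set.range (lin f c)) * I ^ n →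
      I ^ (m + 1) ≤ Ideal.span (Set.range (lin f c)) * I ^ m := by
    intro c n m hnm h
    obtain ⟨k, rfl⟩ := Nat.exists_eq_add_of_le hnm
    have := Ideal.mul_mono_left (I := I ^ (n+1)) (K := I ^ k) h
    rw [mul_assoc, ← pow_add, ← pow_add] at this
    convert this using 2
    ring
  let D : ℕ →o Ideal (MvPolynomial (ι × κ) (ResidueField A)) :=
    ⟨fun n => Ideal.span (U n), fun n m hnm => Ideal.span_mono fun P hP c hc =>
      hmono c n m hnm (hP c hc)⟩
  obtain ⟨N, hN⟩ := monotone_stabilizes_iff_noetherian.mpr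
    (inferInstance : IsNoetherian (MvPolynomial (ι × κ) (ResidueField A)) _) D
  refine ⟨N, fun n c hc => ?_⟩
  by_cases hnN : n ≤ N
  · exact hmono c n N hnN hc
  obtain ⟨P, hP1, hP2⟩ := open_reduction I f hf n (IsNoetherian.noetherian _) c hc
  have hPU : MvPolynomial.map (residue A) P ∈ U n := by
    intro c' hc'
    apply hP2
    rw [← MvPolynomial.map_eval] at hc'
    exact (residue_ne_zero_iff_isUnit _).mp hc'
  have hPD : MvPolynomial.map (residue A) P ∈ Ideal.span (U N) := by
    have := hN n (by omega)
    change Ideal.span (U N) = Ideal.span (U n) at this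
    rw [this]; exact Ideal.subset_span hPU
  by_contra hcon
  have hle : Ideal.span (U N) ≤ RingHom.ker (MvPolynomial.eval (residue A ∘ c)) := by
    rw [Ideal.span_le]
    intro Q hQ
    rw [SetLike.mem_coe, RingHom.mem_ker]
    by_contra hne
    exact hcon (hQ c hne)
  have := hle hPD
  rw [RingHom.mem_ker, ← MvPolynomial.map_eval, hP1, map_one] at this
  exact one_ne_zero this

/-- reductions along a line -/
lemma line_reduction {ι : Type} [Fintype ι] (I : Ideal A) (a δ : ι → A) (ha : ∀ i, a i ∈ I)
    (hδ : ∀ i, δ i ∈ I) (hred : IsReduction (Ideal.span (Set.range a)) I) :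
    ∃ p : Polynomial (ResidueField A), p ≠ 0 ∧ ∀ w : A, p.eval (residue A w) ≠ 0 →
      IsReduction (Ideal.span (Set.range fun i => a i + w * δ i)) I := by
  classical
  obtain ⟨n, hn⟩ := hred.2
  let κ := ι × Bool
  let f : ι × Bool → A := fun j => if j.2 then a j.1 else δ j.1
  let c : A → (ι × (ι × Bool)) → A := fun w p => if p.1 = p.2.1 then (if p.2.2 then 1 else w) else 0
  have hlin : ∀ w, lin f (c w) = fun i => a i + w * δ i := by
    intro w
    ext i
    simp [lin, f, c, Fintype.sum_prod_type, Finset.sum_add_distrib]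
  have hf : ∀ j, f j ∈ I := by
    rintro ⟨j, _ | _⟩ <;> simp [f, ha, hδ]
  obtain ⟨P, hP1, hP2⟩ := open_reduction I f hf n (IsNoetherian.noetherian _) (c 0) (by
    rw [hlin]; simpa using hn.le)
  let γ : (ι × (ι × Bool)) → Polynomial A := fun p =>
    if p.1 = p.2.1 then (if p.2.2 then 1 else Polynomial.X) else 0
  let q : Polynomial A := MvPolynomial.aeval γ P
  have hq : ∀ w, q.eval w = MvPolynomial.eval (c w) P := by
    intro w
    have : (Polynomial.aeval w : Polynomial A →ₐ[A] A).comp (MvPolynomial.aeval γ) =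
        MvPolynomial.aeval (c w) := by
      apply MvPolynomial.algHom_ext
      intro i
      simp only [AlgHom.comp_apply, MvPolynomial.aeval_X, γ, c]
      split_ifs <;> simp
    have h2 := DFunLike.congr_fun this P
    rw [AlgHom.comp_apply, Polynomial.coe_aeval_eq_eval] at h2
    rw [← MvPolynomial.aeval_eq_eval]
    exact h2
  refine ⟨q.map (residue A), ?_, ?_⟩
  · intro h0
    have := hq 0
    rw [hP1] at this
    have h2 : (q.map (residue A)).eval (residue A 0) = 1 := by
      rw [Polynomial.eval_map_apply, this, map_one]
    rw [h0] at h2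
    simp at h2
  · intro w hw
    rw [Polynomial.eval_map_apply, hq] at hw
    have h3 := hP2 (c w) ((residue_ne_zero_iff_isUnit _).mp hw)
    rw [hlin] at h3
    have hle : Ideal.span (Set.range fun i => a i + w * δ i) ≤ I := by
      rw [Ideal.span_le]
      rintro _ ⟨i, rfl⟩
      exact add_mem (ha i) (I.mul_mem_left _ (hδ i))
    refine ⟨hle, n, le_antisymm h3 ?_⟩
    rw [pow_succ']
    exact Ideal.mul_mono_left hle

end P5

section P6

variable {A : Type u} [CommRing A]

lemma pow_le_of_reduction {J I : Ideal A} {n : ℕ} (h : I ^ (n + 1) = J * I ^ n) : I ^ (n + 1) ≤ J := by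
  rw [h]; exact Ideal.mul_le_left (I := J) (J := I ^ n)

lemma le_prime_of_reduction {J I : Ideal A} (h : IsReduction J I) (p : Ideal A) [p.IsPrime]
    (hJ : J ≤ p) : I ≤ p := by
  obtain ⟨n, hn⟩ := h.2
  exact (Ideal.IsPrime.pow_le_iff (Nat.succ_ne_zero n)).mp ((pow_le_of_reduction hn).trans hJ)

lemma minimalPrimes_of_reduction {J I : Ideal A} (h : IsReduction J I) :
    J.minimalPrimes = I.minimalPrimes := by
  have : {p : Ideal A | p.IsPrime ∧ J ≤ p} = {p | p.IsPrime ∧ I ≤ p} := by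
    ext p
    constructor
    · rintro ⟨hp, h1⟩; exact ⟨hp, le_prime_of_reduction h p h1⟩
    · rintro ⟨hp, h1⟩; exact ⟨hp, h.1.trans h1⟩
  have h2 : (fun p : Ideal A => p.IsPrime ∧ J ≤ p) = fun p => p.IsPrime ∧ I ≤ p := this
  change {p | Minimal (fun p : Ideal A => p.IsPrime ∧ J ≤ p) p} = {p | Minimal (fun p => p.IsPrime ∧ I ≤ p) p}
  rw [h2]

variable [IsLocalRing A] [IsNoetherianRing A]

lemma equi_setup (I : Ideal A) (hequi : fiberDim I = ht I) :
    I ≤ maximalIdeal A ∧ ∃ g : ℕ, fiberDim I = g ∧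
      ∀ p : Ideal A, p.IsPrime → I ≤ p → (g : ℕ∞) ≤ p.height := by
  have h1 := fiberDim_lt_top I
  rw [hequi] at h1
  have hne : I ≤ maximalIdeal A := by
    by_contra hcon
    have : ht I = ⊤ := by
      unfold ht
      rw [iInf_eq_top]
      intro p
      rw [iInf_eq_top]
      intro hp
      exact absurd (hp.trans (le_maximalIdeal p.2.ne_top)) hcon
    rw [this] at h1
    exact lt_irrefl _ h1
  refine ⟨hne, ?_⟩
  have h2 : 0 ≤ ht I := by
    unfold ht
    refine le_iInf fun p => le_iInf fun _ => ?_
    exact ringKrullDim_nonneg_of_nontrivial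
  obtain ⟨g, hg⟩ : ∃ g : ℕ, ht I = g := by
    generalize ht I = x at *
    cases x with
    | bot => simp at h2
    | coe x =>
      cases x with
      | top => exact absurd h1 (lt_irrefl _)
      | coe x => exact ⟨x, rfl⟩
  refine ⟨g, by rw [hequi, hg], fun p hp hIp => ?_⟩
  have h3 : ht I ≤ rDim (Localization.AtPrime p) := iInf₂_le (⟨p, hp⟩ : PrimeSpectrum A) hIp
  rw [hg, rDim, IsLocalization.AtPrime.ringKrullDim_eq_height p] at h3
  exact_mod_cast h3

lemma height_le_card_of_reduction {I : Ideal A} (s : Finset A)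
    (h : IsReduction (Ideal.span (s : Set A)) I) (p : Ideal A) (hp : p ∈ I.minimalPrimes) :
    p.height ≤ s.card := by
  have hp1 : p.IsPrime := hp.1.1
  rw [← minimalPrimes_of_reduction h] at hp
  exact Ideal.height_le_card_of_mem_minimalPrimes_span_finset hp

section
variable {I : Ideal A} {g : ℕ}

lemma le_card_of_reduction (hI : I ≤ maximalIdeal A)
    (hht : ∀ p : Ideal A, p.IsPrime → I ≤ p → (g : ℕ∞) ≤ p.height)
    (s : Finset A) (h : IsReduction (Ideal.span (s : Set A)) I) :
    g ≤ s.card := by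
  obtain ⟨p, hp⟩ := I.nonempty_minimalPrimes (fun h => (maximalIdeal.isMaximal A).ne_top
    (top_le_iff.mp (h ▸ hI)))
  have h1 := (hht p hp.1.1 hp.1.2).trans (height_le_card_of_reduction s h p hp)
  exact_mod_cast h1

lemma isMinimalReduction_of_card (hI : I ≤ maximalIdeal A)
    (hht : ∀ p : Ideal A, p.IsPrime → I ≤ p → (g : ℕ∞) ≤ p.height)
    (s : Finset A) (hs : s.card ≤ g)
    (h : IsReduction (Ideal.span (s : Set A)) I) : IsMinimalReduction (Ideal.span (s : Set A)) I := by
  classical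
  refine ⟨h, fun J' hJ' hle => le_antisymm hle ?_⟩
  set J := Ideal.span (s : Set A) with hJ
  let m := maximalIdeal A
  let K : Submodule A J := m • ⊤
  let W : Submodule A (J ⧸ K) := (Submodule.comap J.subtype J').map K.mkQ
  have hkill : ∀ a ∈ maximalIdeal A, ∀ x : J ⧸ K, a • x = 0 := by
    intro a ha x
    obtain ⟨y, rfl⟩ := K.mkQ_surjective x
    rw [← map_smul, Submodule.mkQ_apply, Submodule.Quotient.mk_eq_zero]
    exact Submodule.smul_mem_smul ha trivial
  have hlen : Module.length A (J ⧸ K) ≤ g := by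
    have h1 := length_le_of_span hkill ((s.attach.image fun x => (⟨x.1, Ideal.subset_span x.2⟩ : J)).image K.mkQ) (by
      rw [Finset.coe_image, ← Submodule.map_span]
      have : Submodule.span A ((s.attach.image fun x => (⟨x.1, Ideal.subset_span x.2⟩ : J) : Finset J) : Set J) = ⊤ := by
        apply Submodule.map_injective_of_injective J.injective_subtype
        rw [Submodule.map_span, Finset.coe_image, ← Set.image_comp]
        simp only [Submodule.map_top, Submodule.range_subtype]
        refine Eq.trans ?_ hJ.symm
        congr 1
        ext y
        simp
      rw [this, Submodule.map_top, Submodule.range_mkQ])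
    refine h1.trans ?_
    have h2 : (((s.attach.image fun x => (⟨x.1, Ideal.subset_span x.2⟩ : J)).image K.mkQ)).card ≤ g :=
      Finset.card_image_le.trans (Finset.card_image_le.trans (by simpa using hs))
    exact_mod_cast h2
  by_cases hW : W = ⊤
  · have h1 : J ≤ J' ⊔ m • J := by
      intro x hx
      have : K.mkQ ⟨x, hx⟩ ∈ W := by rw [hW]; trivial
      obtain ⟨y, hy, hxy⟩ := this
      have h3 : (⟨x, hx⟩ : J) - y ∈ K := by
        rw [← Submodule.Quotient.eq]; exact hxy.symm
      have h4 : x - y.1 ∈ m • J := by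
        have := Submodule.mem_map_of_mem (f := J.subtype) h3
        rw [Submodule.map_smul''] at this
        simpa using this
      have := Submodule.add_mem_sup (show y.1 ∈ J' from hy) h4
      simpa using this
    exact Submodule.le_of_le_smul_of_le_jacobson_bot (IsNoetherian.noetherian _)
        (maximalIdeal_le_jacobson _) h1
  · exfalso
    have hfin : Module.length A (J ⧸ K) ≠ ⊤ := fun h => by rw [h] at hlen; simp at hlen
    have hWlt : Module.length A W < Module.length A (J ⧸ K) := by
      have h1 := Module.length_eq_add_of_exact W.subtype W.mkQ W.injective_subtype W.mkQ_surjective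
        (LinearMap.exact_subtype_mkQ _)
      rw [h1] at hfin ⊢
      have h3 : Module.length A ((J ⧸ K) ⧸ W) ≠ 0 := by
        rw [Ne, Module.length_eq_zero_iff, Submodule.Quotient.subsingleton_iff]
        exact hW
      rw [add_comm]
      exact ENat.lt_add_left (fun h => hfin (by rw [h, top_add])) (pos_iff_ne_zero.mpr h3)
    obtain ⟨n, hn⟩ := ENat.ne_top_iff_exists.mp (ne_top_of_lt hWlt)
    have hng : n < g := by
      have := hWlt.trans_le hlen
      rw [← hn] at this
      exact_mod_cast this
    obtain ⟨t, ht, ht'⟩ := exists_span_of_length A n W hn.ge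
    have hlift : ∀ w : W, ∃ y : J, y.1 ∈ J' ∧ K.mkQ y = w.1 := by
      rintro ⟨w, y, hy, rfl⟩
      exact ⟨y, hy, rfl⟩
    choose φ hφ1 hφ2 using hlift
    let K' : Ideal A := Ideal.span ((t.image fun w => (φ w).1 : Finset A) : Set A)
    have hK'J' : K' ≤ J' := by
      rw [Ideal.span_le]
      intro x hx
      simp only [Finset.coe_image, Set.mem_image] at hx
      obtain ⟨w, _, rfl⟩ := hx
      exact hφ1 w
    have hJ'K' : J' ≤ K' ⊔ m * J := by
      intro x hx
      have hxW : K.mkQ ⟨x, hle hx⟩ ∈ W := ⟨⟨x, hle hx⟩, hx, rfl⟩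
      have h5 : (⟨K.mkQ ⟨x, hle hx⟩, hxW⟩ : W) ∈ Submodule.span A (t : Set W) := by rw [ht']; trivial
      have h6 : ∀ w : W, w ∈ Submodule.span A (t : Set W) → ∃ y : J, y.1 ∈ K' ∧ K.mkQ y = w.1 := by
        intro w hw
        refine Submodule.span_induction (p := fun w _ => ∃ y : J, y.1 ∈ K' ∧ K.mkQ y = w.1) ?_ ?_ ?_ ?_ hw
        · intro w hw
          exact ⟨φ w, Ideal.subset_span (by
            simp only [Finset.coe_image, Set.mem_image]; exact ⟨w, hw, rfl⟩), hφ2 w⟩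
        · exact ⟨0, zero_mem _, by simp⟩
        · rintro x y _ _ ⟨x', hx', hx''⟩ ⟨y', hy', hy''⟩
          exact ⟨x' + y', add_mem hx' hy', by rw [map_add, hx'', hy'']; rfl⟩
        · rintro a x _ ⟨x', hx', hx''⟩
          exact ⟨a • x', Ideal.mul_mem_left _ _ hx', by rw [map_smul, hx'']; rfl⟩
      obtain ⟨y, hy, hxy⟩ := h6 _ h5
      have h3 : (⟨x, hle hx⟩ : J) - y ∈ K := by
        rw [← Submodule.Quotient.eq]; exact hxy.symm
      have h4 : x - y.1 ∈ m • J := by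
        have := Submodule.mem_map_of_mem (f := J.subtype) h3
        rw [Submodule.map_smul''] at this
        simpa using this
      have := Submodule.add_mem_sup hy h4
      simpa using this
    have hK'red : IsReduction K' I := by
      obtain ⟨r, hr⟩ := hJ'.2
      refine ⟨hK'J'.trans hJ'.1, r, isReduction_of_le (hK'J'.trans hJ'.1) r ?_⟩
      conv_lhs => rw [hr]
      refine (Ideal.mul_mono_left hJ'K').trans ?_
      rw [Ideal.sup_mul, mul_assoc, pow_succ']
      exact sup_le_sup le_rfl (Ideal.mul_mono_right (Ideal.mul_mono_left h.1))
    have := le_card_of_reduction hI hht _ hK'red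
    have h9 : (t.image fun w => (φ w).1).card ≤ n := Finset.card_image_le.trans ht
    omega

lemma isMinimalReduction_of_fun (hI : I ≤ maximalIdeal A)
    (hht : ∀ p : Ideal A, p.IsPrime → I ≤ p → (g : ℕ∞) ≤ p.height)
    (a : Fin g → A) (h : IsReduction (Ideal.span (Set.range a)) I) :
    IsMinimalReduction (Ideal.span (Set.range a)) I := by
  classical
  have e : Ideal.span (Set.range a) = Ideal.span ((Finset.univ.image a : Finset A) : Set A) := by simp
  rw [e] at h ⊢
  exact isMinimalReduction_of_card hI hht _ (Finset.card_image_le.trans (by simp)) h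


lemma exists_fun_of_isReduction (hI : I ≤ maximalIdeal A) (hg : fiberDim I = g)
    (hht : ∀ p : Ideal A, p.IsPrime → I ≤ p → (g : ℕ∞) ≤ p.height)
    (hinf : Infinite (ResidueField A)) (J : Ideal A)
    (hJ : IsReduction J I) : ∃ a : Fin g → A, Ideal.span (Set.range a) ≤ J ∧
      IsReduction (Ideal.span (Set.range a)) I := by
  obtain ⟨s, hs⟩ := IsNoetherian.noetherian J
  change Ideal.span _ = _ at hs
  rw [← hs] at hJ
  obtain ⟨s', h1, h2, h3⟩ := exists_small_reduction hinf I g hg _ s rfl hJ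
  have h4 := le_card_of_reduction hI hht s' h3
  have h5 : s'.card = g := le_antisymm h1 h4
  let a : Fin g → A := fun i => (s'.equivFinOfCardEq h5).symm i
  have ha : Set.range a = s' := by
    ext x
    constructor
    · rintro ⟨i, rfl⟩; exact ((s'.equivFinOfCardEq h5).symm i).2
    · intro hx; exact ⟨s'.equivFinOfCardEq h5 ⟨x, hx⟩, by simp [a]⟩
  exact ⟨a, by rw [ha, ← hs]; exact h2, by rw [ha]; exact h3⟩

lemma exists_fun_of_isMinimalReduction (hI : I ≤ maximalIdeal A) (hg : fiberDim I = g)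
    (hht : ∀ p : Ideal A, p.IsPrime → I ≤ p → (g : ℕ∞) ≤ p.height)
    (hinf : Infinite (ResidueField A)) (J : Ideal A)
    (hJ : IsMinimalReduction J I) : ∃ a : Fin g → A, J = Ideal.span (Set.range a) := by
  obtain ⟨a, h1, h2⟩ := exists_fun_of_isReduction hI hg hht hinf J hJ.1
  exact ⟨a, (hJ.2 _ h2 h1).symm⟩

lemma exists_minimalReduction (hI : I ≤ maximalIdeal A) (hg : fiberDim I = g)
    (hht : ∀ p : Ideal A, p.IsPrime → I ≤ p → (g : ℕ∞) ≤ p.height)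
    (hinf : Infinite (ResidueField A)) : ∃ J, IsMinimalReduction J I := by
  obtain ⟨a, h1, h2⟩ := exists_fun_of_isReduction hI hg hht hinf I ⟨le_rfl, 0, by simp⟩
  exact ⟨_, isMinimalReduction_of_fun hI hht a h2⟩

lemma uniform_minimalReduction (hI : I ≤ maximalIdeal A) (hg : fiberDim I = g)
    (hht : ∀ p : Ideal A, p.IsPrime → I ≤ p → (g : ℕ∞) ≤ p.height)
    (hinf : Infinite (ResidueField A)) :
    ∃ N : ℕ, ∀ J, IsMinimalReduction J I → I ^ N ≤ J := by
  obtain ⟨s, hs⟩ := IsNoetherian.noetherian I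
  change Ideal.span _ = _ at hs
  let f : Fin s.card → A := fun i => s.equivFin.symm i
  have hfr : Set.range f = s := by
    ext x
    constructor
    · rintro ⟨i, rfl⟩; exact (s.equivFin.symm i).2
    · intro hx; exact ⟨s.equivFin ⟨x, hx⟩, by simp [f]⟩
  have hf : ∀ j, f j ∈ I := fun j => hs ▸ Ideal.subset_span (hfr ▸ ⟨j, rfl⟩)
  obtain ⟨N, hN⟩ := uniform_reduction (ι := Fin g) I f hf
  refine ⟨N + 1, fun J hJ => ?_⟩
  obtain ⟨a, rfl⟩ := exists_fun_of_isMinimalReduction hI hg hht hinf J hJ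
  have ha : ∀ i, ∃ c : Fin s.card → A, ∑ j, c j * f j = a i := by
    intro i
    rw [← Ideal.mem_span_range_iff_exists_fun, hfr, hs]
    exact hJ.1.1 (Ideal.subset_span ⟨i, rfl⟩)
  choose c hc using ha
  have hlin : lin f (fun p => c p.1 p.2) = a := by
    ext i; exact hc i
  obtain ⟨n, hn⟩ := hJ.1.2
  have := hN n (fun p => c p.1 p.2) (by rw [hlin]; exact hn.le)
  rw [hlin] at this
  exact this.trans (Ideal.mul_le_left)

end

end P6

section P7

variable {A : Type u} [CommRing A]

lemma ofList_ofFn {g : ℕ} (a : Fin g → A) : Ideal.ofList (List.ofFn a) = Ideal.span (Set.range a) := by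
  unfold Ideal.ofList
  congr 1
  ext x
  simp [List.mem_ofFn]

lemma dimq (J : Ideal A) (g d : ℕ) (h : ∀ p : Ideal A, p.IsPrime → J ≤ p → (g : ℕ∞) ≤ p.height)
    (hd : ringKrullDim A = d) : ringKrullDim (A ⧸ J) + g ≤ d := by
  rw [ringKrullDim_quotient]
  cases isEmpty_or_nonempty (PrimeSpectrum.zeroLocus (R := A) J) with
  | inl h0 => rw [Order.krullDim_eq_bot]; simp
  | inr h0 =>
  rw [Order.krullDim_eq_iSup_coheight_of_nonempty]
  have hne : Nonempty (PrimeSpectrum A) := ⟨h0.some.1⟩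
  have h1 : ∀ p : PrimeSpectrum.zeroLocus (R := A) J, Order.coheight p + (g : ℕ∞) ≤ d := by
    intro p
    have h2 : Order.coheight p ≤ Order.coheight p.1 :=
      Order.coheight_le_coheight_apply_of_strictMono (Subtype.val) (fun _ _ h => h) p
    have h3 := h p.1.asIdeal p.1.2 p.2
    rw [PrimeSpectrum.height_eq_orderHeight] at h3
    have h4 : Order.height p.1 + Order.coheight p.1 ≤ d := by
      have h5 := le_iSup (fun q : PrimeSpectrum A => Order.height q + Order.coheight q) p.1
      have h6 : ((⨆ q : PrimeSpectrum A, Order.height q + Order.coheight q : ℕ∞) : WithBot ℕ∞) = d := by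
        rw [← Order.krullDim_eq_iSup_height_add_coheight_of_nonempty]; exact hd
      have h7 : (⨆ q : PrimeSpectrum A, Order.height q + Order.coheight q : ℕ∞) = d := by
        exact_mod_cast h6
      rw [h7] at h5; exact h5
    rw [add_comm] at h4
    exact (add_le_add h2 h3).trans h4
  have h2 : (⨆ p : PrimeSpectrum.zeroLocus (R := A) J, Order.coheight p) + (g : ℕ∞) ≤ d := by
    rw [ENat.iSup_add]
    exact iSup_le h1
  exact_mod_cast h2

variable [IsLocalRing A] [IsNoetherianRing A]

lemma ass_mem_minimalPrimes (hCM : IsCMLocalRing A) {I : Ideal A} (hI : I ≤ maximalIdeal A) {g : ℕ}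
    (hht : ∀ p : Ideal A, p.IsPrime → I ≤ p → (g : ℕ∞) ≤ p.height) (a : Fin g → A)
    (h : IsReduction (Ideal.span (Set.range a)) I) (P : Ideal A)
    (hP : P ∈ associatedPrimes A (A ⧸ Ideal.span (Set.range a))) : P ∈ I.minimalPrimes := by
  obtain ⟨d, hd⟩ := exists_dim_eq A
  have has : ∀ y ∈ List.ofFn a, y ∈ maximalIdeal A := by
    intro y hy
    obtain ⟨i, rfl⟩ := (List.mem_ofFn).mp hy
    exact hI (h.1 (Ideal.subset_span ⟨i, rfl⟩))
  have hdim : ringKrullDim (A ⧸ Ideal.ofList (List.ofFn a)) + (List.ofFn a).length ≤ d := by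
    rw [ofList_ofFn, List.length_ofFn]
    exact dimq _ g d (fun p hp hJ => hht p hp (le_prime_of_reduction h p hJ)) hd
  have hgd : g ≤ d := by
    have h1 := hht _ (maximalIdeal.isMaximal A).isPrime hI
    have h2 := Ideal.height_le_ringKrullDim_of_ne_top (maximalIdeal.isMaximal A).ne_top
    rw [hd] at h2
    have h3 : ((g : ℕ∞) : WithBot ℕ∞) ≤ d := (WithBot.coe_le_coe.mpr h1).trans h2
    exact_mod_cast h3
  have hRS := RS_of_dim hCM d hd _ has hdim
  rw [← ofList_ofFn] at hP
  have h1 := assoc_dim hCM d hd _ has (by simpa using hgd) hRS P hP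
  rw [List.length_ofFn] at h1
  obtain ⟨hPp, x, hx, hPx⟩ := assoc_wit _ hP
  have hIP : I ≤ P := le_prime_of_reduction h P (by
    rw [← ofList_ofFn]
    intro y hy
    rw [hPx]; exact Ideal.mul_mem_right _ _ hy)
  obtain ⟨q, hq, hqP⟩ := Ideal.exists_minimalPrimes_le hIP
  rcases hqP.eq_or_lt with rfl | hlt
  · exact hq
  exfalso
  have hqp : q.IsPrime := hq.1.1
  have h2 := dim_quot_succ_le hlt
  have h3 := dimq q g d (fun p hp hJ => hht p hp (hq.1.2.trans hJ)) hd
  have h4 : (d : WithBot ℕ∞) + 1 ≤ d := calc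
    (d : WithBot ℕ∞) + 1 ≤ ringKrullDim (A ⧸ P) + g + 1 := by gcongr
    _ = ringKrullDim (A ⧸ P) + 1 + g := by rw [add_right_comm]
    _ ≤ ringKrullDim (A ⧸ q) + g := by gcongr
    _ ≤ d := h3
  have h5 : d + 1 ≤ d := by exact_mod_cast h4
  omega

lemma mem_of_locally (hCM : IsCMLocalRing A) {I : Ideal A} (hI : I ≤ maximalIdeal A) {g : ℕ}
    (hht : ∀ p : Ideal A, p.IsPrime → I ≤ p → (g : ℕ∞) ≤ p.height) (a : Fin g → A)
    (h : IsReduction (Ideal.span (Set.range a)) I) (w : A)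
    (hw : ∀ p ∈ I.minimalPrimes, ∃ s, s ∉ p ∧ s * w ∈ Ideal.span (Set.range a)) :
    w ∈ Ideal.span (Set.range a) := by
  by_contra hcon
  obtain ⟨P, hP, h1⟩ := exists_assoc _ hcon
  obtain ⟨s, hs, hs'⟩ := hw P (ass_mem_minimalPrimes hCM hI hht a h P hP)
  exact hs (h1 s hs')

lemma loc_mem_iff {p : Ideal A} [p.IsPrime] (J : Ideal A) (w : A) :
    algebraMap A (Localization.AtPrime p) w ∈ J.map (algebraMap A (Localization.AtPrime p)) ↔
      ∃ s, s ∉ p ∧ s * w ∈ J := by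
  rw [IsLocalization.algebraMap_mem_map_algebraMap_iff p.primeCompl]
  rfl

section loc
variable {I : Ideal A} {g : ℕ}

lemma loc_dim (hht : ∀ p : Ideal A, p.IsPrime → I ≤ p → (g : ℕ∞) ≤ p.height) (a : Fin g → A)
    (h : IsReduction (Ideal.span (Set.range a)) I) (p : Ideal A) [p.IsPrime] (hp : p ∈ I.minimalPrimes)
    : ringKrullDim (Localization.AtPrime p) = g := by
  classical
  rw [IsLocalization.AtPrime.ringKrullDim_eq_height p]
  have e : Ideal.span (Set.range a) = Ideal.span ((Finset.univ.image a : Finset A) : Set A) := by simp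
  have h1 := height_le_card_of_reduction (Finset.univ.image a) (e ▸ h) p hp
  have h2 : (Finset.univ.image a).card ≤ g := Finset.card_image_le.trans (by simp)
  have h3 := hht p hp.1.1 hp.1.2
  have h4 : p.height = g := le_antisymm (h1.trans (by exact_mod_cast h2)) h3
  rw [h4]; rfl

lemma loc_mem_max (hht : ∀ p : Ideal A, p.IsPrime → I ≤ p → (g : ℕ∞) ≤ p.height) (a : Fin g → A)
    (h : IsReduction (Ideal.span (Set.range a)) I) (p : Ideal A) [p.IsPrime] (hp : p ∈ I.minimalPrimes)
    (i : Fin g) : algebraMap A (Localization.AtPrime p) (a i) ∈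
    maximalIdeal (Localization.AtPrime p) := by
  rw [IsLocalization.AtPrime.to_map_mem_maximal_iff (Localization.AtPrime p) p]
  exact hp.1.2 (h.1 (Ideal.subset_span ⟨i, rfl⟩))

lemma loc_RS (hht : ∀ p : Ideal A, p.IsPrime → I ≤ p → (g : ℕ∞) ≤ p.height) (a : Fin g → A)
    (h : IsReduction (Ideal.span (Set.range a)) I) (p : Ideal A) [p.IsPrime] (hp : p ∈ I.minimalPrimes)
    (hCM : IsCMLocalRing (Localization.AtPrime p)) :
    RS (⊥ : Ideal (Localization.AtPrime p)) (List.ofFn fun i => algebraMap A (Localization.AtPrime p) (a i)) := by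
  have hd := loc_dim hht a h p hp
  have has : ∀ y ∈ List.ofFn (fun i => algebraMap A (Localization.AtPrime p) (a i)),
      y ∈ maximalIdeal (Localization.AtPrime p) := by
    intro y hy
    obtain ⟨i, rfl⟩ := (List.mem_ofFn).mp hy
    exact loc_mem_max hht a h p hp i
  refine RS_of_dim hCM g hd _ has ?_
  rw [ofList_ofFn, List.length_ofFn]
  refine dimq _ g g (fun q hq hJ => ?_) hd
  have hq1 : p ≤ q.comap (algebraMap A (Localization.AtPrime p)) := by
    have h1 : Ideal.span (Set.range a) ≤ q.comap (algebraMap A (Localization.AtPrime p)) := by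
      rw [Ideal.span_le]
      rintro _ ⟨i, rfl⟩
      exact hJ (Ideal.subset_span ⟨i, rfl⟩)
    have h2 : q.comap (algebraMap A (Localization.AtPrime p)) ≤ p := by
      intro x hx
      rw [← IsLocalization.AtPrime.to_map_mem_maximal_iff (Localization.AtPrime p) p]
      exact le_maximalIdeal hq.ne_top hx
    exact hp.2 ⟨inferInstance, le_prime_of_reduction h _ h1⟩ h2
  have hq2 : maximalIdeal (Localization.AtPrime p) ≤ q := by
    rw [← Localization.AtPrime.map_eq_maximalIdeal, Ideal.map_le_iff_le_comap]
    exact hq1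
  have hq3 : q = maximalIdeal (Localization.AtPrime p) := le_antisymm (le_maximalIdeal hq.ne_top) hq2
  rw [hq3]
  have := IsLocalRing.maximalIdeal_height_eq_ringKrullDim (R := Localization.AtPrime p)
  rw [hd] at this
  have h5 : (maximalIdeal (Localization.AtPrime p)).height = g := by exact_mod_cast this
  exact h5.ge

lemma map_span_range (hht : ∀ p : Ideal A, p.IsPrime → I ≤ p → (g : ℕ∞) ≤ p.height) (a : Fin g → A)
    (h : IsReduction (Ideal.span (Set.range a)) I) (p : Ideal A) [p.IsPrime] (hp : p ∈ I.minimalPrimes)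
    : (Ideal.span (Set.range a)).map (algebraMap A (Localization.AtPrime p)) =
    Ideal.span (Set.range fun i => algebraMap A (Localization.AtPrime p) (a i)) := by
  rw [Ideal.map_span, ← Set.range_comp]; rfl

lemma length_soc_loc (hht : ∀ p : Ideal A, p.IsPrime → I ≤ p → (g : ℕ∞) ≤ p.height) (a : Fin g → A)
    (h : IsReduction (Ideal.span (Set.range a)) I) (p : Ideal A) [p.IsPrime] (hp : p ∈ I.minimalPrimes)
    (hGor : IsGorensteinLocalRing (Localization.AtPrime p)) :
    Module.length (Localization.AtPrime p) (socA ((Ideal.span (Set.range a)).map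
      (algebraMap A (Localization.AtPrime p)))) = 1 := by
  obtain ⟨hCM, hty⟩ := hGor
  have hd := loc_dim hht a h p hp
  have hne : {n : ℕ∞ | ∃ rs : List (Localization.AtPrime p), (∀ x ∈ rs, x ∈ maximalIdeal (Localization.AtPrime p)) ∧
    RingTheory.Sequence.IsRegular ((Localization.AtPrime p) ⧸ (⊥ : Ideal (Localization.AtPrime p))) rs ∧
    (rs.length : ℕ∞) = qDepth (Localization.AtPrime p) ⊥ ∧
    muE (socle (Localization.AtPrime p) (⊥ ⊔ Ideal.ofList rs)) = n}.Nonempty := by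
    by_contra hcon
    rw [Set.not_nonempty_iff_eq_empty] at hcon
    rw [qType, hcon, sInf_empty] at hty
    exact absurd hty (by simp)
  have hmem := csInf_mem hne
  change qType _ _ ∈ _ at hmem
  rw [hty] at hmem
  obtain ⟨rs, hrm, hreg, hlen, hmu⟩ := hmem
  have hlen' : rs.length = g := by
    have h1 : (qDepth (Localization.AtPrime p) ⊥ : WithBot ℕ∞) = g := by
      rw [← hCM]; exact hd
    rw [← hlen] at h1
    exact_mod_cast h1
  have hRS := (RS_iff _ _).mp hreg.toIsWeaklyRegular
  have h2 := length_socA_eq g ⊥ rs (List.ofFn fun i => algebraMap A (Localization.AtPrime p) (a i)) hlen'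
    (by simp) hrm (by
      intro y hy
      obtain ⟨i, rfl⟩ := (List.mem_ofFn).mp hy
      exact loc_mem_max hht a h p hp i) hRS (loc_RS hht a h p hp hCM)
  rw [← muE_socle, hmu, ofList_ofFn, bot_sup_eq] at h2
  rw [map_span_range hht a h p hp, ← h2]
end loc

end P7

section P8

lemma RS_comap {S : Type u} {B : Type v} [CommRing S] [CommRing B] (f : S →+* B)
    (hf : Function.Surjective f) (l : List S) : ∀ (K : Ideal B), RS K (l.map f) → RS (K.comap f) l := by
  induction l with
  | nil => intro K _; trivial
  | cons x l ih =>
    rintro K ⟨h1, h2⟩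
    refine ⟨fun y hy => h1 (f y) (by simpa using hy), ?_⟩
    have := ih _ h2
    convert this using 1
    ext y
    rw [Ideal.mem_comap, Submodule.mem_sup, Submodule.mem_sup]
    constructor
    · rintro ⟨k, hk, z, hz, rfl⟩
      obtain ⟨c, rfl⟩ := Ideal.mem_span_singleton'.mp hz
      exact ⟨f k, hk, f (c * x), by rw [map_mul]; exact Ideal.mem_span_singleton'.mpr ⟨_, rfl⟩, by simp⟩
    · rintro ⟨k, hk, z, hz, hy⟩
      obtain ⟨c, rfl⟩ := Ideal.mem_span_singleton'.mp hz
      obtain ⟨c, rfl⟩ := hf c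
      refine ⟨y - c * x, ?_, c * x, Ideal.mem_span_singleton'.mpr ⟨_, rfl⟩, by ring⟩
      rw [Ideal.mem_comap, map_sub, map_mul, ← hy]
      simpa using hk

lemma RS_loc {S : Type u} {L : Type v} [CommRing S] [CommRing L] [Algebra S L] (M : Submonoid S)
    [IsLocalization M L] (l : List S) : ∀ (K : Ideal S), RS K l →
      RS (K.map (algebraMap S L)) (l.map (algebraMap S L)) := by
  induction l with
  | nil => intro K _; trivial
  | cons x l ih =>
    rintro K ⟨h1, h2⟩
    refine ⟨fun y hy => ?_, ?_⟩
    · obtain ⟨⟨y, s⟩, rfl⟩ := IsLocalization.mk'_surjective M y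
      simp only at hy ⊢
      have h3 : algebraMap S L (x * y) ∈ K.map (algebraMap S L) := by
        have := Ideal.mul_mem_right (algebraMap S L s) _ hy
        rwa [mul_assoc, IsLocalization.mk'_spec, ← map_mul] at this
      rw [IsLocalization.algebraMap_mem_map_algebraMap_iff M] at h3
      obtain ⟨m, hm, h4⟩ := h3
      have h5 : m * y ∈ K := h1 _ (by convert h4 using 1; ring)
      rw [IsLocalization.mk'_mem_map_algebraMap_iff M]
      exact ⟨m, hm, h5⟩
    · have := ih _ h2
      rwa [Ideal.map_sup, Ideal.map_span, Set.image_singleton] at this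

open Polynomial in
lemma coeff_mem_of_prime {B : Type u} [CommRing B] (n : Ideal B) (Q : Ideal B[X]) [Q.IsPrime]
    (hn : ∀ x ∈ n, C x ∈ Q) (hX : X ∉ Q) (hQ : ∀ h ∈ Q, h.coeff 0 ∈ n) (k : ℕ) :
    ∀ h ∈ Q, h.coeff k ∈ n := by
  induction k with
  | zero => exact hQ
  | succ k ih =>
    intro h hh
    have h1 : X * h.divX ∈ Q := by
      have h2 := Q.sub_mem hh (hn _ (hQ h hh))
      have h3 := h.divX_mul_X_add
      have h4 : X * h.divX = h - C (h.coeff 0) := by rw [← eq_sub_iff_add_eq] at h3; rw [← h3]; ring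
      rwa [h4]
    have h2 := ih _ ((Ideal.IsPrime.mem_or_mem ‹_› h1).resolve_left hX)
    rwa [coeff_divX] at h2

open Polynomial in
theorem generic_finite {B : Type u} [CommRing B] [IsLocalRing B] [IsNoetherianRing B] {g : ℕ}
    (I : Ideal B) (hI : I ≤ maximalIdeal B) (k : ℕ) (hk : maximalIdeal B ^ k ≤ I)
    (a δ : Fin g → B) (hδ : ∀ i, δ i ∈ I)
    (hred : IsReduction (Ideal.span (Set.range a)) I) (hRS : RS ⊥ (List.ofFn a))
    (w : B) (hw : w ∉ Ideal.span (Set.range a)) (U : Set B)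
    (hU : ∀ u ∈ U, ∀ v ∈ U, u ≠ v → IsUnit (u - v)) :
    {u ∈ U | w ∈ Ideal.span (Set.range fun i => a i + u * δ i)}.Finite := by
  have ha : ∀ i, a i ∈ I := fun i => hred.1 (Ideal.subset_span ⟨i, rfl⟩)
  by_contra hinf
  change Set.Infinite _ at hinf
  set bad := {u ∈ U | w ∈ Ideal.span (Set.range fun i => a i + u * δ i)} with hbad
  let b : Fin g → B[X] := fun i => C (a i) + X * C (δ i)
  let 𝔞 : Ideal B[X] := Ideal.span (Set.range b)
  let K : Ideal B[X] := 𝔞 ⊔ Ideal.span {C w}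
  -- some bad `u` with `X - u` regular modulo `K`
  have h1 : ∃ u ∈ bad, nzm K (X - C u) := by
    by_contra hcon
    push Not at hcon
    have h2 : ∀ u : bad, ∃ P : associatedPrimes B[X] (B[X] ⧸ K), X - C u.1 ∈ P.1 := by
      intro u
      by_contra hc
      push Not at hc
      exact hcon u.1 u.2 (nzm_of_not_mem_assoc K fun P hP => hc ⟨P, hP⟩)
    choose φ hφ using h2
    have hfin : Finite (associatedPrimes B[X] (B[X] ⧸ K)) := (associatedPrimes.finite B[X] _).to_subtype
    have hinf' : Infinite bad := hinf.to_subtype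
    obtain ⟨u, v, huv, he⟩ := Finite.exists_ne_map_eq_of_infinite φ
    have h3 := (φ u).1.sub_mem (he ▸ hφ v) (hφ u)
    have h4 : (X - C v.1 - (X - C u.1) : B[X]) = C (u.1 - v.1) := by rw [C_sub]; ring
    rw [h4] at h3
    have h5 := (hU u.1 u.2.1 v.1 v.2.1 (fun h => huv (Subtype.ext h))).map (C : B →+* B[X])
    exact (assoc_wit K (φ u).2).1.ne_top (Ideal.eq_top_of_isUnit_mem _ h3 h5)
  obtain ⟨u, ⟨huU, hu⟩, hnz⟩ := h1
  have h2 : ∃ y : B[X], C w - (X - C u) * y ∈ 𝔞 := by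
    obtain ⟨c, hc⟩ := Ideal.mem_span_range_iff_exists_fun.mp hu
    refine ⟨- ∑ i, C (c i) * C (δ i), ?_⟩
    have : C w - (X - C u) * - ∑ i, C (c i) * C (δ i) = ∑ i, C (c i) * b i := by
      rw [← hc, mul_neg, sub_neg_eq_add, map_sum, Finset.mul_sum, ← Finset.sum_add_distrib]
      refine Finset.sum_congr rfl fun i _ => ?_
      simp only [b, C_mul, C_add]
      ring
    rw [this]
    exact Ideal.sum_mem _ fun i _ => Ideal.mul_mem_left _ _ (Ideal.subset_span ⟨i, rfl⟩)
  obtain ⟨y, hy⟩ := h2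
  have h3 : y ∈ K := by
    apply hnz
    have h4 : C w ∈ K := Ideal.mem_sup_right (Ideal.subset_span rfl)
    have := K.sub_mem h4 (Ideal.mem_sup_left hy)
    simpa using this
  obtain ⟨y', hy', z, hz, rfl⟩ := Submodule.mem_sup.mp h3
  obtain ⟨c, rfl⟩ := Ideal.mem_span_singleton'.mp hz
  have h4 : (1 - (X - C u) * c) * C w ∈ 𝔞 := by
    have h5 := 𝔞.add_mem hy (𝔞.mul_mem_left (X - C u) hy')
    convert h5 using 1; ring
  set h := 1 - (X - C u) * c with hh
  -- localize at (n, X)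
  let e : B[X] →+* B := evalRingHom 0
  have he : Function.Surjective e := fun x => ⟨C x, by simp [e]⟩
  have heb : ∀ i, e (b i) = a i := fun i => by simp [e, b]
  let P0 : Ideal B[X] := (maximalIdeal B).comap e
  have hP0 : P0.IsPrime := Ideal.comap_isPrime e _
  let L := Localization.AtPrime P0
  let f : B[X] →+* L := algebraMap B[X] L
  have hmemL : ∀ x, f x ∈ maximalIdeal L ↔ x ∈ P0 := fun x =>
    IsLocalization.AtPrime.to_map_mem_maximal_iff L P0 x
  have hker : (⊥ : Ideal B).comap e = Ideal.span {X} := by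
    ext q
    rw [Ideal.mem_comap, Ideal.mem_bot, Ideal.mem_span_singleton, X_dvd_iff, coeff_zero_eq_eval_zero]
    rfl
  have hRS1 : RS (⊥ : Ideal B[X]) (X :: List.ofFn b) := by
    refine ⟨fun q hq => ?_, ?_⟩
    · rw [Ideal.mem_bot] at hq ⊢
      rw [mul_comm] at hq
      exact (monic_X.mul_left_eq_zero_iff).mp hq
    · rw [bot_sup_eq, ← hker]
      apply RS_comap e he
      rw [List.map_ofFn]
      have : e ∘ b = a := funext heb
      rw [this]; exact hRS
  have hRS2 := RS_loc (L := L) P0.primeCompl _ _ hRS1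
  rw [Ideal.map_bot, List.map_cons, List.map_ofFn] at hRS2
  have hXP : f X ∈ maximalIdeal L := by rw [hmemL]; simp [P0, e]
  have hbP : ∀ i, f (b i) ∈ maximalIdeal L := by
    intro i
    rw [hmemL]
    change e (b i) ∈ maximalIdeal B
    rw [heb]; exact hI (ha i)
  have hRS3 : RS (⊥ : Ideal L) (List.ofFn (f ∘ b) ++ [f X]) := by
    rw [← RS_iff] at hRS2 ⊢
    refine IsLocalRing.isWeaklyRegular_of_perm_of_subset_maximalIdeal hRS2
      (List.perm_append_singleton _ _).symm ?_
    intro x hx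
    rcases List.mem_cons.mp hx with rfl | hx
    · exact hXP
    · obtain ⟨i, rfl⟩ := List.mem_ofFn.mp hx
      exact hbP i
  rw [RS_append, ofList_ofFn, bot_sup_eq] at hRS3
  have hXnz := hRS3.2.1
  set 𝔟 : Ideal L := Ideal.span (Set.range (f ∘ b)) with h𝔟
  have hmap : 𝔞.map f = 𝔟 := by rw [h𝔟, Set.range_comp, Ideal.map_span]
  -- Nakayama
  let F : B →+* L := f.comp C
  have hFa : ∀ i, F (a i) = f (b i) - f X * F (δ i) := by
    intro i; simp [F, b]; ring
  obtain ⟨r, hr⟩ := hred.2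
  have hnak : (I.map F) ^ (r + 1) = 𝔟 * (I.map F) ^ r := by
    apply isReduction_of_le
    · rw [h𝔟, Ideal.span_le]
      rintro _ ⟨i, rfl⟩
      have h6 : f (b i) = F (a i) + f X * F (δ i) := by rw [hFa]; ring
      change f (b i) ∈ _
      rw [h6]
      exact Ideal.add_mem _ (Ideal.mem_map_of_mem _ (ha i)) (Ideal.mul_mem_left _ _ (Ideal.mem_map_of_mem _ (hδ i)))
    · have h6 : (I.map F) ^ (r + 1) = (Ideal.span (Set.range a)).map F * (I.map F) ^ r := by
        rw [← Ideal.map_pow, hr, Ideal.map_mul, Ideal.map_pow]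
      have h7 : (Ideal.span (Set.range a)).map F ≤ 𝔟 ⊔ maximalIdeal L * I.map F := by
        rw [Ideal.map_span, Ideal.span_le]
        rintro _ ⟨_, ⟨i, rfl⟩, rfl⟩
        rw [hFa]
        exact Ideal.sub_mem _ (Ideal.mem_sup_left (Ideal.subset_span ⟨i, rfl⟩))
          (Ideal.mem_sup_right (Ideal.mul_mem_mul hXP (Ideal.mem_map_of_mem _ (hδ i))))
      conv_lhs => rw [h6]
      refine (Ideal.mul_mono_left h7).trans ?_
      rw [Ideal.sup_mul, mul_assoc, ← pow_succ']
  have hnL : ∀ Q : Ideal L, Q.IsPrime → 𝔟 ≤ Q → ∀ x ∈ maximalIdeal B, F x ∈ Q := by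
    intro Q hQ hbQ x hx
    have h6 : I.map F ≤ Q := by
      have := pow_le_of_reduction hnak
      exact (Ideal.IsPrime.pow_le_iff (Nat.succ_ne_zero r)).mp (this.trans hbQ)
    have h7 : (F x) ^ k ∈ Q := by
      rw [← map_pow]
      exact h6 (Ideal.mem_map_of_mem _ (hk (Ideal.pow_mem_pow hx k)))
    exact hQ.mem_of_pow_mem _ h7
  have hhnz : nzm 𝔟 (f h) := by
    apply nzm_of_not_mem_assoc
    intro Q hQ hhQ
    have hXQ := not_mem_assoc_of_nzm _ hXnz hQ
    obtain ⟨hQp, x, hx, hQx⟩ := assoc_wit _ hQ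
    have hbQ : 𝔟 ≤ Q := fun y hy => (hQx y).mpr (Ideal.mul_mem_right _ _ hy)
    have hcoef := fun j => coeff_mem_of_prime (maximalIdeal B) (Q.comap f)
      (fun x hx => hnL Q hQp hbQ x hx) hXQ (fun q hq => by
        have h6 : q ∈ P0 := by rw [← hmemL]; exact le_maximalIdeal hQp.ne_top hq
        rw [coeff_zero_eq_eval_zero]; exact h6) j h hhQ
    have h6 : h.eval u ∈ maximalIdeal B := by
      rw [eval_eq_sum]
      exact Ideal.sum_mem _ fun j _ => Ideal.mul_mem_right _ _ (hcoef j)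
    have h7 : h.eval u = 1 := by simp [hh]
    rw [h7] at h6
    exact (Ideal.ne_top_iff_one _).mp (maximalIdeal.isMaximal B).ne_top h6
  have h5 : f (C w) ∈ 𝔞.map f := by
    rw [hmap]
    apply hhnz
    rw [← map_mul, ← hmap]
    exact Ideal.mem_map_of_mem _ h4
  rw [IsLocalization.algebraMap_mem_map_algebraMap_iff P0.primeCompl] at h5
  obtain ⟨s, hs, hs'⟩ := h5
  have h6 : e (s * C w) ∈ Ideal.span (Set.range a) := by
    have h7 := Ideal.mem_map_of_mem e hs'
    rw [Ideal.map_span, ← Set.range_comp] at h7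
    have : e ∘ b = a := funext heb
    rwa [this] at h7
  rw [map_mul] at h6
  have h7 : e (C w) = w := by simp [e]
  rw [h7] at h6
  have h8 : IsUnit (e s) := by
    by_contra hc
    exact hs ((mem_maximalIdeal _).mpr hc)
  exact hw ((Ideal.unit_mul_mem_iff_mem _ h8).mp h6)

end P8

section P9

variable {A : Type u} [CommRing A] [IsLocalRing A] [IsNoetherianRing A]

instance minPrime_isPrime {I : Ideal A} (p : I.minimalPrimes) : p.1.IsPrime := p.2.1.1

/-- localization at a minimal prime of `I`. -/
abbrev Lp {I : Ideal A} (p : I.minimalPrimes) : Type u := Localization.AtPrime p.1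

/-- extension of an ideal to the localization at a minimal prime of `I`. -/
abbrev mp {I : Ideal A} (p : I.minimalPrimes) (J : Ideal A) : Ideal (Lp p) := J.map (algebraMap A (Lp p))

/-- the standing assumptions. -/
structure Setup (I : Ideal A) (g : ℕ) : Prop where
  hCM : IsCMLocalRing A
  hinf : Infinite (ResidueField A)
  hI : I ≤ maximalIdeal A
  hg : fiberDim I = g
  hht : ∀ p : Ideal A, p.IsPrime → I ≤ p → (g : ℕ∞) ≤ p.height
  hGor : ∀ p : I.minimalPrimes, IsGorensteinLocalRing (Lp p)

variable {I : Ideal A} {g : ℕ}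

lemma exists_max_pow_le (p : I.minimalPrimes) : ∃ k, maximalIdeal (Lp p) ^ k ≤ mp p I := by
  refine Ideal.exists_pow_le_of_le_radical_of_fg ?_ (IsNoetherian.noetherian _)
  rw [Ideal.radical_eq_sInf]
  refine le_sInf fun q hq => ?_
  obtain ⟨hJ, hq⟩ := hq
  have h1 : I ≤ q.comap (algebraMap A (Lp p)) := Ideal.map_le_iff_le_comap.mp hJ
  have h2 : q.comap (algebraMap A (Lp p)) ≤ p.1 := by
    intro x hx
    rw [← IsLocalization.AtPrime.to_map_mem_maximal_iff (Lp p) p.1]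
    exact le_maximalIdeal hq.ne_top hx
  rw [← Localization.AtPrime.map_eq_maximalIdeal, Ideal.map_le_iff_le_comap]
  exact p.2.2 ⟨inferInstance, h1⟩ h2

lemma generic_A (hS : Setup I g) (a δ : Fin g → A) (hδ : ∀ i, δ i ∈ I)
    (hred : IsReduction (Ideal.span (Set.range a)) I) (p : I.minimalPrimes) (w : A)
    (hw : algebraMap A (Lp p) w ∉ mp p (Ideal.span (Set.range a))) (U : Set A)
    (hU : ∀ u ∈ U, ∀ v ∈ U, u ≠ v → IsUnit (u - v)) :
    {u ∈ U | algebraMap A (Lp p) w ∈ mp p (Ideal.span (Set.range fun i => a i + u * δ i))}.Finite := by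
  obtain ⟨k, hk⟩ := exists_max_pow_le p
  have hm : ∀ b : Fin g → A, mp p (Ideal.span (Set.range b)) =
      Ideal.span (Set.range fun i => algebraMap A (Lp p) (b i)) := fun b => by
    rw [mp, Ideal.map_span, ← Set.range_comp]; rfl
  have hunit : ∀ u ∈ U, ∀ v ∈ U, u ≠ v → IsUnit (algebraMap A (Lp p) u - algebraMap A (Lp p) v) := by
    intro u hu v hv huv
    rw [← map_sub]; exact (hU u hu v hv huv).map _
  have h1 := generic_finite (mp p I) (by
      rw [mp, Ideal.map_le_iff_le_comap]
      intro x hx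
      rw [Ideal.mem_comap, IsLocalization.AtPrime.to_map_mem_maximal_iff (Lp p) p.1]
      exact p.2.1.2 hx) k hk (fun i => algebraMap A (Lp p) (a i)) (fun i => algebraMap A (Lp p) (δ i))
    (fun i => Ideal.mem_map_of_mem _ (hδ i)) (by
      rw [← hm]
      refine ⟨Ideal.map_mono hred.1, ?_⟩
      obtain ⟨r, hr⟩ := hred.2
      exact ⟨r, by rw [mp, mp, ← Ideal.map_pow, hr, Ideal.map_mul, Ideal.map_pow]⟩)
    (loc_RS hS.hht a hred p.1 p.2 (hS.hGor p).1) (algebraMap A (Lp p) w) (by rw [← hm]; exact hw)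
    (algebraMap A (Lp p) '' U) (by
      rintro _ ⟨u, hu, rfl⟩ _ ⟨v, hv, rfl⟩ huv
      exact hunit u hu v hv (fun h => huv (by rw [h])))
  refine Set.Finite.of_finite_image (h1.subset ?_) (f := algebraMap A (Lp p)) ?_
  · rintro _ ⟨u, ⟨hu, hu'⟩, rfl⟩
    refine ⟨⟨u, hu, rfl⟩, ?_⟩
    rw [hm] at hu'
    simpa using hu'
  · rintro u ⟨hu, _⟩ v ⟨hv, _⟩ huv
    by_contra hne
    have := hunit u hu v hv hne
    rw [huv, sub_self] at this
    exact not_isUnit_zero this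

lemma avoid (hS : Setup I g) (Sg : Finset (I.minimalPrimes × A)) :
    (∀ x ∈ Sg, ∃ a : Fin g → A, IsReduction (Ideal.span (Set.range a)) I ∧
      algebraMap A (Lp x.1) x.2 ∉ mp x.1 (Ideal.span (Set.range a))) →
    ∃ a : Fin g → A, IsReduction (Ideal.span (Set.range a)) I ∧
      ∀ x ∈ Sg, algebraMap A (Lp x.1) x.2 ∉ mp x.1 (Ideal.span (Set.range a)) := by
  classical
  have hinf := hS.hinf
  induction Sg using Finset.induction_on with
  | empty =>
    intro _
    obtain ⟨a, _, h2⟩ := exists_fun_of_isReduction hS.hI hS.hg hS.hht hS.hinf I ⟨le_rfl, 0, by simp⟩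
    exact ⟨a, h2, by simp⟩
  | insert x s hx ih =>
    intro h
    obtain ⟨a, ha, has⟩ := ih fun y hy => h y (Finset.mem_insert_of_mem hy)
    obtain ⟨a', ha', hax⟩ := h x (Finset.mem_insert_self _ _)
    have hresidue : Function.Surjective (residue A) := residue_surjective
    let σ := Function.surjInv hresidue
    have hσ : ∀ c, residue A (σ c) = c := Function.surjInv_eq hresidue
    have hσinj : Function.Injective σ := Function.injective_surjInv hresidue
    have hσu : ∀ u ∈ Set.range σ, ∀ v ∈ Set.range σ, u ≠ v → IsUnit (u - v) := by
      rintro _ ⟨c, rfl⟩ _ ⟨d, rfl⟩ hcd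
      by_contra hc
      have h1 : σ c - σ d ∈ maximalIdeal A := hc
      rw [← residue_eq_zero_iff, map_sub, hσ, hσ, sub_eq_zero] at h1
      exact hcd (by rw [h1])
    have haI : ∀ i, a i ∈ I := fun i => ha.1 (Ideal.subset_span ⟨i, rfl⟩)
    have ha'I : ∀ i, a' i ∈ I := fun i => ha'.1 (Ideal.subset_span ⟨i, rfl⟩)
    let δ : Fin g → A := fun i => a' i - a i
    have hδ : ∀ i, δ i ∈ I := fun i => I.sub_mem (ha'I i) (haI i)
    let ℓ : A → Fin g → A := fun u i => a i + u * δ i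
    obtain ⟨q, hq, hline⟩ := line_reduction I a δ haI hδ ha
    have hf1 : {u ∈ Set.range σ | q.eval (residue A u) = 0}.Finite := by
      refine Set.Finite.of_finite_image (f := residue A) (q.roots.toFinset.finite_toSet.subset ?_) ?_
      · rintro _ ⟨u, ⟨_, hu⟩, rfl⟩
        simpa [hq] using hu
      · rintro _ ⟨⟨c, rfl⟩, _⟩ _ ⟨⟨d, rfl⟩, _⟩ hcd
        rw [hσ, hσ] at hcd; rw [hcd]
    have hf2 : ∀ y ∈ s, {u ∈ Set.range σ | algebraMap A (Lp y.1) y.2 ∈ mp y.1 (Ideal.span (Set.range (ℓ u)))}.Finite :=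
      fun y hy => generic_A hS a δ hδ ha y.1 y.2 (has y hy) _ hσu
    have hf3 : {u ∈ Set.range σ | algebraMap A (Lp x.1) x.2 ∈ mp x.1 (Ideal.span (Set.range (ℓ u)))}.Finite := by
      have h1 := generic_A hS a' (fun i => - δ i) (fun i => I.neg_mem (hδ i)) ha' x.1 x.2 hax
        ((fun u => 1 - u) '' Set.range σ) (by
          rintro _ ⟨u, hu, rfl⟩ _ ⟨v, hv, rfl⟩ huv
          have := (hσu u hu v hv (fun h => huv (by rw [h]))).neg
          simpa using this)
      refine Set.Finite.of_finite_image (f := fun u => 1 - u) (h1.subset ?_) (fun u _ v _ huv => by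
        simpa using huv)
      rintro _ ⟨u, ⟨hu, hu'⟩, rfl⟩
      refine ⟨⟨u, hu, rfl⟩, ?_⟩
      have : (fun i => a' i + (1 - u) * - δ i) = ℓ u := by
        ext i; simp only [ℓ, δ]; ring
      change _ ∈ mp x.1 (Ideal.span (Set.range fun i => a' i + (1 - u) * - δ i))
      rw [this]; exact hu'
    have hf4 : (⋃ y ∈ s, {u ∈ Set.range σ | algebraMap A (Lp y.1) y.2 ∈
        mp y.1 (Ideal.span (Set.range (ℓ u)))}).Finite := by
      exact Set.Finite.biUnion s.finite_toSet hf2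
    have hUinf : (Set.range σ).Infinite := Set.infinite_range_of_injective hσinj
    obtain ⟨u, hu, hu'⟩ := (hUinf.diff ((hf1.union hf3).union hf4)).nonempty
    simp only [Set.mem_union, not_or, Set.mem_iUnion, not_exists] at hu'
    obtain ⟨⟨h1, h2⟩, h3⟩ := hu'
    refine ⟨ℓ u, hline u (fun h => h1 ⟨hu, h⟩), fun y hy => ?_⟩
    rcases Finset.mem_insert.mp hy with rfl | hy
    · exact fun h => h2 ⟨hu, h⟩
    · exact fun h => h3 y hy ⟨hu, h⟩

lemma core_le_of_reduction (hS : Setup I g) (a : Fin g → A)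
    (ha : IsReduction (Ideal.span (Set.range a)) I) : core I ≤ Ideal.span (Set.range a) :=
  sInf_le (isMinimalReduction_of_fun hS.hI hS.hht a ha)

lemma mem_core (hS : Setup I g) (w : A) (h : ∀ a : Fin g → A,
    IsReduction (Ideal.span (Set.range a)) I → w ∈ Ideal.span (Set.range a)) : w ∈ core I := by
  rw [core, Submodule.mem_sInf]
  intro J hJ
  obtain ⟨a, rfl⟩ := exists_fun_of_isMinimalReduction hS.hI hS.hg hS.hht hS.hinf J hJ
  exact h a hJ.1

lemma exists_pow_le_core (hS : Setup I g) : ∃ N, I ^ N ≤ core I := by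
  obtain ⟨N, hN⟩ := uniform_minimalReduction hS.hI hS.hg hS.hht hS.hinf
  exact ⟨N, le_sInf fun J hJ => hN J hJ⟩

lemma core_loc (hS : Setup I g) (p : I.minimalPrimes) (w : A)
    (hw : ∀ a : Fin g → A, IsReduction (Ideal.span (Set.range a)) I →
      algebraMap A (Lp p) w ∈ mp p (Ideal.span (Set.range a))) :
    algebraMap A (Lp p) w ∈ mp p (core I) := by
  classical
  obtain ⟨N, hN⟩ := exists_pow_le_core hS
  have hfin : I.minimalPrimes.Finite := I.finite_minimalPrimes_of_isNoetherianRing A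
  have := hfin.fintype
  have h1 : ∀ q : I.minimalPrimes, ∃ s, s ∉ p.1 ∧ (q ≠ p → ∃ t, t ∉ q.1 ∧ t * s ∈ I ^ N) := by
    intro q
    by_cases hqp : q = p
    · exact ⟨1, (Ideal.ne_top_iff_one _).mp p.2.1.1.ne_top, fun h => absurd hqp h⟩
    have h2 : ¬ q.1 ≤ p.1 := fun h => hqp (Subtype.ext (le_antisymm h (p.2.2 q.2.1 h)))
    obtain ⟨x, hxq, hxp⟩ := SetLike.not_le_iff_exists.mp h2
    obtain ⟨k, hk⟩ := exists_max_pow_le q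
    have h3 : algebraMap A (Lp q) (x ^ k) ∈ mp q I := by
      rw [map_pow]
      apply hk
      apply Ideal.pow_mem_pow
      rw [IsLocalization.AtPrime.to_map_mem_maximal_iff (Lp q) q.1]
      exact hxq
    obtain ⟨t, ht, ht'⟩ := (loc_mem_iff I _).mp h3
    refine ⟨(x ^ k) ^ N, fun h => hxp (p.2.1.1.mem_of_pow_mem _ (p.2.1.1.mem_of_pow_mem _ h)), fun _ =>
      ⟨t ^ N, fun h => ht (q.2.1.1.mem_of_pow_mem _ h), ?_⟩⟩
    rw [← mul_pow]
    exact Ideal.pow_mem_pow ht' N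
  choose s hs hs' using h1
  rw [loc_mem_iff]
  refine ⟨∏ q, s q, ?_, ?_⟩
  · intro h
    obtain ⟨q, _, hq⟩ := (Ideal.IsPrime.prod_mem_iff).mp h
    exact hs q hq
  · refine mem_core hS _ fun a ha => ?_
    refine mem_of_locally hS.hCM hS.hI hS.hht a ha _ fun q hq => ?_
    by_cases hqp : (⟨q, hq⟩ : I.minimalPrimes) = p
    · obtain ⟨t, ht, ht'⟩ := (loc_mem_iff _ _).mp (hw a ha)
      refine ⟨t, ?_, ?_⟩
      · rw [← hqp] at ht; exact ht
      · rw [mul_left_comm]; exact Ideal.mul_mem_left _ _ ht'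
    · obtain ⟨t, ht, ht'⟩ := hs' ⟨q, hq⟩ hqp
      refine ⟨t, ht, ?_⟩
      apply core_le_of_reduction hS a ha
      apply hN
      rw [← Finset.mul_prod_erase _ _ (Finset.mem_univ (⟨q, hq⟩ : I.minimalPrimes)), ← mul_assoc, ← mul_assoc]
      exact Ideal.mul_mem_right _ _ (Ideal.mul_mem_right _ _ ht')

lemma core_loc_pow (hS : Setup I g) (p : I.minimalPrimes) :
    ∃ M, maximalIdeal (Lp p) ^ M ≤ mp p (core I) := by
  obtain ⟨N, hN⟩ := exists_pow_le_core hS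
  obtain ⟨k, hk⟩ := exists_max_pow_le p
  refine ⟨k * N, ?_⟩
  rw [pow_mul]
  refine (Ideal.pow_right_mono hk N).trans ?_
  rw [mp, ← Ideal.map_pow]
  exact Ideal.map_mono hN

lemma core_le (hS : Setup I g) : core I ≤ I := by
  obtain ⟨J, hJ⟩ := exists_minimalReduction hS.hI hS.hg hS.hht hS.hinf
  exact (show core I ≤ J from sInf_le hJ).trans hJ.1.1

lemma core_loc_le (hS : Setup I g) (p : I.minimalPrimes) : mp p (core I) ≤ maximalIdeal (Lp p) := by
  rw [mp, Ideal.map_le_iff_le_comap]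
  intro x hx
  rw [Ideal.mem_comap, IsLocalization.AtPrime.to_map_mem_maximal_iff (Lp p) p.1]
  exact p.2.1.2 (core_le hS hx)

lemma qType_of_pow {B : Type u} [CommRing B] [IsLocalRing B] (K : Ideal B) (hK : K ≤ maximalIdeal B)
    (M : ℕ) (hM : maximalIdeal B ^ M ≤ K) : qType B K = Module.length B (socA K) := by
  have hKtop : K ≠ ⊤ := fun h => (maximalIdeal.isMaximal B).ne_top (top_le_iff.mp (h ▸ hK))
  have hnt : Nontrivial (B ⧸ K) := Ideal.Quotient.nontrivial_iff.mpr hKtop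
  have h1 : ∀ rs : List B, (∀ x ∈ rs, x ∈ maximalIdeal B) → RingTheory.Sequence.IsRegular (B ⧸ K) rs →
      rs = [] := by
    intro rs hrs hreg
    cases rs with
    | nil => rfl
    | cons x l =>
      exfalso
      have h2 := ((RS_iff _ _).mp hreg.toIsWeaklyRegular).1
      have h3 : ∀ n, x ^ n ∈ K → (1 : B) ∈ K := by
        intro n
        induction n with
        | zero => intro h; simpa using h
        | succ n ih => intro h; rw [pow_succ'] at h; exact ih (h2 _ h)
      exact hKtop ((Ideal.eq_top_iff_one _).mpr (h3 M (hM (Ideal.pow_mem_pow (hrs x (by simp)) M))))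
  have hnil : RingTheory.Sequence.IsRegular (B ⧸ K) ([] : List B) := RingTheory.Sequence.IsRegular.nil B _
  have hd : qDepth B K = 0 := by
    rw [qDepth, mDepth, sSup_eq_bot.mpr]
    · rfl
    · rintro _ ⟨rs, hrs, hreg, rfl⟩
      rw [h1 rs hrs hreg]; rfl
  rw [qType, ← muE_socle]
  apply le_antisymm
  · refine sInf_le ⟨[], by simp, hnil, by rw [hd]; rfl, by rw [Ideal.ofList_nil, sup_bot_eq]⟩
  · refine le_sInf ?_
    rintro _ ⟨rs, hrs, hreg, _, rfl⟩
    rw [h1 rs hrs hreg, Ideal.ofList_nil, sup_bot_eq]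

lemma length_soc_le {B : Type u} [CommRing B] [IsLocalRing B] (t : ℕ) (K : Ideal B) (Ks : Fin t → Ideal B)
    (hK : ∀ i, K ≤ Ks i) (hK' : ∀ x, (∀ i, x ∈ Ks i) → x ∈ K)
    (hlen : ∀ i, Module.length B (socA (Ks i)) ≤ 1) : Module.length B (socA K) ≤ t := by
  let f : socA K →ₗ[B] (∀ i, socA (Ks i)) := LinearMap.pi fun i =>
    ((Submodule.factor (hK i)).comp (socA K).subtype).codRestrict (socA (Ks i)) (by
      intro x b hb
      rw [← map_smul]
      have : b • x = 0 := Subtype.ext (x.2 b hb)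
      rw [this, map_zero])
  have hf : Function.Injective f := by
    rw [← LinearMap.ker_eq_bot, eq_bot_iff]
    rintro ⟨x, hx⟩ h
    obtain ⟨x, rfl⟩ := K.mkQ_surjective x
    rw [Submodule.mem_bot]
    apply Subtype.ext
    change K.mkQ x = 0
    rw [Submodule.mkQ_apply, Submodule.Quotient.mk_eq_zero]
    refine hK' x fun i => ?_
    have h1 := congrArg Subtype.val (congrFun (LinearMap.mem_ker.mp h) i)
    change (Submodule.factor (hK i)) (K.mkQ x) = 0 at h1
    rw [Submodule.factor_mk, Submodule.mkQ_apply, Submodule.Quotient.mk_eq_zero] at h1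
    exact h1
  refine (Module.length_le_of_injective f hf).trans ?_
  rw [Module.length_pi_of_fintype]
  refine (Finset.sum_le_sum fun i _ => hlen i).trans ?_
  simp

lemma gamma_ge (hS : Setup I g) (p : I.minimalPrimes) (t : ℕ) (Js : Fin t → Ideal A)
    (hJs : ∀ i, IsMinimalReduction (Js i) I) (hcore : core I = ⨅ i, Js i) :
    Module.length (Lp p) (socA (mp p (core I))) ≤ t := by
  classical
  refine length_soc_le t _ (fun i => mp p (Js i)) (fun i => Ideal.map_mono (sInf_le (hJs i))) ?_ ?_
  · intro x hx
    obtain ⟨⟨y, s⟩, rfl⟩ := IsLocalization.mk'_surjective p.1.primeCompl x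
    simp only at hx ⊢
    have h1 : ∀ i, ∃ m ∈ p.1.primeCompl, m * y ∈ Js i := fun i =>
      (IsLocalization.mk'_mem_map_algebraMap_iff p.1.primeCompl _ _ _ _).mp (hx i)
    choose m hm hm' using h1
    refine (IsLocalization.mk'_mem_map_algebraMap_iff p.1.primeCompl _ _ _ _).mpr
      ⟨∏ i, m i, Submonoid.prod_mem _ fun i _ => hm i, ?_⟩
    rw [hcore, Submodule.mem_iInf]
    intro i
    rw [← Finset.prod_erase_mul _ _ (Finset.mem_univ i), mul_assoc]
    exact Ideal.mul_mem_left _ _ (hm' i)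
  · intro i
    obtain ⟨a, ha⟩ := exists_fun_of_isMinimalReduction hS.hI hS.hg hS.hht hS.hinf _ (hJs i)
    have hr := (hJs i).1
    rw [ha] at hr ⊢
    exact (length_soc_loc hS.hht a hr p.1 p.2 (hS.hGor p)).le

end P9

section P10

variable {A : Type u} [CommRing A] [IsLocalRing A] [IsNoetherianRing A]
variable {I : Ideal A} {g : ℕ}

/-- the part of the socle of `(A / core I)_p` lying in `H`. -/
noncomputable def socPart (p : I.minimalPrimes) (H : Ideal A) : Submodule (Lp p) (Lp p ⧸ mp p (core I)) :=
  socA (mp p (core I)) ⊓ Submodule.map (mp p (core I)).mkQ (mp p H)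

lemma length_socA_ne_top {B : Type u} [CommRing B] [IsLocalRing B] [IsNoetherianRing B] (K : Ideal B) :
    Module.length B (socA K) ≠ ⊤ := by
  classical
  obtain ⟨s, hs⟩ := (IsNoetherian.noetherian (⊤ : Submodule B (socA K)))
  have := length_le_of_span (A := B) (M := socA K) (fun a ha x => Subtype.ext (x.2 a ha)) s hs
  intro h
  rw [h] at this
  simp at this

lemma length_sub_le {B : Type u} [CommRing B] {M : Type v} [AddCommGroup M] [Module B M]
    {N N' : Submodule B M} (h : N ≤ N') : Module.length B N ≤ Module.length B N' :=
  Module.length_le_of_injective (Submodule.inclusion h) (Submodule.inclusion_injective h)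

lemma length_sub_lt {B : Type u} [CommRing B] {M : Type v} [AddCommGroup M] [Module B M]
    {N N' : Submodule B M} (h : N < N') (hfin : Module.length B N' ≠ ⊤) :
    Module.length B N + 1 ≤ Module.length B N' := by
  let W : Submodule B N' := N.comap N'.subtype
  have h1 := Module.length_eq_add_of_exact W.subtype W.mkQ W.injective_subtype W.mkQ_surjective
    (LinearMap.exact_subtype_mkQ _)
  have h2 : Module.length B W = Module.length B N :=
    (Submodule.comapSubtypeEquivOfLe h.le).length_eq
  rw [h2] at h1
  rw [h1]
  gcongr
  rw [ENat.one_le_iff_ne_zero, Ne, Module.length_eq_zero_iff, Submodule.Quotient.subsingleton_iff]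
  intro hW
  refine h.not_ge fun x hx => ?_
  have : (⟨x, hx⟩ : N') ∈ W := by rw [hW]; trivial
  exact this

lemma socPart_mono (p : I.minimalPrimes) {H H' : Ideal A} (h : H ≤ H') : socPart p H ≤ socPart p H' :=
  inf_le_inf le_rfl (Submodule.map_mono (Ideal.map_mono h))

lemma socPart_wit (p : I.minimalPrimes) (H : Ideal A) (h : socPart p H ≠ ⊥) :
    ∃ w : A, (mp p (core I)).mkQ (algebraMap A (Lp p) w) ∈ socPart p H ∧
      algebraMap A (Lp p) w ∉ mp p (core I) := by
  obtain ⟨y, hy, hy0⟩ := Submodule.exists_mem_ne_zero_of_ne_bot h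
  obtain ⟨b, rfl⟩ := Submodule.mkQ_surjective _ y
  obtain ⟨⟨w, s⟩, rfl⟩ := IsLocalization.mk'_surjective p.1.primeCompl b
  simp only at hy hy0
  have hspec : algebraMap A (Lp p) w = algebraMap A (Lp p) s * IsLocalization.mk' (Lp p) w s := by
    rw [mul_comm, IsLocalization.mk'_spec]
  refine ⟨w, ?_, ?_⟩
  · rw [hspec, ← smul_eq_mul, map_smul]
    exact Submodule.smul_mem _ _ hy
  · intro hw
    apply hy0
    rw [Submodule.mkQ_apply, Submodule.Quotient.mk_eq_zero]
    rw [hspec] at hw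
    exact (Ideal.unit_mul_mem_iff_mem _ (IsLocalization.map_units (Lp p) s)).mp hw

lemma upper_step (hS : Setup I g) (t : ℕ)
    (ht : ∀ p : I.minimalPrimes, Module.length (Lp p) (socA (mp p (core I))) ≤ t) (n : ℕ) :
    ∃ Js : Fin n → Ideal A, (∀ i, IsMinimalReduction (Js i) I) ∧ ∀ p : I.minimalPrimes,
      Module.length (Lp p) (socPart p (⨅ i, Js i)) + n ≤ t ∨ socPart p (⨅ i, Js i) = ⊥ := by
  classical
  have := (I.finite_minimalPrimes_of_isNoetherianRing A).fintype
  induction n with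
  | zero =>
    refine ⟨fun i => i.elim0, fun i => i.elim0, fun p => Or.inl ?_⟩
    simp only [Nat.cast_zero, add_zero]
    exact (length_sub_le inf_le_left).trans (ht p)
  | succ n ih =>
    obtain ⟨Js, hJs, hlen⟩ := ih
    set H := ⨅ i, Js i with hH
    have hw : ∀ p : I.minimalPrimes, ∃ w : A, socPart p H ≠ ⊥ →
        (mp p (core I)).mkQ (algebraMap A (Lp p) w) ∈ socPart p H ∧
          algebraMap A (Lp p) w ∉ mp p (core I) := by
      intro p
      by_cases h : socPart p H = ⊥
      · exact ⟨0, fun h' => absurd h h'⟩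
      · obtain ⟨w, hw⟩ := socPart_wit p H h
        exact ⟨w, fun _ => hw⟩
    choose w hw using hw
    obtain ⟨a, ha, hav⟩ := avoid hS ((Finset.univ.filter fun p => socPart p H ≠ ⊥).image fun p => (p, w p)) (by
      intro x hx
      simp only [Finset.mem_image, Finset.mem_filter, Finset.mem_univ, true_and] at hx
      obtain ⟨p, hp, rfl⟩ := hx
      by_contra hcon
      push Not at hcon
      exact (hw p hp).2 (core_loc hS p (w p) hcon))
    have hamin := isMinimalReduction_of_fun hS.hI hS.hht a ha
    refine ⟨Fin.cons (Ideal.span (Set.range a)) Js, ?_, fun p => ?_⟩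
    · intro i
      refine Fin.cases ?_ (fun i => ?_) i
      · exact hamin
      · exact hJs i
    have hH' : (⨅ i, (Fin.cons (Ideal.span (Set.range a)) Js : Fin (n + 1) → Ideal A) i) ≤ H := by
      refine le_iInf fun i => ?_
      exact iInf_le_of_le i.succ le_rfl
    have hHa : (⨅ i, (Fin.cons (Ideal.span (Set.range a)) Js : Fin (n + 1) → Ideal A) i) ≤
        Ideal.span (Set.range a) := iInf_le_of_le 0 le_rfl
    generalize (⨅ i, (Fin.cons (Ideal.span (Set.range a)) Js : Fin (n + 1) → Ideal A) i) = H' at *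
    by_cases hp : socPart p H = ⊥
    · right
      rw [eq_bot_iff, ← hp]
      exact socPart_mono p hH'
    left
    have h1 := (hlen p).resolve_right hp
    have h2 : socPart p H' < socPart p H := by
      refine lt_of_le_of_ne (socPart_mono p hH') fun h => ?_
      have h3 := (hw p hp).1
      rw [← h] at h3
      obtain ⟨b, hb, hb'⟩ := h3.2
      have h4 : b - algebraMap A (Lp p) (w p) ∈ mp p (core I) := by
        rw [← Submodule.Quotient.eq]; exact hb'
      have h5 : algebraMap A (Lp p) (w p) ∈ mp p (Ideal.span (Set.range a)) := by
        have h6 := Ideal.sub_mem _ (Ideal.map_mono hHa hb)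
          (Ideal.map_mono (core_le_of_reduction hS a ha) h4)
        simpa using h6
      exact hav (p, w p) (Finset.mem_image.mpr ⟨p, by simpa using hp, rfl⟩) h5
    have hfin : Module.length (Lp p) (socPart p H) ≠ ⊤ :=
      ne_top_of_le_ne_top (length_socA_ne_top _) (length_sub_le inf_le_left)
    have h3 := length_sub_lt h2 hfin
    calc _ = (Module.length (Lp p) (socPart p H') + 1) + n := by push_cast; ring
      _ ≤ _ := by gcongr
      _ ≤ _ := h1

lemma mem_core_loc_of_socPart (hS : Setup I g) (p : I.minimalPrimes) (H : Ideal A) (h : socPart p H = ⊥)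
    (b : Lp p) (hb : b ∈ mp p H) : b ∈ mp p (core I) := by
  classical
  obtain ⟨M, hM⟩ := core_loc_pow hS p
  have hex : ∃ j, ∀ c ∈ maximalIdeal (Lp p) ^ j, c * b ∈ mp p (core I) :=
    ⟨M, fun c hc => Ideal.mul_mem_right _ _ (hM hc)⟩
  have hmin := fun m => Nat.find_min hex (m := m)
  have hspec := Nat.find_spec hex
  generalize Nat.find hex = j at *
  cases j with
  | zero => simpa using hspec 1 (by simp)
  | succ j =>
    exfalso
    apply hmin j (Nat.lt_succ_self j)
    intro c hc
    have h1 : (mp p (core I)).mkQ (c * b) ∈ socPart p H := by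
      refine ⟨?_, ⟨c * b, Ideal.mul_mem_left _ _ hb, rfl⟩⟩
      change _ ∈ socA _
      rw [mk_mem_socA]
      intro x hx
      rw [← mul_assoc]
      apply hspec
      rw [pow_succ']
      exact Ideal.mul_mem_mul hx hc
    rw [h, Submodule.mem_bot, Submodule.mkQ_apply, Submodule.Quotient.mk_eq_zero] at h1
    exact h1

lemma gamma_le (hS : Setup I g) (t : ℕ)
    (ht : ∀ p : I.minimalPrimes, Module.length (Lp p) (socA (mp p (core I))) ≤ t) :
    gamma I ≤ t := by
  obtain ⟨Js, hJs, hlen⟩ := upper_step hS t ht t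
  refine sInf_le ⟨t, rfl, Js, hJs, le_antisymm (le_iInf fun i => sInf_le (hJs i)) ?_⟩
  have hbot : ∀ p : I.minimalPrimes, socPart p (⨅ i, Js i) = ⊥ := by
    intro p
    rcases hlen p with h | h
    · have h1 : Module.length (Lp p) (socPart p (⨅ i, Js i)) = 0 := by
        have h2 : Module.length (Lp p) (socPart p (⨅ i, Js i)) + t ≤ 0 + t := by simpa using h
        have h3 := (ENat.add_le_add_iff_right (ENat.natCast_ne_top t)).mp h2
        exact nonpos_iff_eq_zero.mp h3
      rw [Module.length_eq_zero_iff] at h1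
      exact (Submodule.subsingleton_iff_eq_bot).mp h1
    · exact h
  intro x hx
  refine mem_core hS x fun a ha => ?_
  refine mem_of_locally hS.hCM hS.hI hS.hht a ha _ fun q hq => ?_
  have h1 := mem_core_loc_of_socPart hS ⟨q, hq⟩ _ (hbot ⟨q, hq⟩) _ (Ideal.mem_map_of_mem _ hx)
  have h2 := Ideal.map_mono (core_le_of_reduction hS a ha) h1
  have : q.IsPrime := hq.1.1
  exact (loc_mem_iff (p := q) _ _).mp h2

lemma final {R : Type u} [CommRing R] [IsNoetherianRing R] [IsLocalRing R]
    (hCM : IsCMLocalRing R) (hres : Infinite (ResidueField R))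
    (I : Ideal R) (hequi : fiberDim I = ht I)
    (hGor : ∀ p : Ideal R, ∀ hp : p ∈ I.minimalPrimes,
      letI : p.IsPrime := hp.1.1
      IsGorensteinLocalRing (Localization.AtPrime p)) :
    gamma I = sSup {t : ℕ∞ | ∃ p : Ideal R, ∃ hp : p ∈ I.minimalPrimes,
      letI : p.IsPrime := hp.1.1
      t = qType (Localization.AtPrime p)
        (Ideal.map (algebraMap R (Localization.AtPrime p)) (core I))} := by
  obtain ⟨hI, g, hg, hht⟩ := equi_setup I hequi
  have hS : Setup I g := ⟨hCM, hres, hI, hg, hht, fun p => hGor p.1 p.2⟩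
  have hfin := (I.finite_minimalPrimes_of_isNoetherianRing R).to_subtype
  have hne : Nonempty I.minimalPrimes := (I.nonempty_minimalPrimes (fun h =>
    (maximalIdeal.isMaximal R).ne_top (top_le_iff.mp (h ▸ hI))))
  have hq : ∀ p : I.minimalPrimes, qType (Lp p) (mp p (core I)) =
      Module.length (Lp p) (socA (mp p (core I))) := by
    intro p
    obtain ⟨M, hM⟩ := core_loc_pow hS p
    exact qType_of_pow _ (core_loc_le hS p) M hM
  apply le_antisymm
  · obtain ⟨p0, hp0⟩ := Finite.exists_max fun p : I.minimalPrimes =>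
      Module.length (Lp p) (socA (mp p (core I)))
    obtain ⟨t, ht⟩ := ENat.ne_top_iff_exists.mp (length_socA_ne_top (mp p0 (core I)))
    refine (gamma_le hS t fun p => (hp0 p).trans ht.ge).trans ?_
    refine le_sSup ⟨p0.1, p0.2, ?_⟩
    rw [ht]
    exact (hq p0).symm
  · refine sSup_le ?_
    rintro _ ⟨p, hp, rfl⟩
    refine le_sInf ?_
    rintro _ ⟨t, rfl, Js, hJs, hcore⟩
    exact (hq ⟨p, hp⟩).le.trans (gamma_ge hS ⟨p, hp⟩ t Js hJs hcore)

end P10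



/-- Remark 2.4: for an equimultiple ideal in a local Cohen–Macaulay ring with
infinite residue field which is Gorenstein at the minimal primes of `I`,
`γ(I)` equals the maximal type of `(R / core I)` localized at a minimal prime of `I`. -/
theorem statement3 {R : Type u} [CommRing R] [IsNoetherianRing R] [IsLocalRing R]
    (hCM : IsCMLocalRing R) (hres : Infinite (ResidueField R))
    (I : Ideal R) (hequi : fiberDim I = ht I)
    (hGor : ∀ p : Ideal R, ∀ hp : p ∈ I.minimalPrimes,
      letI : p.IsPrime := hp.1.1
      IsGorensteinLocalRing (Localization.AtPrime p)) :
    gamma I = sSup {t : ℕ∞ | ∃ p : Ideal R, ∃ hp : p ∈ I.minimalPrimes,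
      letI : p.IsPrime := hp.1.1
      t = qType (Localization.AtPrime p)
        (Ideal.map (algebraMap R (Localization.AtPrime p)) (core I))} := by
  exact final hCM hres I hequi hGor

end CPU
end
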